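/- Let $f_1,\dots,f_n$ be real analytic functions on a neighborhood of the origin in $\mathbb{R}^2$, none of them identically zero near the origin, and let $\gamma_1,\dots,\gamma_n$ be real numbers. Let $E\subseteq\mathbb{R}^2$ be either a disk $\{(x,y): x^2+y^2<r_0^2\}$ with $r_0>0$, or, for some $r_0>0$ and $m\ge 1$, a disjoint union of open sets $E_1,\dots,E_m$, where each $E_i$ is a connected region contained in the disk $x^2+y^2<r_0^2$ whose boundary consists of two curves joining the origin to the circle $x^2+y^2=r_0^2$ together with an arc of that circle. Here each such curve is an arc, starting at the origin and ending at its first point on the circle, of one half (of the form $x\ge 0$ or $x\le 0$, respectively $y\ge 0$ or $y\le 0$) of a graph $y=h(|x|^{1/N})$ or $x=h(|y|^{1/N})$, where $N$ is a positive integer and $h$ is real analytic with $h(0)=0$ ($N$ and $h$ may depend on the curve), and all $2m$ curves are pairwise disjoint apart from the origin. Suppose that $g(x,y)=\chi_E(x,y)\prod_{i=1}^n|f_i(x,y)|^{\gamma_i}$ is integrable on a neighborhood of the origin. Then there exist constants $c_1,c_2,c_3>0$, a real number $\epsilon>0$, and $d\in\{0,1\}$ such that for every $0<r<c_3$ one has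 $$c_1 r^{\epsilon}|\ln r|^d\le\int_{\{(x,y):\,x^2+y^2<r^2\}}g(x,y)\,dx\,dy\le c_2 r^{\epsilon}|\ln r|^d .$$ -/

import Mathlib

open MeasureTheory Real Set Filter
open scoped Topology

noncomputable section

/-- The open Euclidean disk `{(x,y) : x² + y² < r²}` (for `r > 0`). -/
def disk2 (r : ℝ) : Set (ℝ × ℝ) := {p : ℝ × ℝ | p.1 ^ 2 + p.2 ^ 2 < r ^ 2}

/-- The circle `{(x,y) : x² + y² = r²}`. -/
def circle2 (r : ℝ) : Set (ℝ × ℝ) := {p : ℝ × ℝ | p.1 ^ 2 + p.2 ^ 2 = r ^ 2}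

/-- The function `g = χ_E · ∏ᵢ |fᵢ|^(γᵢ)`. -/
def stdFun (n : ℕ) (f : Fin n → ℝ × ℝ → ℝ) (γ : Fin n → ℝ) (E : Set (ℝ × ℝ)) :
    ℝ × ℝ → ℝ :=
  E.indicator fun p => ∏ i, |f i p| ^ (γ i)

/-- `C` is an arc of one half of a graph `y = h(|x|^{1/N})` or `x = h(|y|^{1/N})`, with `h` real
analytic and `h 0 = 0`, that starts at the origin and ends where it first meets the circle of
radius `r₀`. The sign `σ` selects the half; `t` is the absolute value of the variable over which
the graph is taken. -/
def IsPuiseuxBdryCurve (r₀ : ℝ) (C : Set (ℝ × ℝ)) : Prop :=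
  ∃ (N : ℕ) (h : ℝ → ℝ) (σ a : ℝ) (c : ℝ → ℝ × ℝ),
    0 < N ∧ (σ = 1 ∨ σ = -1) ∧ 0 < a ∧
    AnalyticOnNhd ℝ h (Icc (0 : ℝ) (a ^ ((N : ℝ)⁻¹))) ∧ h 0 = 0 ∧
    ((∀ t, c t = (σ * t, h (t ^ ((N : ℝ)⁻¹)))) ∨ (∀ t, c t = (h (t ^ ((N : ℝ)⁻¹)), σ * t))) ∧
    (∀ t ∈ Ico (0 : ℝ) a, c t ∈ disk2 r₀) ∧ c a ∈ circle2 r₀ ∧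
    C = c '' Icc (0 : ℝ) a

/-- `D` is a region of the disk of radius `r₀` bounded by the curves `C₁`, `C₂` and an arc `A` of
the circle of radius `r₀`. (Both of the two regions cut out by `C₁` and `C₂` satisfy this.) -/
def IsRegionBoundedBy (r₀ : ℝ) (C₁ C₂ D : Set (ℝ × ℝ)) : Prop :=
  IsOpen D ∧ IsConnected D ∧ D ⊆ disk2 r₀ ∧
    ∃ A : Set (ℝ × ℝ), A ⊆ circle2 r₀ ∧ IsConnected A ∧ frontier D = C₁ ∪ C₂ ∪ A

/-- The admissible sets `E`: a disk centered at the origin, or a disjoint union of `m ≥ 1` open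
regions, each bounded by two curves joining the origin to the circle of radius `r₀` and an arc of
that circle, where all these curves are pairwise disjoint away from the origin. -/
def IsStdDomain (E : Set (ℝ × ℝ)) : Prop :=
  ∃ r₀ : ℝ, 0 < r₀ ∧
    (E = disk2 r₀ ∨
      ∃ (m : ℕ) (Es : Fin m → Set (ℝ × ℝ)) (Cs : Fin m → Fin 2 → Set (ℝ × ℝ)),
        0 < m ∧
        E = ⋃ i, Es i ∧
        (Pairwise fun i j => Disjoint (Es i) (Es j)) ∧
        (∀ i j, IsPuiseuxBdryCurve r₀ (Cs i j)) ∧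
        (∀ i, IsRegionBoundedBy r₀ (Cs i 0) (Cs i 1) (Es i)) ∧
        (Pairwise fun (q q' : Fin m × Fin 2) =>
          Disjoint (Cs q.1 q.2 \ {0}) (Cs q'.1 q'.2 \ {0})))

/-- The standard form of `g = χ_E ∏ |fᵢ|^(γᵢ)`. -/
structure StandardForm (n : ℕ) (f : Fin n → ℝ × ℝ → ℝ) (γ : Fin n → ℝ)
    (E : Set (ℝ × ℝ)) : Prop where
  analytic : ∃ U ∈ 𝓝 (0 : ℝ × ℝ), ∀ i, AnalyticOnNhd ℝ (f i) U
  nontriv : ∀ i, ¬ (∀ᶠ p in 𝓝 (0 : ℝ × ℝ), f i p = 0)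
  integ : ∃ U ∈ 𝓝 (0 : ℝ × ℝ), IntegrableOn (stdFun n f γ E) U
  domain : IsStdDomain E

end

open Asymptotics
open scoped NNReal

/-- The linear map `(x, y) ↦ (x, s y)`. -/
def scaleSnd (s : ℝ) : ℝ × ℝ →L[ℝ] ℝ × ℝ :=
  (ContinuousLinearMap.fst ℝ ℝ ℝ).prod (s • ContinuousLinearMap.snd ℝ ℝ ℝ)

theorem scaleSnd_apply (s : ℝ) (p : ℝ × ℝ) : scaleSnd s p = (p.1, s * p.2) := rfl

theorem norm_scaleSnd_le {s : ℝ} (hs : |s| ≤ 1) : ‖scaleSnd s‖ ≤ 1 := by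
  refine ContinuousLinearMap.opNorm_le_bound _ zero_le_one fun p => ?_
  rw [scaleSnd_apply, one_mul, Prod.norm_def, Prod.norm_def]
  refine max_le_max le_rfl ?_
  simp only [norm_mul, Real.norm_eq_abs]
  exact mul_le_of_le_one_left (abs_nonneg _) hs

theorem continuous_scaleSnd : Continuous scaleSnd := by
  have h : Continuous fun s : ℝ => (ContinuousLinearMap.inl ℝ ℝ ℝ).comp
      (ContinuousLinearMap.fst ℝ ℝ ℝ) + s • (ContinuousLinearMap.inr ℝ ℝ ℝ).comp
      (ContinuousLinearMap.snd ℝ ℝ ℝ) := by fun_prop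
  convert h using 2 with s
  ext <;> simp [scaleSnd]

/-- Averaging an analytic function over the contractions of the second variable. -/
theorem AnalyticAt.integral_scaleSnd {g : ℝ × ℝ → ℝ} (hg : AnalyticAt ℝ g 0) :
    AnalyticAt ℝ (fun p : ℝ × ℝ => ∫ s in (0 : ℝ)..1, g (p.1, s * p.2)) 0 := by
  obtain ⟨p, r, hp⟩ := hg
  let F : (n : ℕ) → ℝ → ContinuousMultilinearMap ℝ (fun _ : Fin n => ℝ × ℝ) ℝ :=
    fun n s => (p n).compContinuousLinearMap fun _ => scaleSnd s
  have hFc : ∀ n, Continuous (F n) := by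
    intro n
    have h1 : Continuous fun s : ℝ =>
        ContinuousMultilinearMap.compContinuousLinearMapContinuousMultilinear ℝ
          (fun _ : Fin n => ℝ × ℝ) (fun _ : Fin n => ℝ × ℝ) ℝ (fun _ => scaleSnd s) :=
      (ContinuousMultilinearMap.cont _).comp (continuous_pi fun _ => continuous_scaleSnd)
    exact h1.clm_apply continuous_const
  have hFn : ∀ n s, |s| ≤ 1 → ‖F n s‖ ≤ ‖p n‖ := by
    intro n s hs
    refine (ContinuousMultilinearMap.norm_compContinuousLinearMap_le _ _).trans ?_
    refine mul_le_of_le_one_right (norm_nonneg _) ?_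
    exact Finset.prod_le_one (fun _ _ => norm_nonneg _) fun _ _ => norm_scaleSnd_le hs
  have habs : ∀ s ∈ uIoc (0 : ℝ) 1, |s| ≤ 1 := by
    intro s hs
    rw [uIoc_of_le zero_le_one] at hs
    rw [abs_of_pos hs.1]; exact hs.2
  let q : FormalMultilinearSeries ℝ (ℝ × ℝ) ℝ := fun n => ∫ s in (0 : ℝ)..1, F n s
  have hq : ∀ n, ‖q n‖ ≤ ‖p n‖ := by
    intro n
    simpa using intervalIntegral.norm_integral_le_of_norm_le_const
      (fun s hs => hFn n s (habs s hs)) (a := (0 : ℝ)) (b := 1)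
  have hrad : p.radius ≤ q.radius := by
    refine ENNReal.le_of_forall_nnreal_lt fun ρ hρ => ?_
    obtain ⟨C, -, hC⟩ := p.norm_mul_pow_le_of_lt_radius hρ
    refine q.le_radius_of_bound C fun n => le_trans ?_ (hC n)
    gcongr
    exact hq n
  refine ⟨q, r, hp.r_le.trans hrad, hp.r_pos, ?_⟩
  intro y hy
  have hmem : ∀ s : ℝ, |s| ≤ 1 → scaleSnd s y ∈ Metric.eball (0 : ℝ × ℝ) r := by
    intro s hs
    rw [Metric.mem_eball, edist_zero_right] at hy ⊢
    refine lt_of_le_of_lt ?_ hy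
    rw [enorm_le_iff_norm_le]
    exact (scaleSnd s).le_of_opNorm_le (norm_scaleSnd_le hs) y |>.trans (by simp)
  have hev : ∀ n, q n (fun _ => y) = ∫ s in (0 : ℝ)..1, p n (fun _ => scaleSnd s y) := by
    intro n
    have := ContinuousLinearMap.intervalIntegral_comp_comm (a := (0 : ℝ)) (b := 1)
      (μ := volume) (ContinuousMultilinearMap.apply ℝ (fun _ : Fin n => ℝ × ℝ) ℝ (fun _ => y))
      ((hFc n).intervalIntegrable 0 1)
    simp only [ContinuousMultilinearMap.apply_apply] at this
    rw [show q n = ∫ s in (0 : ℝ)..1, F n s from rfl, ← this]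
    rfl
  simp only [hev]
  have hsum : Summable fun n => ‖p n‖ * ‖y‖ ^ n := by
    refine p.summable_norm_mul_pow (r := ‖y‖₊) ?_
    rw [Metric.mem_eball, edist_zero_right] at hy
    exact lt_of_lt_of_le hy hp.r_le
  refine intervalIntegral.hasSum_integral_of_dominated_convergence
    (fun n _ => ‖p n‖ * ‖y‖ ^ n) ?_ ?_ ?_ ?_ ?_
  · intro n
    refine Continuous.aestronglyMeasurable ?_
    exact (p n).cont.comp (continuous_pi fun _ => continuous_scaleSnd.clm_apply continuous_const)
  · intro n
    refine ae_of_all _ fun s hs => ?_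
    refine ((p n).le_opNorm _).trans ?_
    simp only [Finset.prod_const, Finset.card_univ, Fintype.card_fin]
    gcongr
    exact (scaleSnd s).le_of_opNorm_le (norm_scaleSnd_le (habs s hs)) y |>.trans (by simp)
  · exact ae_of_all _ fun s _ => hsum
  · exact intervalIntegrable_const
  · refine ae_of_all _ fun s hs => ?_
    have := hp.hasSum (hmem s (habs s hs))
    simpa [scaleSnd_apply] using this

theorem AnalyticAt.mk_right {f : ℝ × ℝ → ℝ} {x y : ℝ} (hf : AnalyticAt ℝ f (x, y)) :
    AnalyticAt ℝ (fun z => f (x, z)) y :=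
  AnalyticAt.fun_comp (f := fun z : ℝ => (x, z)) hf (by fun_prop)

theorem AnalyticAt.mk_left {f : ℝ × ℝ → ℝ} {x y : ℝ} (hf : AnalyticAt ℝ f (x, y)) :
    AnalyticAt ℝ (fun z => f (z, y)) x :=
  AnalyticAt.fun_comp (f := fun z : ℝ => (z, y)) hf (by fun_prop)

theorem AnalyticAt.eventually_deriv_right {f : ℝ × ℝ → ℝ} {p : ℝ × ℝ} (hf : AnalyticAt ℝ f p) :
    ∀ᶠ q in 𝓝 p, HasDerivAt (fun y => f (q.1, y)) (fderiv ℝ f q (0, 1)) q.2 := by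
  filter_upwards [hf.eventually_analyticAt] with q hq
  have h1 : HasFDerivAt f (fderiv ℝ f q) (q.1, q.2) := hq.differentiableAt.hasFDerivAt
  have h2 : HasDerivAt (fun y : ℝ => (q.1, y)) ((0 : ℝ), (1 : ℝ)) q.2 :=
    (hasDerivAt_const _ _).prodMk (hasDerivAt_id _)
  exact h1.comp_hasDerivAt q.2 h2

/-- Hadamard's lemma: an analytic function minus its restriction to `y = 0` is analytically
divisible by `y`. -/
theorem AnalyticAt.exists_eq_add_mul_snd {f : ℝ × ℝ → ℝ} (hf : AnalyticAt ℝ f 0) :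
    ∃ u : ℝ × ℝ → ℝ, AnalyticAt ℝ u 0 ∧ ∀ᶠ p in 𝓝 (0 : ℝ × ℝ), f p = f (p.1, 0) + p.2 * u p := by
  have hD : AnalyticAt ℝ (fun q => fderiv ℝ f q (0, 1)) 0 :=
    ((ContinuousLinearMap.apply ℝ ℝ ((0, 1) : ℝ × ℝ)).analyticAt _).fun_comp hf.fderiv
  refine ⟨_, hD.integral_scaleSnd, ?_⟩
  obtain ⟨ε, hε, hball⟩ := Metric.eventually_nhds_iff_ball.1
    (hf.eventually_deriv_right.and hD.eventually_analyticAt)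
  filter_upwards [Metric.ball_mem_nhds _ hε] with p hp
  have hmem : ∀ s ∈ uIcc (0 : ℝ) 1, ((p.1, s * p.2) : ℝ × ℝ) ∈ Metric.ball (0 : ℝ × ℝ) ε := by
    intro s hs
    rw [uIcc_of_le zero_le_one] at hs
    rw [mem_ball_zero_iff] at hp ⊢
    refine lt_of_le_of_lt ?_ hp
    have := (scaleSnd s).le_of_opNorm_le (norm_scaleSnd_le (abs_le.2 ⟨by linarith [hs.1], hs.2⟩)) p
    simpa [scaleSnd_apply] using this
  have key : ∫ s in (0 : ℝ)..1, p.2 * fderiv ℝ f (p.1, s * p.2) (0, 1) =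
      f (p.1, 1 * p.2) - f (p.1, 0 * p.2) := by
    refine intervalIntegral.integral_eq_sub_of_hasDerivAt (f := fun s => f (p.1, s * p.2)) ?_ ?_
    · intro s hs
      have h1 := (hball _ (hmem s hs)).1
      have h2 : HasDerivAt (fun s : ℝ => s * p.2) p.2 s := by
        simpa using (hasDerivAt_id s).mul_const p.2
      have := HasDerivAt.comp s h1 h2
      rw [mul_comm]
      exact this
    · refine ContinuousOn.intervalIntegrable fun s hs => ContinuousAt.continuousWithinAt ?_
      have h1 := (hball _ (hmem s hs)).2.continuousAt
      refine continuousAt_const.mul ?_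
      exact ContinuousAt.comp (f := fun s : ℝ => (p.1, s * p.2)) h1 (by fun_prop)
  rw [intervalIntegral.integral_const_mul] at key
  simp only [one_mul, zero_mul] at key
  linarith

/-- Taylor expansion in the second variable with analytic coefficients and remainder. -/
theorem AnalyticAt.exists_eq_sum_add_pow_snd (d : ℕ) {f : ℝ × ℝ → ℝ} (hf : AnalyticAt ℝ f 0) :
    ∃ (c : ℕ → ℝ → ℝ) (u : ℝ × ℝ → ℝ), (∀ k, AnalyticAt ℝ (c k) 0) ∧ AnalyticAt ℝ u 0 ∧
      ∀ᶠ p in 𝓝 (0 : ℝ × ℝ), f p = ∑ k ∈ Finset.range d, c k p.1 * p.2 ^ k + p.2 ^ d * u p := by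
  induction d generalizing f with
  | zero => exact ⟨fun _ _ => 0, f, fun _ => analyticAt_const, hf, by simp⟩
  | succ d ih =>
    obtain ⟨u, hu, hfu⟩ := hf.exists_eq_add_mul_snd
    obtain ⟨c, v, hc, hv, hcv⟩ := ih hu
    refine ⟨fun k => Nat.casesOn k (fun x => f (x, 0)) c, v, ?_, hv, ?_⟩
    · rintro (_ | k)
      · exact AnalyticAt.mk_left (y := 0) hf
      · exact hc k
    · filter_upwards [hfu, hcv] with p h1 h2
      have h3 : p.2 * ∑ k ∈ Finset.range d, c k p.1 * p.2 ^ k =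
          ∑ k ∈ Finset.range d, c k p.1 * p.2 ^ (k + 1) := by
        rw [Finset.mul_sum]
        exact Finset.sum_congr rfl fun k _ => by ring
      rw [h1, h2, Finset.sum_range_succ', mul_add, h3]
      change _ = ∑ k ∈ Finset.range d, c k p.1 * p.2 ^ (k + 1) + f (p.1, 0) * p.2 ^ 0 + _
      ring

/-- Taylor coefficients are determined by an expansion. -/
theorem iteratedDeriv_sum_add_pow_mul {d k : ℕ} (hk : k < d) {f v : ℝ → ℝ} (a : ℕ → ℝ)
    (hv : AnalyticAt ℝ v 0)
    (h : ∀ᶠ y in 𝓝 (0 : ℝ), f y = ∑ j ∈ Finset.range d, a j * y ^ j + y ^ d * v y) :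
    iteratedDeriv k f 0 = k.factorial * a k := by
  rw [Filter.EventuallyEq.iteratedDeriv_eq k h]
  have hw : AnalyticAt ℝ (fun y => y ^ d * v y) 0 := by fun_prop
  have h1 : iteratedDeriv k (fun y => y ^ d * v y) 0 = 0 := by
    refine (natCast_le_analyticOrderAt_iff_iteratedDeriv_eq_zero hw).1 ?_ k hk
    exact (natCast_le_analyticOrderAt hw).2 ⟨v, hv, by simp⟩
  have hp : ∀ j, ContDiffAt ℝ k (fun y : ℝ => a j * y ^ j) 0 := fun j => by fun_prop
  rw [iteratedDeriv_fun_add (by fun_prop) hw.contDiffAt, h1, add_zero,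
    iteratedDeriv_fun_sum fun j _ => hp j]
  rw [Finset.sum_eq_single k]
  · rw [iteratedDeriv_const_mul_field, iteratedDeriv_pow]
    simp [Nat.descFactorial_self, mul_comm]
  · intro j _ hj
    rw [iteratedDeriv_const_mul_field, iteratedDeriv_pow]
    rcases lt_or_gt_of_ne hj with h | h
    · simp [Nat.descFactorial_of_lt h]
    · simp [Nat.sub_ne_zero_of_lt h]
  · intro h; simp at h; omega

theorem AnalyticAt.iteratedDeriv_right (k : ℕ) {f : ℝ × ℝ → ℝ} {p : ℝ × ℝ}
    (hf : AnalyticAt ℝ f p) :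
    AnalyticAt ℝ (fun q : ℝ × ℝ => iteratedDeriv k (fun y => f (q.1, y)) q.2) p := by
  induction k with
  | zero => simpa using hf
  | succ k ih =>
    have h1 : AnalyticAt ℝ (fun q => fderiv ℝ
        (fun q : ℝ × ℝ => iteratedDeriv k (fun y => f (q.1, y)) q.2) q (0, 1)) p :=
      ((ContinuousLinearMap.apply ℝ ℝ ((0, 1) : ℝ × ℝ)).analyticAt _).fun_comp ih.fderiv
    refine h1.congr ?_
    filter_upwards [ih.eventually_deriv_right] with q hq
    rw [iteratedDeriv_succ]
    exact hq.deriv.symm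

theorem AnalyticAt.eventually_coeff_eq {d k : ℕ} (hk : k < d) {f u : ℝ × ℝ → ℝ}
    {c : ℕ → ℝ → ℝ} (hu : AnalyticAt ℝ u 0)
    (h : ∀ᶠ p in 𝓝 (0 : ℝ × ℝ), f p = ∑ k ∈ Finset.range d, c k p.1 * p.2 ^ k + p.2 ^ d * u p) :
    ∀ᶠ x in 𝓝 (0 : ℝ), iteratedDeriv k (fun y => f (x, y)) 0 = k.factorial * c k x := by
  have h1 : ∀ᶠ x in 𝓝 (0 : ℝ), ∀ᶠ y in 𝓝 (0 : ℝ),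
      f (x, y) = ∑ k ∈ Finset.range d, c k x * y ^ k + y ^ d * u (x, y) := by
    have : (0 : ℝ × ℝ) = (0, 0) := rfl
    rw [this, nhds_prod_eq] at h
    exact h.curry
  have h2 : ∀ᶠ x in 𝓝 (0 : ℝ), AnalyticAt ℝ u (x, 0) := by
    have : Tendsto (fun x : ℝ => (x, (0 : ℝ))) (𝓝 0) (𝓝 (0 : ℝ × ℝ)) :=
      Continuous.tendsto' (by fun_prop) _ _ rfl
    exact this.eventually hu.eventually_analyticAt
  filter_upwards [h1, h2] with x h1 h2
  exact iteratedDeriv_sum_add_pow_mul hk (fun k => c k x) h2.mk_right h1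

/-- A nonzero analytic germ has some `y`-derivative that does not vanish identically on `y = 0`. -/
theorem AnalyticAt.exists_iteratedDeriv_right_ne {f : ℝ × ℝ → ℝ} (hf : AnalyticAt ℝ f 0)
    (h0 : ¬ ∀ᶠ p in 𝓝 (0 : ℝ × ℝ), f p = 0) :
    ∃ k, ¬ ∀ᶠ x in 𝓝 (0 : ℝ), iteratedDeriv k (fun y => f (x, y)) 0 = 0 := by
  by_contra! hall
  apply h0
  obtain ⟨r, hr, hball⟩ := Metric.eventually_nhds_iff_ball.1 hf.eventually_analyticAt
  have hsub : ∀ x ∈ Metric.ball (0 : ℝ) r, ∀ y ∈ Metric.ball (0 : ℝ) r,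
      AnalyticAt ℝ f (x, y) := by
    intro x hx y hy
    refine hball _ ?_
    rw [show (0 : ℝ × ℝ) = (0, 0) from rfl, ← ball_prod_same]
    exact ⟨hx, hy⟩
  have hpre : IsPreconnected (Metric.ball (0 : ℝ) r) := (convex_ball _ _).isPreconnected
  have h0r : (0 : ℝ) ∈ Metric.ball (0 : ℝ) r := Metric.mem_ball_self hr
  have hder : ∀ k, EqOn (fun x => iteratedDeriv k (fun y => f (x, y)) 0) 0
      (Metric.ball (0 : ℝ) r) := by
    intro k
    refine AnalyticOnNhd.eqOn_zero_of_preconnected_of_eventuallyEq_zero (𝕜 := ℝ) ?_ hpre h0r (hall k)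
    intro x hx
    exact ((hsub x hx 0 h0r).iteratedDeriv_right k).mk_left
  filter_upwards [Metric.ball_mem_nhds _ hr] with p hp
  rw [show (0 : ℝ × ℝ) = (0, 0) from rfl, ← ball_prod_same] at hp
  have han : AnalyticOnNhd ℝ (fun y => f (p.1, y)) (Metric.ball (0 : ℝ) r) :=
    fun y hy => (hsub p.1 hp.1 y hy).mk_right
  have htop : analyticOrderAt (fun y => f (p.1, y)) 0 = ⊤ := by
    refine ENat.eq_top_iff_forall_ge.2 fun n => ?_
    exact (natCast_le_analyticOrderAt_iff_iteratedDeriv_eq_zero (han 0 h0r)).2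
      fun i _ => hder i hp.1
  exact han.eqOn_zero_of_preconnected_of_eventuallyEq_zero hpre h0r
    (analyticOrderAt_eq_top.1 htop) hp.2

/-- A nonzero analytic germ is `x ^ k` times one which does not vanish on the line `x = 0`. -/
theorem AnalyticAt.exists_eq_pow_fst_mul {f : ℝ × ℝ → ℝ} (hf : AnalyticAt ℝ f 0)
    (h0 : ¬ ∀ᶠ p in 𝓝 (0 : ℝ × ℝ), f p = 0) :
    ∃ (k d : ℕ) (g : ℝ × ℝ → ℝ), AnalyticAt ℝ g 0 ∧
      analyticOrderAt (fun y => g (0, y)) 0 = d ∧ ∀ᶠ p in 𝓝 (0 : ℝ × ℝ), f p = p.1 ^ k * g p := by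
  have hsw : Tendsto (Prod.swap : ℝ × ℝ → ℝ × ℝ) (𝓝 0) (𝓝 0) :=
    Continuous.tendsto' continuous_swap _ _ rfl
  have hsa : ∀ p : ℝ × ℝ, AnalyticAt ℝ (Prod.swap : ℝ × ℝ → ℝ × ℝ) p := fun p =>
    analyticAt_snd.prod analyticAt_fst
  have hF : AnalyticAt ℝ (fun p : ℝ × ℝ => f p.swap) 0 :=
    AnalyticAt.fun_comp (f := Prod.swap) hf (hsa 0)
  have hF0 : ¬ ∀ᶠ p in 𝓝 (0 : ℝ × ℝ), f p.swap = 0 := fun h => h0 (by simpa using hsw.eventually h)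
  classical
  have hex := hF.exists_iteratedDeriv_right_ne hF0
  set k := Nat.find hex with hkdef
  have hk := Nat.find_spec hex
  have hlt : ∀ i < k, ∀ᶠ x in 𝓝 (0 : ℝ), iteratedDeriv i (fun y => f (y, x)) 0 = 0 :=
    fun i hi => not_not.1 (Nat.find_min hex hi)
  obtain ⟨c, u, hc, hu, hcu⟩ := hF.exists_eq_sum_add_pow_snd k
  obtain ⟨v, hv, huv⟩ := hu.exists_eq_add_mul_snd
  have hcu' : ∀ᶠ p in 𝓝 (0 : ℝ × ℝ), f p.swap = ∑ j ∈ Finset.range (k + 1),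
      (if j = k then fun x => u (x, 0) else c j) p.1 * p.2 ^ j + p.2 ^ (k + 1) * v p := by
    filter_upwards [hcu, huv] with p h1 h2
    rw [h1, h2, Finset.sum_range_succ]
    have : ∑ j ∈ Finset.range k, (if j = k then fun x => u (x, 0) else c j) p.1 * p.2 ^ j =
        ∑ j ∈ Finset.range k, c j p.1 * p.2 ^ j :=
      Finset.sum_congr rfl fun j hj => by rw [if_neg (Finset.mem_range.1 hj).ne]
    rw [this]
    simp only [if_true]
    ring
  have hck : ∀ i < k, ∀ᶠ x in 𝓝 (0 : ℝ), c i x = 0 := by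
    intro i hi
    filter_upwards [hlt i hi, AnalyticAt.eventually_coeff_eq hi hu hcu] with x h1 h2
    simp only [Prod.swap_prod_mk] at h2
    rw [h1] at h2
    simpa [Nat.factorial_ne_zero] using h2.symm
  have huk : ¬ ∀ᶠ x in 𝓝 (0 : ℝ), u (x, 0) = 0 := by
    intro h
    apply hk
    filter_upwards [h, AnalyticAt.eventually_coeff_eq (Nat.lt_succ_self k) hv hcu'] with x h1 h2
    rw [h2, if_pos rfl, h1, mul_zero]
  have hane : AnalyticAt ℝ (fun y => u (y, 0)) 0 := AnalyticAt.mk_left (y := 0) hu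
  refine ⟨k, analyticOrderNatAt (fun y => u (y, 0)) 0, fun p => u p.swap,
    AnalyticAt.fun_comp (f := Prod.swap) hu (hsa 0), ?_, ?_⟩
  · exact (Nat.cast_analyticOrderNatAt fun h => huk (analyticOrderAt_eq_top.1 h)).symm
  · have hall : ∀ᶠ x in 𝓝 (0 : ℝ), ∀ i ∈ Finset.range k, c i x = 0 :=
      (Finset.eventually_all _).2 fun i hi => hck i (Finset.mem_range.1 hi)
    have hsnd : Tendsto (fun p : ℝ × ℝ => p.swap.1) (𝓝 0) (𝓝 0) :=
      Continuous.tendsto' (by fun_prop) _ _ rfl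
    filter_upwards [hsw.eventually hcu, hsnd.eventually hall] with p h1 h2
    rw [Prod.swap_swap] at h1
    rw [h1, Finset.sum_eq_zero fun i hi => by rw [h2 i hi, zero_mul], zero_add]
    rfl

theorem tendsto_pow_nhdsGT_zero {N : ℕ} (hN : 0 < N) :
    Tendsto (fun t : ℝ => t ^ N) (𝓝[>] 0) (𝓝[>] 0) := by
  refine tendsto_nhdsWithin_iff.2 ⟨?_, ?_⟩
  · exact (Continuous.tendsto' (by fun_prop) _ _ (by simp [hN.ne'])).mono_left nhdsWithin_le_nhds
  · filter_upwards [self_mem_nhdsWithin] with t ht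
    exact pow_pos (mem_Ioi.1 ht) N

theorem tendsto_root_nhdsGT_zero {N : ℕ} (hN : 0 < N) :
    Tendsto (fun x : ℝ => x ^ ((N : ℝ)⁻¹)) (𝓝[>] 0) (𝓝[>] 0) := by
  have hpos : (0 : ℝ) < (N : ℝ)⁻¹ := by positivity
  refine tendsto_nhdsWithin_iff.2 ⟨?_, ?_⟩
  · have : ContinuousAt (fun x : ℝ => x ^ ((N : ℝ)⁻¹)) 0 :=
      Real.continuousAt_rpow_const _ _ (Or.inr hpos.le)
    have h := this.tendsto
    simp only [Real.zero_rpow hpos.ne'] at h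
    exact h.mono_left nhdsWithin_le_nhds
  · filter_upwards [self_mem_nhdsWithin] with t ht
    exact rpow_pos_of_pos ht _

theorem eventually_pos_nhdsGT : ∀ᶠ x in 𝓝[>] (0 : ℝ), 0 < x := self_mem_nhdsWithin

theorem eventually_lt_nhdsGT {δ : ℝ} (hδ : 0 < δ) : ∀ᶠ x in 𝓝[>] (0 : ℝ), x < δ :=
  mem_of_superset (Ioo_mem_nhdsGT hδ) fun _ hx => hx.2

/-- Germs at `0+` of the form `x ↦ A (x ^ (1 / N))` with `A` real analytic at `0`. -/
def IsPuiseux (a : ℝ → ℝ) : Prop :=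
  ∃ N : ℕ, 0 < N ∧ ∃ A : ℝ → ℝ, AnalyticAt ℝ A 0 ∧ ∀ᶠ t in 𝓝[>] (0 : ℝ), a (t ^ N) = A t

namespace IsPuiseux

variable {a b : ℝ → ℝ}

theorem exists_root (ha : IsPuiseux a) : ∃ N : ℕ, 0 < N ∧ ∃ A : ℝ → ℝ, AnalyticAt ℝ A 0 ∧
    ∀ᶠ x in 𝓝[>] (0 : ℝ), a x = A (x ^ ((N : ℝ)⁻¹)) := by
  obtain ⟨N, hN, A, hA, h⟩ := ha
  refine ⟨N, hN, A, hA, ?_⟩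
  filter_upwards [(tendsto_root_nhdsGT_zero hN).eventually h, eventually_pos_nhdsGT] with x hx h0
  rwa [Real.rpow_inv_natCast_pow h0.le hN.ne'] at hx

theorem of_root {N : ℕ} (hN : 0 < N) {A : ℝ → ℝ} (hA : AnalyticAt ℝ A 0)
    (h : ∀ᶠ x in 𝓝[>] (0 : ℝ), a x = A (x ^ ((N : ℝ)⁻¹))) : IsPuiseux a := by
  refine ⟨N, hN, A, hA, ?_⟩
  filter_upwards [(tendsto_pow_nhdsGT_zero hN).eventually h, eventually_pos_nhdsGT] with x hx h0
  rwa [Real.pow_rpow_inv_natCast h0.le hN.ne'] at hx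

theorem congr (ha : IsPuiseux a) (h : b =ᶠ[𝓝[>] 0] a) : IsPuiseux b := by
  obtain ⟨N, hN, A, hA, h'⟩ := ha
  refine ⟨N, hN, A, hA, ?_⟩
  filter_upwards [(tendsto_pow_nhdsGT_zero hN).eventually h, h'] with t h1 h2
  rw [h1, h2]

theorem common (ha : IsPuiseux a) (hb : IsPuiseux b) : ∃ N : ℕ, 0 < N ∧ ∃ A B : ℝ → ℝ,
    AnalyticAt ℝ A 0 ∧ AnalyticAt ℝ B 0 ∧
    ∀ᶠ t in 𝓝[>] (0 : ℝ), a (t ^ N) = A t ∧ b (t ^ N) = B t := by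
  obtain ⟨N, hN, A, hA, h1⟩ := ha
  obtain ⟨M, hM, B, hB, h2⟩ := hb
  refine ⟨N * M, Nat.mul_pos hN hM, fun t => A (t ^ M), fun t => B (t ^ N), ?_, ?_, ?_⟩
  · exact AnalyticAt.fun_comp (f := fun t : ℝ => t ^ M) (by simpa [hM.ne'] using hA)
      (by fun_prop)
  · exact AnalyticAt.fun_comp (f := fun t : ℝ => t ^ N) (by simpa [hN.ne'] using hB)
      (by fun_prop)
  · filter_upwards [(tendsto_pow_nhdsGT_zero hM).eventually h1,
      (tendsto_pow_nhdsGT_zero hN).eventually h2] with t h1 h2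
    rw [← pow_mul] at h1 h2
    exact ⟨by rw [mul_comm N M, h1], h2⟩

theorem add (ha : IsPuiseux a) (hb : IsPuiseux b) : IsPuiseux fun x => a x + b x := by
  obtain ⟨N, hN, A, B, hA, hB, h⟩ := common ha hb
  exact ⟨N, hN, fun t => A t + B t, by fun_prop, h.mono fun t ht => by simp only [ht.1, ht.2]⟩

theorem mul (ha : IsPuiseux a) (hb : IsPuiseux b) : IsPuiseux fun x => a x * b x := by
  obtain ⟨N, hN, A, B, hA, hB, h⟩ := common ha hb
  exact ⟨N, hN, fun t => A t * B t, by fun_prop, h.mono fun t ht => by simp only [ht.1, ht.2]⟩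

theorem const (c : ℝ) : IsPuiseux fun _ => c :=
  ⟨1, one_pos, fun _ => c, analyticAt_const, by simp⟩

theorem id : IsPuiseux fun x => x :=
  ⟨1, one_pos, fun x => x, analyticAt_id, by simp⟩

theorem neg (ha : IsPuiseux a) : IsPuiseux fun x => -a x :=
  ((const (-1)).mul ha).congr (by simp [EventuallyEq.refl])

theorem sub (ha : IsPuiseux a) (hb : IsPuiseux b) : IsPuiseux fun x => a x - b x := by
  simpa only [sub_eq_add_neg] using ha.add hb.neg

theorem of_analyticAt (ha : AnalyticAt ℝ a 0) : IsPuiseux a :=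
  ⟨1, one_pos, a, ha, by simp⟩

theorem comp_root (ha : IsPuiseux a) {q : ℕ} (hq : 0 < q) :
    IsPuiseux fun x => a (x ^ ((q : ℝ)⁻¹)) := by
  obtain ⟨N, hN, A, hA, h⟩ := ha
  refine ⟨N * q, Nat.mul_pos hN hq, A, hA, ?_⟩
  filter_upwards [h, eventually_pos_nhdsGT] with t ht h0
  rw [pow_mul, Real.pow_rpow_inv_natCast (by positivity) hq.ne', ht]

theorem root_pow {q : ℕ} (hq : 0 < q) (p : ℕ) :
    IsPuiseux fun x => (x ^ ((q : ℝ)⁻¹)) ^ p :=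
  comp_root (a := fun x => x ^ p) (of_analyticAt (by fun_prop)) hq

theorem exists_tendsto (ha : IsPuiseux a) : ∃ l, Tendsto a (𝓝[>] 0) (𝓝 l) := by
  obtain ⟨N, hN, A, hA, h⟩ := ha.exists_root
  refine ⟨A 0, ?_⟩
  have h1 := hA.continuousAt.tendsto.mono_left (nhdsWithin_le_nhds (s := Ioi 0))
  refine (h1.comp (tendsto_root_nhdsGT_zero hN)).congr' ?_
  filter_upwards [h] with x hx using hx.symm

/-- A Puiseux germ is zero or asymptotic to a nonzero multiple of a power. -/
theorem eventually_zero_or (ha : IsPuiseux a) : (∀ᶠ x in 𝓝[>] (0 : ℝ), a x = 0) ∨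
    ∃ (q c : ℝ), c ≠ 0 ∧ Tendsto (fun x => a x / x ^ q) (𝓝[>] 0) (𝓝 c) := by
  obtain ⟨N, hN, A, hA, h⟩ := ha.exists_root
  have hroot := tendsto_root_nhdsGT_zero hN
  by_cases htop : analyticOrderAt A 0 = ⊤
  · left
    have h0 := (analyticOrderAt_eq_top.1 htop).filter_mono (nhdsWithin_le_nhds (s := Ioi 0))
    filter_upwards [h, hroot.eventually h0] with x h1 h2
    rw [h1, h2]
  · right
    obtain ⟨m, hm⟩ := ENat.ne_top_iff_exists.1 htop
    obtain ⟨g, hg, hg0, hAg⟩ := (hA.analyticOrderAt_eq_natCast).1 hm.symm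
    refine ⟨(N : ℝ)⁻¹ * m, g 0, hg0, ?_⟩
    have h1 := hg.continuousAt.tendsto.mono_left (nhdsWithin_le_nhds (s := Ioi 0))
    refine (h1.comp hroot).congr' ?_
    have hAg' := hAg.filter_mono (nhdsWithin_le_nhds (s := Ioi 0))
    filter_upwards [h, hroot.eventually hAg', eventually_pos_nhdsGT] with x h1 h2 h0
    rw [h1, h2, sub_zero, Real.rpow_mul h0.le, Real.rpow_natCast, smul_eq_mul, Function.comp]
    have : 0 < x ^ ((N : ℝ)⁻¹) := rpow_pos_of_pos h0 _
    field_simp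

theorem trichotomy (ha : IsPuiseux a) : (∀ᶠ x in 𝓝[>] (0 : ℝ), a x = 0) ∨
    (∀ᶠ x in 𝓝[>] (0 : ℝ), 0 < a x) ∨ (∀ᶠ x in 𝓝[>] (0 : ℝ), a x < 0) := by
  rcases ha.eventually_zero_or with h | ⟨q, c, hc, h⟩
  · exact Or.inl h
  · right
    rcases lt_or_gt_of_ne hc with hc | hc
    · right
      filter_upwards [h.eventually_lt_const hc, eventually_pos_nhdsGT] with x h1 h0
      by_contra! h2
      exact absurd (div_nonneg h2 (rpow_nonneg h0.le q)) (not_le.2 h1)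
    · left
      filter_upwards [h.eventually_const_lt hc, eventually_pos_nhdsGT] with x h1 h0
      by_contra! h2
      exact absurd (div_nonpos_of_nonpos_of_nonneg h2 (rpow_nonneg h0.le q)) (not_le.2 h1)

theorem lt_or_le (ha : IsPuiseux a) (hb : IsPuiseux b) :
    (∀ᶠ x in 𝓝[>] (0 : ℝ), a x < b x) ∨ (∀ᶠ x in 𝓝[>] (0 : ℝ), b x ≤ a x) := by
  rcases (hb.sub ha).trichotomy with h | h | h
  · exact Or.inr (h.mono fun x hx => by linarith)
  · exact Or.inl (h.mono fun x hx => by linarith)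
  · exact Or.inr (h.mono fun x hx => by linarith)

theorem isTheta_rpow (ha : IsPuiseux a) (hpos : ∀ᶠ x in 𝓝[>] (0 : ℝ), 0 < a x) :
    ∃ q : ℝ, a =Θ[𝓝[>] 0] fun x => x ^ q := by
  rcases ha.eventually_zero_or with h | ⟨q, c, hc, h⟩
  · obtain ⟨x, h1, h2⟩ := (h.and hpos).exists
    exact absurd h1 h2.ne'
  · exact ⟨q, (isTheta_of_div_tendsto_nhds_ne_zero h hc).symm⟩

theorem eventually_continuousAt (ha : IsPuiseux a) :
    ∀ᶠ x in 𝓝[>] (0 : ℝ), ContinuousAt a x := by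
  obtain ⟨N, hN, A, hA, h⟩ := ha.exists_root
  have h1 : ∀ᶠ x in 𝓝[>] (0 : ℝ), a =ᶠ[𝓝 x] fun x => A (x ^ ((N : ℝ)⁻¹)) := by
    obtain ⟨δ, hδ, hsub⟩ := mem_nhdsGT_iff_exists_Ioo_subset.1 h
    filter_upwards [Ioo_mem_nhdsGT hδ] with x hx
    filter_upwards [Ioo_mem_nhds hx.1 hx.2] with y hy using hsub hy
  have h2 := (tendsto_root_nhdsGT_zero hN).eventually
    (hA.eventually_analyticAt.filter_mono (nhdsWithin_le_nhds (s := Ioi 0)))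
  filter_upwards [h1, h2, eventually_pos_nhdsGT] with x h1 h2 h0
  refine ContinuousAt.congr ?_ h1.symm
  exact ContinuousAt.comp (f := fun x : ℝ => x ^ ((N : ℝ)⁻¹)) h2.continuousAt
    (Real.continuousAt_rpow_const _ _ (Or.inl h0.ne'))

end IsPuiseux

theorem IsTheta.of_bounds {α : Type*} {l : Filter α} {f g : α → ℝ} {c C : ℝ} (hc : 0 < c)
    (h : ∀ᶠ p in l, c * |g p| ≤ |f p| ∧ |f p| ≤ C * |g p|) : f =Θ[l] g := by
  refine ⟨IsBigO.of_bound C (h.mono fun p hp => hp.2), IsBigO.of_bound c⁻¹ (h.mono fun p hp => ?_)⟩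
  rw [Real.norm_eq_abs, Real.norm_eq_abs, le_inv_mul_iff₀ hc]
  exact hp.1

theorem IsTheta.congr_fun {α : Type*} {l : Filter α} {f f' g g' : α → ℝ} (h : f =Θ[l] g)
    (hf : ∀ p, f' p = f p) (hg : ∀ p, g' p = g p) : f' =Θ[l] g' := by
  obtain rfl := funext hf
  obtain rfl := funext hg
  exact h

theorem IsTheta.comp_map {α β : Type*} {l : Filter α} {l' : Filter β} {f g : α → ℝ}
    (h : f =Θ[l] g) {k : β → α} (hk : Tendsto k l' l) :
    (fun x => f (k x)) =Θ[l'] fun x => g (k x) :=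
  ⟨h.1.comp_tendsto hk, h.2.comp_tendsto hk⟩

theorem Filter.Tendsto.isTheta_one {α : Type*} {l : Filter α} {f : α → ℝ} {c : ℝ}
    (h : Tendsto f l (𝓝 c)) (hc : c ≠ 0) : f =Θ[l] fun _ => (1 : ℝ) :=
  (isTheta_of_div_tendsto_nhds_ne_zero (by simpa using h) hc).symm

theorem IsTheta.prod_principal_of_isCompact {α : Type*} {l : Filter α} {f g : α × ℝ → ℝ}
    {K : Set ℝ} (hK : IsCompact K) (h : ∀ z ∈ K, f =Θ[l ×ˢ 𝓝 z] g) : f =Θ[l ×ˢ 𝓟 K] g := by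
  refine hK.induction_on (p := fun s => f =Θ[l ×ˢ 𝓟 s] g) ?_ ?_ ?_ ?_
  · simp
  · intro s t hst ht
    exact ht.mono (Filter.prod_mono le_rfl (principal_mono.2 hst))
  · intro s t hs ht
    rw [← sup_principal, prod_sup]
    exact hs.sup ht
  · intro z hz
    obtain ⟨⟨c, hc⟩, ⟨c', hc'⟩⟩ := (h z hz).imp IsBigO.bound IsBigO.bound
    obtain ⟨pa, hpa, pb, hpb, hab⟩ := eventually_prod_iff.1 (hc.and hc')
    refine ⟨{y | pb y}, mem_nhdsWithin_of_mem_nhds hpb, ?_⟩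
    have hev : ∀ᶠ q in l ×ˢ 𝓟 {y | pb y}, ‖f q‖ ≤ c * ‖g q‖ ∧ ‖g q‖ ≤ c' * ‖f q‖ := by
      refine eventually_prod_iff.2 ⟨pa, hpa, pb, eventually_principal.2 fun _ h => h, ?_⟩
      exact fun hx _ hy => hab hx hy
    exact ⟨IsBigO.of_bound c (hev.mono fun _ h => h.1),
      IsBigO.of_bound c' (hev.mono fun _ h => h.2)⟩

/-- The elementary factor `|y - α(x)| + b(x)` attached to a pair `(α, b)`. -/
def rootFactor (ρ : (ℝ → ℝ) × (ℝ → ℝ)) (p : ℝ × ℝ) : ℝ := |p.2 - ρ.1 p.1| + ρ.2 p.1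

/-- The product of the elementary factors of a multiset of pairs. -/
def rootProd (M : Multiset ((ℝ → ℝ) × (ℝ → ℝ))) (p : ℝ × ℝ) : ℝ :=
  (M.map fun ρ => rootFactor ρ p).prod

/-- Pairs of Puiseux germs with nonnegative second component. -/
def IsRootDatum (ρ : (ℝ → ℝ) × (ℝ → ℝ)) : Prop :=
  IsPuiseux ρ.1 ∧ IsPuiseux ρ.2 ∧ ∀ᶠ x in 𝓝[>] (0 : ℝ), 0 ≤ ρ.2 x

/-- `f` is comparable, for small `x > 0` and small `y`, to a product of `d` elementary factors. -/
def HasRootForm (d : ℕ) (f : ℝ × ℝ → ℝ) : Prop :=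
  ∃ M : Multiset ((ℝ → ℝ) × (ℝ → ℝ)), M.card = d ∧
    (∀ ρ ∈ M, IsRootDatum ρ ∧ Tendsto ρ.1 (𝓝[>] 0) (𝓝 0)) ∧
    f =Θ[𝓝[>] 0 ×ˢ 𝓝 0] rootProd M

theorem rootProd_add (M M' : Multiset ((ℝ → ℝ) × (ℝ → ℝ))) (p : ℝ × ℝ) :
    rootProd (M + M') p = rootProd M p * rootProd M' p := by
  simp [rootProd]

theorem rootProd_sum {ι : Type*} (s : Finset ι) (M : ι → Multiset ((ℝ → ℝ) × (ℝ → ℝ)))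
    (p : ℝ × ℝ) : rootProd (∑ i ∈ s, M i) p = ∏ i ∈ s, rootProd (M i) p := by
  classical
  induction s using Finset.induction_on with
  | empty => simp [rootProd]
  | insert i s hi ih => rw [Finset.sum_insert hi, rootProd_add, ih, Finset.prod_insert hi]

theorem isTheta_rootProd_one {l : Filter (ℝ × ℝ)} {M : Multiset ((ℝ → ℝ) × (ℝ → ℝ))}
    (h : ∀ ρ ∈ M, rootFactor ρ =Θ[l] fun _ => (1 : ℝ)) : rootProd M =Θ[l] fun _ => (1 : ℝ) := by
  have := IsTheta.multisetProd (s := M) (f := rootFactor) (g := fun _ _ => (1 : ℝ)) h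
  exact IsTheta.congr_fun this (fun _ => rfl) (by simp)

theorem IsRootDatum.isTheta_one {ρ : (ℝ → ℝ) × (ℝ → ℝ)} (hρ : IsRootDatum ρ) {z₀ z₁ b₀ : ℝ}
    (h1 : Tendsto ρ.1 (𝓝[>] 0) (𝓝 z₀)) (h2 : Tendsto ρ.2 (𝓝[>] 0) (𝓝 b₀))
    (hne : z₁ ≠ z₀ ∨ b₀ ≠ 0) : rootFactor ρ =Θ[𝓝[>] 0 ×ˢ 𝓝 z₁] fun _ => (1 : ℝ) := by
  have hb : 0 ≤ b₀ := ge_of_tendsto h2 hρ.2.2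
  have hlim : Tendsto (rootFactor ρ) (𝓝[>] 0 ×ˢ 𝓝 z₁) (𝓝 (|z₁ - z₀| + b₀)) :=
    ((tendsto_snd.sub (h1.comp tendsto_fst)).abs).add (h2.comp tendsto_fst)
  refine hlim.isTheta_one ?_
  rcases hne with h | h
  · have : 0 < |z₁ - z₀| := abs_pos.2 (sub_ne_zero.2 h)
    positivity
  · have : 0 < b₀ := lt_of_le_of_ne hb h.symm
    positivity

theorem Polynomial.analyticOrderAt_eval_add {Q : Polynomial ℝ} (hQ : Q ≠ 0) (z : ℝ) :
    analyticOrderAt (fun w => Q.eval (z + w)) 0 = (Q.rootMultiplicity z : ℕ) := by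
  have han : ∀ R : Polynomial ℝ, AnalyticAt ℝ (fun w => R.eval (z + w)) 0 := by
    intro R
    have h : AnalyticAt ℝ (fun w : ℝ => Polynomial.aeval (z + w) R) 0 :=
      AnalyticAt.aeval_polynomial (by fun_prop) R
    simpa [Polynomial.coe_aeval_eq_eval] using h
  rw [(han Q).analyticOrderAt_eq_natCast]
  obtain ⟨R, hR, hdvd⟩ := Polynomial.exists_eq_pow_rootMultiplicity_mul_and_not_dvd Q hQ z
  refine ⟨fun w => R.eval (z + w), han R, ?_, ?_⟩
  · simp only [add_zero]
    rwa [Polynomial.dvd_iff_isRoot] at hdvd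
  · refine Eventually.of_forall fun w => ?_
    conv_lhs => rw [hR]
    simp

theorem exists_global_rootProd {d : ℕ}
    (ih : ∀ d' < d, ∀ f : ℝ × ℝ → ℝ, AnalyticAt ℝ f 0 →
      analyticOrderAt (fun y => f (0, y)) 0 = (d' : ℕ) → HasRootForm d' f)
    {F : ℝ × ℝ → ℝ} (hF : ∀ z, AnalyticAt ℝ F (0, z)) {Q : Polynomial ℝ} (hQ : Q ≠ 0)
    (hFQ : ∀ z, F (0, z) = Q.eval z) (hdeg : Q.natDegree ≤ d)
    (hmult : ∀ z, Q.rootMultiplicity z < d) :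
    ∃ M : Multiset ((ℝ → ℝ) × (ℝ → ℝ)), M.card = d ∧ (∀ ρ ∈ M, IsRootDatum ρ) ∧
      ∀ z, F =Θ[𝓝[>] 0 ×ˢ 𝓝 z] rootProd M := by
  classical
  have hz : ∀ z, HasRootForm (Q.rootMultiplicity z) fun p => F (p.1, z + p.2) := by
    intro z
    refine ih _ (hmult z) _ ?_ ?_
    · refine AnalyticAt.fun_comp (f := fun p : ℝ × ℝ => (p.1, z + p.2)) ?_
        (analyticAt_fst.prod (analyticAt_const.add analyticAt_snd))
      simpa using hF z
    · simp only [hFQ]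
      exact Polynomial.analyticOrderAt_eval_add hQ z
  choose M hcard hdat hth using hz
  let sh : ℝ → (ℝ → ℝ) × (ℝ → ℝ) → (ℝ → ℝ) × (ℝ → ℝ) := fun z ρ => (fun t => z + ρ.1 t, ρ.2)
  have hsh : ∀ z, ∀ ρ ∈ (M z).map (sh z), IsRootDatum ρ ∧ Tendsto ρ.1 (𝓝[>] 0) (𝓝 z) := by
    intro z ρ hρ
    obtain ⟨ρ', hρ', rfl⟩ := Multiset.mem_map.1 hρ
    obtain ⟨⟨h1, h2, h3⟩, h4⟩ := hdat z ρ' hρ'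
    refine ⟨⟨(IsPuiseux.const z).add h1, h2, h3⟩, ?_⟩
    simpa using h4.const_add z
  have hone : IsRootDatum (fun _ => 0, fun _ => 1) :=
    ⟨IsPuiseux.const 0, IsPuiseux.const 1, Eventually.of_forall fun _ => zero_le_one⟩
  have hroots : Q.roots.card ≤ d := (Polynomial.card_roots' Q).trans hdeg
  refine ⟨(∑ z ∈ Q.roots.toFinset, (M z).map (sh z)) +
    Multiset.replicate (d - Q.roots.card) (fun _ => 0, fun _ => 1), ?_, ?_, ?_⟩
  · rw [Multiset.card_add, Multiset.card_sum, Multiset.card_replicate]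
    simp only [Multiset.card_map, hcard, ← Polynomial.count_roots]
    rw [Multiset.toFinset_sum_count_eq]
    omega
  · intro ρ hρ
    rcases Multiset.mem_add.1 hρ with h | h
    · obtain ⟨z, -, hz⟩ := Multiset.mem_sum.1 h
      exact (hsh z ρ hz).1
    · rw [Multiset.eq_of_mem_replicate h]
      exact hone
  · intro z₁
    have hF1 : F =Θ[𝓝[>] 0 ×ˢ 𝓝 z₁] rootProd ((M z₁).map (sh z₁)) := by
      have ht : Tendsto (fun p : ℝ × ℝ => (p.1, p.2 - z₁)) (𝓝[>] 0 ×ˢ 𝓝 z₁)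
          (𝓝[>] 0 ×ˢ 𝓝 0) := by
        refine tendsto_fst.prodMk ?_
        simpa using (tendsto_snd (f := 𝓝[>] (0 : ℝ)) (g := 𝓝 z₁)).sub_const z₁
      refine IsTheta.congr_fun (IsTheta.comp_map (hth z₁) ht) ?_ ?_
      · intro p; simp
      · intro p
        simp only [rootProd, Multiset.map_map, Function.comp, rootFactor, sh]
        congr 1
        refine Multiset.map_congr rfl fun ρ _ => ?_
        rw [sub_sub]
    have hoth : ∀ z, z ≠ z₁ →
        rootProd ((M z).map (sh z)) =Θ[𝓝[>] 0 ×ˢ 𝓝 z₁] fun _ => (1 : ℝ) := by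
      intro z hne
      refine isTheta_rootProd_one fun ρ hρ => ?_
      obtain ⟨h1, h2⟩ := hsh z ρ hρ
      obtain ⟨b₀, hb⟩ := h1.2.1.exists_tendsto
      exact h1.isTheta_one h2 hb (Or.inl hne.symm)
    have hrep : rootProd (Multiset.replicate (d - Q.roots.card) (fun _ => 0, fun _ => 1))
        =Θ[𝓝[>] 0 ×ˢ 𝓝 z₁] fun _ => (1 : ℝ) := by
      refine isTheta_rootProd_one fun ρ hρ => ?_
      rw [Multiset.eq_of_mem_replicate hρ]
      exact hone.isTheta_one (z₀ := 0) (b₀ := 1) tendsto_const_nhds tendsto_const_nhds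
        (Or.inr one_ne_zero)
    have hprod := (IsTheta.finsetProd (s := Q.roots.toFinset)
      (f := fun z p => rootProd ((M z).map (sh z)) p)
      (g := fun z p => if z = z₁ then rootProd ((M z₁).map (sh z₁)) p else 1)
      (l := 𝓝[>] 0 ×ˢ 𝓝 z₁) (by
        intro z _
        by_cases h : z = z₁
        · subst h; simpa using isTheta_refl _ _
        · simpa [h] using hoth z h)).mul hrep
    refine hF1.trans (IsTheta.symm ?_)
    refine IsTheta.congr_fun hprod ?_ ?_
    · intro p
      rw [rootProd_add, rootProd_sum]
    · intro p
      rw [Finset.prod_ite_eq']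
      split_ifs with h
      · simp
      · have hc : (M z₁).card = 0 := by
          rw [hcard, ← Polynomial.count_roots]
          exact Multiset.count_eq_zero.2 fun h' => h (Multiset.mem_toFinset.2 h')
        rw [Multiset.card_eq_zero.1 hc]
        simp [rootProd]

/-- Pulling back an elementary factor under `(x, y) ↦ (x ^ (1 / q), y / x ^ (p / q))`. -/
noncomputable def scaleDatum (p q : ℕ) (ρ : (ℝ → ℝ) × (ℝ → ℝ)) : (ℝ → ℝ) × (ℝ → ℝ) :=
  (fun x => (x ^ ((q : ℝ)⁻¹)) ^ p * ρ.1 (x ^ ((q : ℝ)⁻¹)),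
    fun x => (x ^ ((q : ℝ)⁻¹)) ^ p * ρ.2 (x ^ ((q : ℝ)⁻¹)))

theorem IsRootDatum.scaleDatum {p q : ℕ} (hq : 0 < q) {ρ : (ℝ → ℝ) × (ℝ → ℝ)}
    (hρ : IsRootDatum ρ) : IsRootDatum (scaleDatum p q ρ) := by
  refine ⟨(IsPuiseux.root_pow hq p).mul (hρ.1.comp_root hq),
    (IsPuiseux.root_pow hq p).mul (hρ.2.1.comp_root hq), ?_⟩
  filter_upwards [(tendsto_root_nhdsGT_zero hq).eventually hρ.2.2, eventually_pos_nhdsGT]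
    with x h1 h0
  exact mul_nonneg (by positivity) h1

theorem IsRootDatum.tendsto_scaleDatum {p q : ℕ} (hp : 0 < p) (hq : 0 < q)
    {ρ : (ℝ → ℝ) × (ℝ → ℝ)} (hρ : IsRootDatum ρ) :
    Tendsto (_root_.scaleDatum p q ρ).1 (𝓝[>] 0) (𝓝 0) := by
  obtain ⟨l, hl⟩ := hρ.1.exists_tendsto
  have h1 := (tendsto_nhdsWithin_iff.1
    ((tendsto_pow_nhdsGT_zero hp).comp (tendsto_root_nhdsGT_zero hq))).1
  simpa [_root_.scaleDatum] using h1.mul (hl.comp (tendsto_root_nhdsGT_zero hq))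

theorem rootProd_scaleDatum {p q : ℕ} (M : Multiset ((ℝ → ℝ) × (ℝ → ℝ))) {x : ℝ} (hx : 0 < x)
    (y : ℝ) : rootProd (M.map (scaleDatum p q)) (x, y) =
      ((x ^ ((q : ℝ)⁻¹)) ^ p) ^ M.card *
        rootProd M (x ^ ((q : ℝ)⁻¹), y / (x ^ ((q : ℝ)⁻¹)) ^ p) := by
  have hτ : 0 < (x ^ ((q : ℝ)⁻¹)) ^ p := by positivity
  set τ := (x ^ ((q : ℝ)⁻¹)) ^ p with hτd
  simp only [rootProd, Multiset.map_map, Function.comp]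
  rw [← Multiset.prod_replicate, ← Multiset.map_const', ← Multiset.prod_map_mul]
  congr 1
  refine Multiset.map_congr rfl fun ρ _ => ?_
  simp only [rootFactor, scaleDatum, ← hτd]
  rw [mul_add, ← abs_of_pos hτ, ← abs_mul, abs_of_pos hτ, mul_sub, mul_div_cancel₀ _ hτ.ne']

theorem exists_bound_rootData {M : Multiset ((ℝ → ℝ) × (ℝ → ℝ))} (hM : ∀ ρ ∈ M, IsRootDatum ρ) :
    ∃ C : ℝ, 0 < C ∧ ∀ ρ ∈ M, ∀ᶠ x in 𝓝[>] (0 : ℝ), |ρ.1 x| ≤ C ∧ |ρ.2 x| ≤ C := by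
  induction M using Multiset.induction_on with
  | empty => exact ⟨1, one_pos, by simp⟩
  | cons ρ M ih =>
    obtain ⟨C, hC, h⟩ := ih fun ρ' h => hM ρ' (Multiset.mem_cons_of_mem h)
    obtain ⟨h1, h2, -⟩ := hM ρ (Multiset.mem_cons_self _ _)
    obtain ⟨l₁, hl₁⟩ := h1.exists_tendsto
    obtain ⟨l₂, hl₂⟩ := h2.exists_tendsto
    refine ⟨C + (|l₁| + 1) + (|l₂| + 1), by positivity, fun ρ' hρ' => ?_⟩
    rcases Multiset.mem_cons.1 hρ' with rfl | hρ'
    · filter_upwards [hl₁.abs.eventually_lt_const (lt_add_one _),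
        hl₂.abs.eventually_lt_const (lt_add_one _)] with x h3 h4
      have := abs_nonneg l₁
      have := abs_nonneg l₂
      exact ⟨by linarith, by linarith⟩
    · filter_upwards [h ρ' hρ'] with x hx
      have := abs_nonneg l₁
      have := abs_nonneg l₂
      exact ⟨by linarith [hx.1], by linarith [hx.2]⟩

theorem isTheta_rootProd_pow {l : Filter (ℝ × ℝ)} {M : Multiset ((ℝ → ℝ) × (ℝ → ℝ))}
    (h : ∀ ρ ∈ M, rootFactor ρ =Θ[l] fun p => p.2) :
    rootProd M =Θ[l] fun p => p.2 ^ M.card := by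
  have := IsTheta.multisetProd (s := M) (f := rootFactor) (g := fun _ (p : ℝ × ℝ) => p.2) h
  exact IsTheta.congr_fun this (fun _ => rfl) (by simp)

theorem isTheta_of_split {l : Filter (ℝ × ℝ)} {f g : ℝ × ℝ → ℝ} (A : Set (ℝ × ℝ))
    (h1 : f =Θ[l ⊓ 𝓟 A] g) (h2 : f =Θ[l ⊓ 𝓟 Aᶜ] g) : f =Θ[l] g := by
  have := h1.sup h2
  rwa [← inf_sup_left, sup_principal, union_compl_self, principal_univ, inf_top_eq] at this

/-- The polynomial `∑ λ_k X ^ k + u X ^ d` with vanishing coefficient in degree `d - 1` and some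
other nonvanishing coefficient has no root of multiplicity `d`. -/
theorem rootMultiplicity_lt_of_coeff {d k₀ : ℕ} {Q : Polynomial ℝ} (hk₀ : k₀ < d)
    (hdeg : Q.natDegree = d) (hd1 : Q.coeff (d - 1) = 0) (hk : Q.coeff k₀ ≠ 0) (z : ℝ) :
    Q.rootMultiplicity z < d := by
  have hQ : Q ≠ 0 := by rintro rfl; simp at hk
  by_contra! hle
  have hdvd : (Polynomial.X - Polynomial.C z) ^ d ∣ Q :=
    (Polynomial.le_rootMultiplicity_iff hQ).1 hle
  obtain ⟨R, hR⟩ := hdvd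
  have hR0 : R ≠ 0 := by rintro rfl; simp at hR; exact hQ hR
  have hdR : R.natDegree = 0 := by
    have h := congrArg Polynomial.natDegree hR
    rw [Polynomial.natDegree_mul (pow_ne_zero _ (Polynomial.X_sub_C_ne_zero z)) hR0,
      Polynomial.natDegree_pow, Polynomial.natDegree_X_sub_C, hdeg] at h
    omega
  obtain ⟨a, ha⟩ := Polynomial.natDegree_eq_zero.1 hdR
  have ha0 : a ≠ 0 := by rintro rfl; simp at ha; exact hR0 ha.symm
  have hcoef : ∀ j, Q.coeff j = (-z) ^ (d - j) * (d.choose j) * a := by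
    intro j
    rw [hR, ← ha, Polynomial.coeff_mul_C, sub_eq_add_neg, ← Polynomial.C_neg,
      Polynomial.coeff_X_add_C_pow]
  rw [hcoef, show d - (d - 1) = 1 by omega, pow_one] at hd1
  have hch : ((d.choose (d - 1) : ℕ) : ℝ) ≠ 0 :=
    Nat.cast_ne_zero.2 (Nat.choose_pos (Nat.sub_le d 1)).ne'
  have hz : z = 0 := by
    rcases mul_eq_zero.1 hd1 with h | h
    · rcases mul_eq_zero.1 h with h | h
      · simpa using h
      · exact absurd h hch
    · exact absurd h ha0
  apply hk
  rw [hcoef, hz, neg_zero, zero_pow (by omega), zero_mul, zero_mul]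

/-- The function `F` with `f (t ^ q, t ^ p z) = t ^ (p d) F (t, z)` when
`f = ∑ x ^ m_k e_k(x) y ^ k + y ^ d u(x, y)`. -/
def rescaled (d p q : ℕ) (m : ℕ → ℕ) (e : ℕ → ℝ → ℝ) (u : ℝ × ℝ → ℝ) (w : ℝ × ℝ) : ℝ :=
  ∑ k ∈ Finset.range d, w.1 ^ (q * m k - p * (d - k)) * e k (w.1 ^ q) * w.2 ^ k +
    w.2 ^ d * u (w.1 ^ q, w.1 ^ p * w.2)

theorem analyticAt_rescaled {d p q : ℕ} {m : ℕ → ℕ} {e : ℕ → ℝ → ℝ} {u : ℝ × ℝ → ℝ}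
    (hp : 0 < p) (hq : 0 < q) (he : ∀ k, AnalyticAt ℝ (e k) 0) (hu : AnalyticAt ℝ u 0) (z : ℝ) :
    AnalyticAt ℝ (rescaled d p q m e u) (0, z) := by
  have h1 : ∀ k, AnalyticAt ℝ (fun w : ℝ × ℝ => w.1 ^ k) (0, z) := fun k => analyticAt_fst.pow k
  have h2 : ∀ k, AnalyticAt ℝ (fun w : ℝ × ℝ => w.2 ^ k) (0, z) := fun k => analyticAt_snd.pow k
  have h3 : ∀ k, AnalyticAt ℝ (fun w : ℝ × ℝ => e k (w.1 ^ q)) (0, z) := fun k =>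
    AnalyticAt.fun_comp (f := fun w : ℝ × ℝ => w.1 ^ q) (by simpa [hq.ne'] using he k) (h1 q)
  have h4 : AnalyticAt ℝ (fun w : ℝ × ℝ => u (w.1 ^ q, w.1 ^ p * w.2)) (0, z) := by
    refine AnalyticAt.fun_comp (f := fun w : ℝ × ℝ => (w.1 ^ q, w.1 ^ p * w.2)) ?_
      ((h1 q).prod ((h1 p).mul analyticAt_snd))
    simp only [zero_pow hq.ne', zero_pow hp.ne', zero_mul]
    exact hu
  exact (Finset.analyticAt_fun_sum _ fun k _ => ((h1 _).mul (h3 k)).mul (h2 k)).add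
    ((h2 d).mul h4)

theorem exists_rootProd_rescaled {d : ℕ}
    (ih : ∀ d' < d, ∀ f : ℝ × ℝ → ℝ, AnalyticAt ℝ f 0 →
      analyticOrderAt (fun y => f (0, y)) 0 = (d' : ℕ) → HasRootForm d' f)
    {u : ℝ × ℝ → ℝ} {e : ℕ → ℝ → ℝ} {m : ℕ → ℕ} {p q k₀ : ℕ} (hp : 0 < p) (hq : 0 < q)
    (hk₀ : k₀ < d) (he : ∀ k, AnalyticAt ℝ (e k) 0) (hu : AnalyticAt ℝ u 0) (hu0 : u 0 ≠ 0)
    (hm0 : q * m k₀ = p * (d - k₀)) (he0 : e k₀ 0 ≠ 0) (hd1 : e (d - 1) 0 = 0) :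
    ∃ M : Multiset ((ℝ → ℝ) × (ℝ → ℝ)), M.card = d ∧ (∀ ρ ∈ M, IsRootDatum ρ) ∧
      ∀ z, rescaled d p q m e u =Θ[𝓝[>] 0 ×ˢ 𝓝 z] rootProd M := by
  let Q : Polynomial ℝ := ∑ k ∈ Finset.range d,
    Polynomial.C (0 ^ (q * m k - p * (d - k)) * e k 0) * Polynomial.X ^ k +
      Polynomial.C (u 0) * Polynomial.X ^ d
  have hFQ : ∀ z, rescaled d p q m e u (0, z) = Q.eval z := by
    intro z
    simp only [rescaled, Q, Polynomial.eval_add, Polynomial.eval_finsetSum, Polynomial.eval_mul,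
      Polynomial.eval_C, Polynomial.eval_pow, Polynomial.eval_X, zero_pow hq.ne', zero_pow hp.ne',
      zero_mul]
    rw [mul_comm (u 0)]
    rfl
  have hcoeff : ∀ j < d, Q.coeff j = 0 ^ (q * m j - p * (d - j)) * e j 0 := by
    intro j hj
    simp only [Q, Polynomial.coeff_add, Polynomial.finsetSum_coeff, Polynomial.coeff_C_mul_X_pow]
    rw [Finset.sum_ite_eq, if_pos (Finset.mem_range.2 hj), if_neg hj.ne, add_zero]
  have hcoeffd : Q.coeff d = u 0 := by
    simp only [Q, Polynomial.coeff_add, Polynomial.finsetSum_coeff, Polynomial.coeff_C_mul_X_pow]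
    rw [Finset.sum_ite_eq, if_neg (by simp), zero_add]
    simp
  have hdegle : Q.natDegree ≤ d := by
    refine Polynomial.natDegree_le_iff_coeff_eq_zero.2 fun j hj => ?_
    simp only [Q, Polynomial.coeff_add, Polynomial.finsetSum_coeff, Polynomial.coeff_C_mul_X_pow]
    rw [Finset.sum_ite_eq, if_neg (by simp; omega), if_neg (by omega), add_zero]
  have hdeg : Q.natDegree = d :=
    le_antisymm hdegle (Polynomial.le_natDegree_of_ne_zero (by rwa [hcoeffd]))
  have hQ : Q ≠ 0 := by intro h; rw [h] at hcoeffd; exact hu0 (by simpa using hcoeffd.symm)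
  have hmult := rootMultiplicity_lt_of_coeff hk₀ hdeg
    (by rw [hcoeff _ (by omega), hd1, mul_zero])
    (by rw [hcoeff _ hk₀, hm0, Nat.sub_self, pow_zero, one_mul]; exact he0)
  exact exists_global_rootProd ih (analyticAt_rescaled hp hq he hu) hQ hFQ hdegle hmult

/-- Comparison in the zone `|y| ≤ K x ^ (p / q)`. -/
theorem isTheta_rootProd_inner {d p q : ℕ} (hq : 0 < q) {f u : ℝ × ℝ → ℝ} {e : ℕ → ℝ → ℝ}
    {m : ℕ → ℕ} (hm : ∀ k < d, p * (d - k) ≤ q * m k)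
    (hf : ∀ᶠ w in 𝓝 (0 : ℝ × ℝ),
      f w = ∑ k ∈ Finset.range d, w.1 ^ m k * e k w.1 * w.2 ^ k + w.2 ^ d * u w)
    {M : Multiset ((ℝ → ℝ) × (ℝ → ℝ))} (hcard : M.card = d)
    (hth : ∀ z, rescaled d p q m e u =Θ[𝓝[>] 0 ×ˢ 𝓝 z] rootProd M) (K : ℝ) :
    f =Θ[(𝓝[>] 0 ×ˢ 𝓝 0) ⊓ 𝓟 {w | |w.2| ≤ K * (w.1 ^ ((q : ℝ)⁻¹)) ^ p}]
      rootProd (M.map (scaleDatum p q)) := by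
  set τ : ℝ → ℝ := fun x => (x ^ ((q : ℝ)⁻¹)) ^ p with hτdef
  set l : Filter (ℝ × ℝ) := 𝓝[>] 0 ×ˢ 𝓝 0
  have hl0 : l ≤ 𝓝 (0 : ℝ × ℝ) := by
    rw [show (0 : ℝ × ℝ) = (0, 0) from rfl, nhds_prod_eq]
    exact Filter.prod_mono nhdsWithin_le_nhds le_rfl
  have hlx : Tendsto (Prod.fst : ℝ × ℝ → ℝ) l (𝓝[>] 0) := tendsto_fst
  have hfl := hf.filter_mono hl0
  have hroot := tendsto_root_nhdsGT_zero hq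
  have hxpow : ∀ x : ℝ, 0 < x → (x ^ ((q : ℝ)⁻¹)) ^ q = x := fun x hx =>
    Real.rpow_inv_natCast_pow hx.le hq.ne'
  have hcomp := IsTheta.prod_principal_of_isCompact (isCompact_Icc (a := -K) (b := K))
    fun z _ => hth z
  have hG : Tendsto (fun w : ℝ × ℝ => (w.1 ^ ((q : ℝ)⁻¹), w.2 / τ w.1))
      (l ⊓ 𝓟 {w | |w.2| ≤ K * τ w.1}) (𝓝[>] 0 ×ˢ 𝓟 (Icc (-K) K)) := by
    refine Tendsto.prodMk ((hroot.comp hlx).mono_left inf_le_left) (tendsto_principal.2 ?_)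
    have hpos := (hlx.eventually eventually_pos_nhdsGT).filter_mono
      (inf_le_left : l ⊓ 𝓟 {w | |w.2| ≤ K * τ w.1} ≤ l)
    have hle := eventually_principal.2 (fun w h => h : ∀ w ∈ {w : ℝ × ℝ | |w.2| ≤ K * τ w.1}, _)
    filter_upwards [hpos, hle.filter_mono inf_le_right] with w h0 h1
    have hτ : 0 < τ w.1 := by simp only [τ]; positivity
    rw [mem_Icc, ← abs_le, abs_div, abs_of_pos hτ, div_le_iff₀ hτ]
    exact h1
  have h1 := IsTheta.comp_map hcomp hG
  have h2 := (isTheta_refl (fun w : ℝ × ℝ => τ w.1 ^ d)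
    (l ⊓ 𝓟 {w | |w.2| ≤ K * τ w.1})).mul h1
  have hpos := hlx.eventually eventually_pos_nhdsGT
  refine EventuallyEq.trans_isTheta ?_ (h2.trans_eventuallyEq ?_)
  · refine EventuallyEq.filter_mono (l := l) ?_ inf_le_left
    filter_upwards [hfl, hpos] with w h1 h0
    have ht : 0 < w.1 ^ ((q : ℝ)⁻¹) := by positivity
    have hx := hxpow w.1 h0
    simp only [rescaled, τ]
    set t := w.1 ^ ((q : ℝ)⁻¹) with htd
    rw [hx, mul_div_cancel₀ _ (by positivity : t ^ p ≠ 0), h1, mul_add, Finset.mul_sum]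
    congr 1
    · refine Finset.sum_congr rfl fun k hk => ?_
      have hkd := Finset.mem_range.1 hk
      have hxm : w.1 ^ m k = t ^ (q * m k - p * (d - k)) * (t ^ p) ^ (d - k) := by
        rw [← pow_mul t p, ← pow_add, Nat.sub_add_cancel (hm k hkd), pow_mul, hx]
      have hsplit : (t ^ p) ^ d = (t ^ p) ^ (d - k) * (t ^ p) ^ k := by
        rw [← pow_add, Nat.sub_add_cancel hkd.le]
      rw [hxm, hsplit, div_pow]
      field_simp
    · rw [div_pow]
      field_simp
  · refine EventuallyEq.filter_mono (l := l) ?_ inf_le_left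
    filter_upwards [hpos] with w h0
    rw [rootProd_scaleDatum M h0, hcard]

/-- Comparison in the zone `|y| > K x ^ (p / q)`. -/
theorem exists_isTheta_rootProd_outer {d p q : ℕ} (hq : 0 < q) {f u : ℝ × ℝ → ℝ}
    {e : ℕ → ℝ → ℝ} {m : ℕ → ℕ} (he : ∀ k, AnalyticAt ℝ (e k) 0) (hu : AnalyticAt ℝ u 0)
    (hu0 : u 0 ≠ 0) (hm : ∀ k < d, p * (d - k) ≤ q * m k)
    (hf : ∀ᶠ w in 𝓝 (0 : ℝ × ℝ),
      f w = ∑ k ∈ Finset.range d, w.1 ^ m k * e k w.1 * w.2 ^ k + w.2 ^ d * u w)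
    {M : Multiset ((ℝ → ℝ) × (ℝ → ℝ))} (hcard : M.card = d) (hdat : ∀ ρ ∈ M, IsRootDatum ρ) :
    ∃ K : ℝ, f =Θ[(𝓝[>] 0 ×ˢ 𝓝 0) ⊓ 𝓟 {w | |w.2| ≤ K * (w.1 ^ ((q : ℝ)⁻¹)) ^ p}ᶜ]
      rootProd (M.map (scaleDatum p q)) := by
  obtain ⟨C', hC', hbd⟩ := exists_bound_rootData hdat
  obtain ⟨C, hCdef⟩ : ∃ C, C = ∑ k ∈ Finset.range d, (|e k 0| + 1) := ⟨_, rfl⟩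
  have hC : 0 ≤ C := hCdef ▸ Finset.sum_nonneg fun k _ => by positivity
  have hu0' : 0 < |u 0| := abs_pos.2 hu0
  obtain ⟨K, hKdef⟩ : ∃ K, K = 1 + 2 * C' + 4 * C / |u 0| := ⟨_, rfl⟩
  have hK1 : 1 ≤ K := by
    have : 0 ≤ 4 * C / |u 0| := by positivity
    linarith
  have hKC' : 2 * C' ≤ K := by
    have : 0 ≤ 4 * C / |u 0| := by positivity
    linarith
  have hKC : C / K ≤ |u 0| / 4 := by
    have h1 : 4 * C / |u 0| ≤ K := by linarith
    rw [div_le_iff₀ (by linarith)]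
    rw [div_le_iff₀ hu0'] at h1
    linarith
  have hKpos : 0 < K := by linarith
  refine ⟨K, ?_⟩
  set τ : ℝ → ℝ := fun x => (x ^ ((q : ℝ)⁻¹)) ^ p with hτdef
  set l : Filter (ℝ × ℝ) := 𝓝[>] 0 ×ˢ 𝓝 0
  have hl0 : l ≤ 𝓝 (0 : ℝ × ℝ) := by
    rw [show (0 : ℝ × ℝ) = (0, 0) from rfl, nhds_prod_eq]
    exact Filter.prod_mono nhdsWithin_le_nhds le_rfl
  have hlx : Tendsto (Prod.fst : ℝ × ℝ → ℝ) l (𝓝[>] 0) := tendsto_fst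
  have hfl := hf.filter_mono hl0
  have hroot := tendsto_root_nhdsGT_zero hq
  have hxpow : ∀ x : ℝ, 0 < x → (x ^ ((q : ℝ)⁻¹)) ^ q = x := fun x hx =>
    Real.rpow_inv_natCast_pow hx.le hq.ne'
  set l₁ := l ⊓ 𝓟 {w | |w.2| ≤ K * τ w.1}ᶜ
  have hl₁l : l₁ ≤ l := inf_le_left
  have hpos : ∀ᶠ w in l₁, 0 < w.1 := (hlx.eventually eventually_pos_nhdsGT).filter_mono hl₁l
  have hy : ∀ᶠ w in l₁, K * τ w.1 < |w.2| := by
    have := eventually_principal.2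
      (fun w h => not_le.1 h : ∀ w ∈ {w : ℝ × ℝ | |w.2| ≤ K * τ w.1}ᶜ, K * τ w.1 < |w.2|)
    exact this.filter_mono inf_le_right
  have hprod : rootProd (M.map (scaleDatum p q)) =Θ[l₁] fun w => w.2 ^ d := by
    have := isTheta_rootProd_pow (l := l₁) (M := M.map (scaleDatum p q)) ?_
    · rwa [Multiset.card_map, hcard] at this
    intro ρ hρ
    obtain ⟨ρ', hρ', rfl⟩ := Multiset.mem_map.1 hρ
    refine IsTheta.of_bounds (c := 1 / 2) (C := 2) (by norm_num) ?_
    have hb := ((hroot.comp hlx).eventually (hbd ρ' hρ')).filter_mono hl₁l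
    have hnn := ((hroot.comp hlx).eventually (hdat ρ' hρ').2.2).filter_mono hl₁l
    filter_upwards [hpos, hy, hb, hnn] with w h0 h1 h2 h3
    simp only [Function.comp] at h2 h3
    have hτ : 0 < τ w.1 := by simp only [τ]; positivity
    have ha : |τ w.1 * ρ'.1 (w.1 ^ ((q : ℝ)⁻¹))| ≤ |w.2| / 2 := by
      rw [abs_mul, abs_of_pos hτ]
      nlinarith [h2.1]
    have hb : τ w.1 * ρ'.2 (w.1 ^ ((q : ℝ)⁻¹)) ≤ |w.2| / 2 := by
      nlinarith [le_of_abs_le h2.2]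
    have hb0 : 0 ≤ τ w.1 * ρ'.2 (w.1 ^ ((q : ℝ)⁻¹)) := mul_nonneg hτ.le h3
    have hrw : rootFactor (scaleDatum p q ρ') w =
      |w.2 - τ w.1 * ρ'.1 (w.1 ^ ((q : ℝ)⁻¹))| + τ w.1 * ρ'.2 (w.1 ^ ((q : ℝ)⁻¹)) := rfl
    rw [hrw, abs_of_nonneg (add_nonneg (abs_nonneg _) hb0)]
    have t1 := abs_sub_abs_le_abs_sub w.2 (τ w.1 * ρ'.1 (w.1 ^ ((q : ℝ)⁻¹)))
    have t2 := abs_sub w.2 (τ w.1 * ρ'.1 (w.1 ^ ((q : ℝ)⁻¹)))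
    constructor <;> linarith
  refine IsTheta.trans ?_ hprod.symm
  refine IsTheta.of_bounds (c := |u 0| / 4) (C := 3 * |u 0|) (by positivity) ?_
  have hub : ∀ᶠ w in l₁, |u 0| / 2 < |u w| ∧ |u w| < 2 * |u 0| := by
    have := hu.continuousAt.tendsto.abs
    exact ((this.eventually_const_lt (by linarith)).and
      (this.eventually_lt_const (by linarith))).filter_mono (hl₁l.trans hl0)
  have heb : ∀ᶠ w in l₁, ∀ k ∈ Finset.range d, |e k w.1| < |e k 0| + 1 := by
    refine (Finset.eventually_all _).2 fun k _ => ?_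
    have h1 := (he k).continuousAt.tendsto.abs.eventually_lt_const (lt_add_one _)
    exact ((hlx.mono_right nhdsWithin_le_nhds).eventually h1).filter_mono hl₁l
  have ht1 : ∀ᶠ w in l₁, w.1 ^ ((q : ℝ)⁻¹) < 1 :=
    ((hroot.comp hlx).eventually (eventually_lt_nhdsGT one_pos)).filter_mono hl₁l
  filter_upwards [hpos, hy, hub, heb, ht1, hfl.filter_mono hl₁l] with w h0 h1 h2 h3 h4 h5
  have ht : 0 < w.1 ^ ((q : ℝ)⁻¹) := by positivity
  have hx := hxpow w.1 h0
  have hτ : 0 < τ w.1 := by simp only [τ]; positivity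
  have hτd : τ w.1 = (w.1 ^ ((q : ℝ)⁻¹)) ^ p := rfl
  set t := w.1 ^ ((q : ℝ)⁻¹) with htd
  have hterm : ∀ k ∈ Finset.range d,
      |w.1 ^ m k * e k w.1 * w.2 ^ k| ≤ (|e k 0| + 1) * (|w.2| ^ d / K) := by
    intro k hk
    have hkd := Finset.mem_range.1 hk
    have e1 : w.1 ^ m k ≤ τ w.1 ^ (d - k) := by
      rw [hτd, ← pow_mul, show w.1 ^ m k = t ^ (q * m k) by rw [pow_mul, hx]]
      exact pow_le_pow_of_le_one ht.le h4.le (hm k hkd)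
    have e2 : τ w.1 ≤ |w.2| / K := by
      rw [le_div_iff₀ hKpos, mul_comm]; exact h1.le
    have e3 : τ w.1 ^ (d - k) ≤ |w.2| ^ (d - k) / K := by
      refine (pow_le_pow_left₀ hτ.le e2 _).trans ?_
      rw [div_pow]
      refine div_le_div_of_nonneg_left (by positivity) hKpos ?_
      exact le_self_pow₀ hK1 (by omega)
    have e4 : |w.2| ^ d = |w.2| ^ (d - k) * |w.2| ^ k := by
      rw [← pow_add, Nat.sub_add_cancel hkd.le]
    rw [abs_mul, abs_mul, abs_pow, abs_pow, abs_of_pos h0, mul_comm (w.1 ^ m k), mul_assoc]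
    refine mul_le_mul (h3 k hk).le ?_ (by positivity) (by positivity)
    rw [e4, mul_div_right_comm]
    exact mul_le_mul_of_nonneg_right (e1.trans e3) (by positivity)
  have hsum : |∑ k ∈ Finset.range d, w.1 ^ m k * e k w.1 * w.2 ^ k| ≤
      |u 0| / 4 * |w.2| ^ d := by
    refine (Finset.abs_sum_le_sum_abs _ _).trans ((Finset.sum_le_sum hterm).trans ?_)
    rw [← Finset.sum_mul, ← hCdef, mul_div_assoc', mul_div_right_comm]
    exact mul_le_mul_of_nonneg_right hKC (by positivity)
  have hyd : 0 ≤ |w.2| ^ d := by positivity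
  rw [h5, abs_pow]
  have t1 := abs_add_le (∑ k ∈ Finset.range d, w.1 ^ m k * e k w.1 * w.2 ^ k) (w.2 ^ d * u w)
  have t2 := abs_sub_abs_le_abs_add (w.2 ^ d * u w)
    (∑ k ∈ Finset.range d, w.1 ^ m k * e k w.1 * w.2 ^ k)
  rw [add_comm (w.2 ^ d * u w)] at t2
  rw [abs_mul (w.2 ^ d), abs_pow] at t1 t2
  constructor <;> nlinarith [h2.1, h2.2]

theorem hasRootForm_of_expansion {d : ℕ}
    (ih : ∀ d' < d, ∀ f : ℝ × ℝ → ℝ, AnalyticAt ℝ f 0 →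
      analyticOrderAt (fun y => f (0, y)) 0 = (d' : ℕ) → HasRootForm d' f)
    {f u : ℝ × ℝ → ℝ} {e : ℕ → ℝ → ℝ} {m : ℕ → ℕ} {p q k₀ : ℕ} (hp : 0 < p) (hq : 0 < q)
    (hk₀ : k₀ < d) (he : ∀ k, AnalyticAt ℝ (e k) 0) (hu : AnalyticAt ℝ u 0) (hu0 : u 0 ≠ 0)
    (hm : ∀ k < d, p * (d - k) ≤ q * m k) (hm0 : q * m k₀ = p * (d - k₀)) (he0 : e k₀ 0 ≠ 0)
    (hd1 : e (d - 1) 0 = 0)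
    (hf : ∀ᶠ w in 𝓝 (0 : ℝ × ℝ),
      f w = ∑ k ∈ Finset.range d, w.1 ^ m k * e k w.1 * w.2 ^ k + w.2 ^ d * u w) :
    HasRootForm d f := by
  obtain ⟨M, hcard, hdat, hth⟩ :=
    exists_rootProd_rescaled ih hp hq hk₀ he hu hu0 hm0 he0 hd1
  refine ⟨M.map (scaleDatum p q), by rw [Multiset.card_map, hcard], ?_, ?_⟩
  · intro ρ hρ
    obtain ⟨ρ', hρ', rfl⟩ := Multiset.mem_map.1 hρ
    exact ⟨(hdat ρ' hρ').scaleDatum hq, (hdat ρ' hρ').tendsto_scaleDatum hp hq⟩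
  · obtain ⟨K, hK⟩ := exists_isTheta_rootProd_outer hq he hu hu0 hm hf hcard hdat
    exact isTheta_of_split _ (isTheta_rootProd_inner hq hm hf hcard hth K) hK

/-- The analytic implicit function theorem in the plane. -/
theorem AnalyticAt.exists_implicit {g : ℝ × ℝ → ℝ} (hg : AnalyticAt ℝ g 0) (h0 : g 0 = 0)
    (h1 : deriv (fun y => g (0, y)) 0 ≠ 0) :
    ∃ ψ : ℝ → ℝ, AnalyticAt ℝ ψ 0 ∧ ψ 0 = 0 ∧ ∀ᶠ x in 𝓝 (0 : ℝ), g (x, ψ x) = 0 := by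
  have hd : deriv (fun y => g (0, y)) 0 = fderiv ℝ g 0 (0, 1) :=
    (hg.eventually_deriv_right.self_of_nhds).deriv
  rw [hd] at h1
  have hc : ContDiffAt ℝ ⊤ g 0 := hg.contDiffAt
  have hinv : (fderiv ℝ g 0 ∘SL ContinuousLinearMap.inr ℝ ℝ ℝ).IsInvertible := by
    refine ⟨ContinuousLinearEquiv.unitsEquivAut ℝ (Units.mk0 _ h1), ?_⟩
    ext
    simp
  refine ⟨hc.implicitFunction (by simp) hinv, ?_, ?_, ?_⟩
  · exact (hc.contDiffAt_implicitFunction (by simp) hinv).analyticAt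
  · exact hc.implicitFunction_apply_self (by simp) hinv
  · have := hc.eventually_apply_implicitFunction (by simp) hinv
    rw [h0] at this
    exact this

theorem HasRootForm.of_shift {d : ℕ} {f : ℝ × ℝ → ℝ} {ψ : ℝ → ℝ} (hψ : AnalyticAt ℝ ψ 0)
    (hψ0 : ψ 0 = 0) (h : HasRootForm d fun p => f (p.1, p.2 + ψ p.1)) : HasRootForm d f := by
  obtain ⟨M, hcard, hdat, hth⟩ := h
  have hψt : Tendsto ψ (𝓝[>] 0) (𝓝 0) := by
    have := hψ.continuousAt.tendsto
    rw [hψ0] at this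
    exact this.mono_left nhdsWithin_le_nhds
  refine ⟨M.map fun ρ => (fun x => ψ x + ρ.1 x, ρ.2), by simpa using hcard, ?_, ?_⟩
  · intro ρ hρ
    obtain ⟨ρ', hρ', rfl⟩ := Multiset.mem_map.1 hρ
    obtain ⟨⟨h1, h2, h3⟩, h4⟩ := hdat ρ' hρ'
    refine ⟨⟨(IsPuiseux.of_analyticAt hψ).add h1, h2, h3⟩, ?_⟩
    simpa using hψt.add h4
  · have ht : Tendsto (fun p : ℝ × ℝ => (p.1, p.2 - ψ p.1)) (𝓝[>] 0 ×ˢ 𝓝 0)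
        (𝓝[>] 0 ×ˢ 𝓝 0) := by
      refine tendsto_fst.prodMk ?_
      simpa using (tendsto_snd (f := 𝓝[>] (0 : ℝ)) (g := 𝓝 (0 : ℝ))).sub (hψt.comp tendsto_fst)
    refine IsTheta.congr_fun (IsTheta.comp_map hth ht) ?_ ?_
    · intro p; simp
    · intro p
      simp only [rootProd, Multiset.map_map, Function.comp, rootFactor]
      congr 1
      refine Multiset.map_congr rfl fun ρ _ => ?_
      rw [sub_sub]

/-- The case distinction on the Newton polygon after the coefficient of `y ^ (d - 1)` has been
removed. -/
theorem hasRootForm_of_coeff {d : ℕ}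
    (ih : ∀ d' < d, ∀ f : ℝ × ℝ → ℝ, AnalyticAt ℝ f 0 →
      analyticOrderAt (fun y => f (0, y)) 0 = (d' : ℕ) → HasRootForm d' f)
    {f u : ℝ × ℝ → ℝ} {c : ℕ → ℝ → ℝ} (hc : ∀ k, AnalyticAt ℝ (c k) 0) (hu : AnalyticAt ℝ u 0)
    (hu0 : u 0 ≠ 0) (hc0 : ∀ k < d, c k 0 = 0) (hd1 : ∀ᶠ x in 𝓝 (0 : ℝ), c (d - 1) x = 0)
    (hf : ∀ᶠ w in 𝓝 (0 : ℝ × ℝ),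
      f w = ∑ k ∈ Finset.range d, c k w.1 * w.2 ^ k + w.2 ^ d * u w) :
    HasRootForm d f := by
  classical
  let S := (Finset.range d).filter fun k => analyticOrderAt (c k) 0 ≠ ⊤
  have hzero : ∀ k ∈ Finset.range d, k ∉ S → ∀ᶠ x in 𝓝 (0 : ℝ), c k x = 0 := by
    intro k hk hkS
    have : analyticOrderAt (c k) 0 = ⊤ := by
      by_contra h
      exact hkS (Finset.mem_filter.2 ⟨hk, h⟩)
    exact analyticOrderAt_eq_top.1 this
  have hfst : Tendsto (Prod.fst : ℝ × ℝ → ℝ) (𝓝 0) (𝓝 0) :=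
    Continuous.tendsto' continuous_fst _ _ rfl
  rcases S.eq_empty_or_nonempty with hS | hS
  · refine ⟨Multiset.replicate d (fun _ => 0, fun _ => 0), Multiset.card_replicate _ _, ?_, ?_⟩
    · intro ρ hρ
      rw [Multiset.eq_of_mem_replicate hρ]
      exact ⟨⟨IsPuiseux.const 0, IsPuiseux.const 0, Eventually.of_forall fun _ => le_rfl⟩,
        tendsto_const_nhds⟩
    · have hl0 : 𝓝[>] (0 : ℝ) ×ˢ 𝓝 (0 : ℝ) ≤ 𝓝 (0 : ℝ × ℝ) := by
        rw [show (0 : ℝ × ℝ) = (0, 0) from rfl, nhds_prod_eq]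
        exact Filter.prod_mono nhdsWithin_le_nhds le_rfl
      have hall : ∀ᶠ x in 𝓝 (0 : ℝ), ∀ k ∈ Finset.range d, c k x = 0 :=
        (Finset.eventually_all _).2 fun k hk => hzero k hk (by simp [hS])
      have h1 : f =ᶠ[𝓝[>] (0 : ℝ) ×ˢ 𝓝 (0 : ℝ)] fun w => w.2 ^ d * u w := by
        refine EventuallyEq.filter_mono (l := 𝓝 0) ?_ hl0
        filter_upwards [hf, hfst.eventually hall] with w h1 h2
        rw [h1, Finset.sum_eq_zero fun k hk => by rw [h2 k hk, zero_mul], zero_add]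
      have h2 : u =Θ[𝓝[>] (0 : ℝ) ×ˢ 𝓝 (0 : ℝ)] fun _ => (1 : ℝ) :=
        (hu.continuousAt.tendsto.mono_left hl0).isTheta_one hu0
      have h3 : (fun w : ℝ × ℝ => w.2 ^ d) =Θ[𝓝[>] (0 : ℝ) ×ˢ 𝓝 (0 : ℝ)]
          fun w : ℝ × ℝ => |w.2| ^ d :=
        IsTheta.of_norm_eventuallyEq_norm (Eventually.of_forall fun w => by simp)
      refine h1.trans_isTheta (IsTheta.congr_fun (h3.mul h2) (fun _ => rfl) ?_)
      intro p
      simp [rootProd, rootFactor]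
  · have hex : ∀ k ∈ S, ∃ (n : ℕ) (g : ℝ → ℝ), AnalyticAt ℝ g 0 ∧ g 0 ≠ 0 ∧
        ∀ᶠ z in 𝓝 (0 : ℝ), c k z = (z - 0) ^ n • g z := by
      intro k hk
      obtain ⟨n, hn⟩ := ENat.ne_top_iff_exists.1 (Finset.mem_filter.1 hk).2
      exact ⟨n, ((hc k).analyticOrderAt_eq_natCast).1 hn.symm⟩
    choose! m e hme using hex
    obtain ⟨k₀, hk₀S, hmin⟩ := S.exists_min_image (fun k => (m k : ℚ) / ((d - k : ℕ) : ℚ)) hS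
    have hk₀ : k₀ < d := Finset.mem_range.1 (Finset.mem_filter.1 hk₀S).1
    have hmpos : 0 < m k₀ := by
      rcases Nat.eq_zero_or_pos (m k₀) with h | h
      · have := (hme k₀ hk₀S).2.2.self_of_nhds
        rw [h, hc0 k₀ hk₀] at this
        simp only [sub_zero, pow_zero, one_smul] at this
        exact absurd this.symm (hme k₀ hk₀S).2.1
      · exact h
    have hslope : ∀ k ∈ S, m k₀ * (d - k) ≤ (d - k₀) * m k := by
      intro k hk
      have hkd : k < d := Finset.mem_range.1 (Finset.mem_filter.1 hk).1
      have h := hmin k hk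
      rw [div_le_div_iff₀ (by exact_mod_cast Nat.sub_pos_of_lt hk₀)
        (by exact_mod_cast Nat.sub_pos_of_lt hkd)] at h
      have h' : m k₀ * (d - k) ≤ m k * (d - k₀) := by exact_mod_cast h
      linarith
    refine hasRootForm_of_expansion ih (u := u) (p := m k₀) (q := d - k₀) (k₀ := k₀)
      (m := fun k => if k ∈ S then m k else m k₀ * d) (e := fun k => if k ∈ S then e k else 0)
      hmpos (Nat.sub_pos_of_lt hk₀) hk₀ ?_ hu hu0 ?_ ?_ ?_ ?_ ?_
    · intro k
      by_cases hk : k ∈ S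
      · simpa [hk] using (hme k hk).1
      · simp only [hk, if_false]
        exact analyticAt_const
    · intro k hkd
      by_cases hk : k ∈ S
      · simpa [hk] using hslope k hk
      · simp only [hk, if_false]
        calc m k₀ * (d - k) ≤ m k₀ * d := Nat.mul_le_mul_left _ (Nat.sub_le _ _)
          _ ≤ (d - k₀) * (m k₀ * d) := Nat.le_mul_of_pos_left _ (Nat.sub_pos_of_lt hk₀)
    · simp only [hk₀S, if_true]
      exact mul_comm _ _
    · simpa [hk₀S] using (hme k₀ hk₀S).2.1
    · have : d - 1 ∉ S := fun h =>
        (Finset.mem_filter.1 h).2 (analyticOrderAt_eq_top.2 hd1)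
      simp [this]
    · have hall : ∀ᶠ x in 𝓝 (0 : ℝ), ∀ k ∈ Finset.range d,
          c k x = x ^ (if k ∈ S then m k else m k₀ * d) * (if k ∈ S then e k else 0) x := by
        refine (Finset.eventually_all _).2 fun k hk => ?_
        by_cases hkS : k ∈ S
        · filter_upwards [(hme k hkS).2.2] with x hx
          simpa [hkS] using hx
        · filter_upwards [hzero k hk hkS] with x hx
          simpa [hkS] using hx
      filter_upwards [hf, hfst.eventually hall] with w h1 h2
      rw [h1]
      congr 1
      exact Finset.sum_congr rfl fun k hk => by rw [h2 k hk]

/-- An analytic function of finite order `d` in `y` at the origin is comparable, for small `x > 0`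
and small `y`, to a product of `d` factors `|y - α(x)| + b(x)` with Puiseux germs `α`, `b`. -/
theorem hasRootForm_of_analyticOrderAt (d : ℕ) : ∀ f : ℝ × ℝ → ℝ, AnalyticAt ℝ f 0 →
    analyticOrderAt (fun y => f (0, y)) 0 = (d : ℕ) → HasRootForm d f := by
  induction d using Nat.strong_induction_on with
  | _ d ih =>
  intro f hf hord
  have hf0 : AnalyticAt ℝ (fun y => f (0, y)) 0 := AnalyticAt.mk_right hf
  obtain ⟨hlt, hne⟩ := (analyticOrderAt_eq_nat_iff_iteratedDeriv_eq_zero hf0).1 hord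
  rcases Nat.eq_zero_or_pos d with rfl | hd
  · refine ⟨0, rfl, by simp, ?_⟩
    have hl0 : 𝓝[>] (0 : ℝ) ×ˢ 𝓝 (0 : ℝ) ≤ 𝓝 (0 : ℝ × ℝ) := by
      rw [show (0 : ℝ × ℝ) = (0, 0) from rfl, nhds_prod_eq]
      exact Filter.prod_mono nhdsWithin_le_nhds le_rfl
    refine IsTheta.congr_fun ((hf.continuousAt.tendsto.mono_left hl0).isTheta_one ?_)
      (fun _ => rfl) (by simp [rootProd])
    rw [iteratedDeriv_zero] at hne
    exact hne
  · obtain ⟨ψ, hψ, hψ0, hψg⟩ := (hf.iteratedDeriv_right (d - 1)).exists_implicit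
      (hlt (d - 1) (by omega)) (by
        have : deriv (iteratedDeriv (d - 1) fun y => f (0, y)) 0 ≠ 0 := by
          rw [← iteratedDeriv_succ, show d - 1 + 1 = d by omega]
          exact hne
        exact this)
    refine HasRootForm.of_shift hψ hψ0 ?_
    have hsf : AnalyticAt ℝ (fun p : ℝ × ℝ => f (p.1, p.2 + ψ p.1)) 0 := by
      refine AnalyticAt.fun_comp (f := fun p : ℝ × ℝ => (p.1, p.2 + ψ p.1)) ?_ ?_
      · simp only [Prod.fst_zero, Prod.snd_zero, hψ0, add_zero]
        exact hf
      · exact analyticAt_fst.prod (analyticAt_snd.add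
          (AnalyticAt.fun_comp (f := (Prod.fst : ℝ × ℝ → ℝ)) hψ analyticAt_fst))
    obtain ⟨c, v, hc, hv, hcv⟩ := hsf.exists_eq_sum_add_pow_snd (d + 1)
    have hcoef : ∀ k < d + 1, ∀ᶠ x in 𝓝 (0 : ℝ),
        iteratedDeriv k (fun y => f (x, y)) (ψ x) = k.factorial * c k x := by
      intro k hk
      filter_upwards [AnalyticAt.eventually_coeff_eq hk hv hcv] with x hx
      rw [← hx, iteratedDeriv_comp_add_const k (fun y => f (x, y)) (ψ x)]
      simp only [zero_add]
    refine hasRootForm_of_coeff ih (c := c) (u := fun w => c d w.1 + w.2 * v w) hc ?_ ?_ ?_ ?_ ?_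
    · exact (AnalyticAt.fun_comp (f := (Prod.fst : ℝ × ℝ → ℝ)) (hc d) analyticAt_fst).add
        (analyticAt_snd.mul hv)
    · have := (hcoef d (by omega)).self_of_nhds
      rw [hψ0] at this
      rw [this] at hne
      simpa using (mul_ne_zero_iff.1 hne).2
    · intro k hk
      have := (hcoef k (by omega)).self_of_nhds
      rw [hψ0, hlt k hk] at this
      simpa [Nat.factorial_ne_zero] using this.symm
    · filter_upwards [hcoef (d - 1) (by omega), hψg] with x h1 h2
      rw [h2] at h1
      simpa [Nat.factorial_ne_zero] using h1.symm
    · filter_upwards [hcv] with w hw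
      rw [hw, Finset.sum_range_succ]
      ring

/-- Local form of a nonzero analytic germ in the half plane `x > 0`. -/
theorem AnalyticAt.exists_isTheta_rootProd {f : ℝ × ℝ → ℝ} (hf : AnalyticAt ℝ f 0)
    (h0 : ¬ ∀ᶠ p in 𝓝 (0 : ℝ × ℝ), f p = 0) :
    ∃ (k : ℕ) (M : Multiset ((ℝ → ℝ) × (ℝ → ℝ))), (∀ ρ ∈ M, IsRootDatum ρ) ∧
      f =Θ[𝓝[>] 0 ×ˢ 𝓝 0] fun p => p.1 ^ k * rootProd M p := by
  obtain ⟨k, d, g, hg, hd, hfg⟩ := hf.exists_eq_pow_fst_mul h0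
  obtain ⟨M, -, hdat, hth⟩ := hasRootForm_of_analyticOrderAt d g hg hd
  refine ⟨k, M, fun ρ hρ => (hdat ρ hρ).1, ?_⟩
  have hl0 : 𝓝[>] (0 : ℝ) ×ˢ 𝓝 (0 : ℝ) ≤ 𝓝 (0 : ℝ × ℝ) := by
    rw [show (0 : ℝ × ℝ) = (0, 0) from rfl, nhds_prod_eq]
    exact Filter.prod_mono nhdsWithin_le_nhds le_rfl
  refine EventuallyEq.trans_isTheta (hfg.filter_mono hl0) ?_
  exact (isTheta_refl _ _).mul hth

/-- Two-sided comparability near `0+` of functions with values in `[0, ∞]`. -/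
def ECmp (J J' : ℝ → ENNReal) : Prop :=
  ∃ C : ℝ≥0, ∀ᶠ x in 𝓝[>] (0 : ℝ), J x ≤ C * J' x ∧ J' x ≤ C * J x

theorem ECmp.trans {J J' J'' : ℝ → ENNReal} (h : ECmp J J') (h' : ECmp J' J'') :
    ECmp J J'' := by
  obtain ⟨C, hC⟩ := h
  obtain ⟨D, hD⟩ := h'
  refine ⟨C * D, ?_⟩
  filter_upwards [hC, hD] with x h1 h2
  push_cast
  constructor
  · rw [mul_assoc]
    exact h1.1.trans (by gcongr; exact h2.1)
  · rw [mul_comm (C : ENNReal), mul_assoc]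
    exact h2.2.trans (by gcongr; exact h1.2)

theorem ECmp.of_eventuallyEq {J J' : ℝ → ENNReal} (h : J =ᶠ[𝓝[>] 0] J') : ECmp J J' :=
  ⟨1, h.mono fun x hx => by simp [hx]⟩

theorem ECmp.add {J₁ J₂ K₁ K₂ : ℝ → ENNReal} (h : ECmp J₁ K₁) (h' : ECmp J₂ K₂) :
    ECmp (fun x => J₁ x + J₂ x) fun x => K₁ x + K₂ x := by
  obtain ⟨C, hC⟩ := h
  obtain ⟨D, hD⟩ := h'
  refine ⟨C + D, ?_⟩
  filter_upwards [hC, hD] with x h1 h2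
  have hCle : (C : ENNReal) ≤ ((C + D : ℝ≥0) : ENNReal) := by simp
  have hDle : (D : ENNReal) ≤ ((C + D : ℝ≥0) : ENNReal) := by simp
  constructor
  · rw [mul_add]
    exact add_le_add (h1.1.trans (by gcongr)) (h2.1.trans (by gcongr))
  · rw [mul_add]
    exact add_le_add (h1.2.trans (by gcongr)) (h2.2.trans (by gcongr))

theorem ECmp.mul {J₁ J₂ K₁ K₂ : ℝ → ENNReal} (h : ECmp J₁ K₁) (h' : ECmp J₂ K₂) :
    ECmp (fun x => J₁ x * J₂ x) fun x => K₁ x * K₂ x := by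
  obtain ⟨C, hC⟩ := h
  obtain ⟨D, hD⟩ := h'
  refine ⟨C * D, ?_⟩
  filter_upwards [hC, hD] with x h1 h2
  push_cast
  constructor
  · rw [mul_mul_mul_comm]
    exact mul_le_mul' h1.1 h2.1
  · rw [mul_mul_mul_comm]
    exact mul_le_mul' h1.2 h2.2

theorem enorm_le_of_norm_le {a b : ℝ} {C : ℝ} (h : ‖a‖ ≤ C * ‖b‖) :
    ‖a‖ₑ ≤ (C.toNNReal : ENNReal) * ‖b‖ₑ := by
  have h1 : ‖a‖₊ ≤ C.toNNReal * ‖b‖₊ := by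
    rw [← NNReal.coe_le_coe]
    push_cast
    exact h.trans (mul_le_mul_of_nonneg_right (Real.le_coe_toNNReal C) (norm_nonneg _))
  have h2 : ((‖a‖₊ : ℝ≥0) : ENNReal) ≤ ((C.toNNReal * ‖b‖₊ : ℝ≥0) : ENNReal) :=
    ENNReal.coe_le_coe.2 h1
  rw [ENNReal.coe_mul] at h2
  exact h2

theorem exists_enorm_bounds {α : Type*} {l : Filter α} {f g : α → ℝ} (h : f =Θ[l] g) :
    ∃ C : ℝ≥0, ∀ᶠ p in l, ‖f p‖ₑ ≤ C * ‖g p‖ₑ ∧ ‖g p‖ₑ ≤ C * ‖f p‖ₑ := by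
  obtain ⟨c, hc⟩ := h.1.bound
  obtain ⟨c', hc'⟩ := h.2.bound
  refine ⟨c.toNNReal + c'.toNNReal, ?_⟩
  filter_upwards [hc, hc'] with p h1 h2
  exact ⟨(enorm_le_of_norm_le h1).trans (by gcongr; simp),
    (enorm_le_of_norm_le h2).trans (by gcongr; simp)⟩

theorem ECmp.of_isTheta {f g : ℝ → ℝ} (h : f =Θ[𝓝[>] 0] g) :
    ECmp (fun x => ‖f x‖ₑ) fun x => ‖g x‖ₑ :=
  exists_enorm_bounds h

/-- The model functions `x ^ s |log x| ^ d`. -/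
noncomputable def powLog (s : ℝ) (d : ℕ) (x : ℝ) : ℝ := x ^ s * |log x| ^ d

/-- Functions which near `0+` are identically `0`, identically `∞`, or comparable to
`x ^ s |log x| ^ d` with `d ∈ {0, 1}`. -/
def Tame (J : ℝ → ENNReal) : Prop :=
  (∀ᶠ x in 𝓝[>] (0 : ℝ), J x = 0) ∨ (∀ᶠ x in 𝓝[>] (0 : ℝ), J x = ⊤) ∨
    ∃ (s : ℝ) (d : ℕ), d ≤ 1 ∧ ECmp J fun x => ‖powLog s d x‖ₑ

theorem Tame.congr {J J' : ℝ → ENNReal} (h : Tame J) (hJ : ECmp J' J) : Tame J' := by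
  rcases h with h | h | ⟨s, d, hd, h⟩
  · obtain ⟨C, hC⟩ := hJ
    left
    filter_upwards [h, hC] with x h1 h2
    simpa [h1] using h2.1
  · obtain ⟨C, hC⟩ := hJ
    right; left
    filter_upwards [h, hC] with x h1 h2
    rw [h1] at h2
    by_contra hne
    exact absurd (top_le_iff.1 h2.2) (ENNReal.mul_ne_top ENNReal.coe_ne_top hne)
  · exact Or.inr (Or.inr ⟨s, d, hd, hJ.trans h⟩)

theorem Tame.of_eventually_zero {J : ℝ → ENNReal} (h : ∀ᶠ x in 𝓝[>] (0 : ℝ), J x = 0) : Tame J :=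
  Or.inl h

theorem Tame.of_isTheta_powLog {f : ℝ → ℝ} {s : ℝ} {d : ℕ} (hd : d ≤ 1)
    (h : f =Θ[𝓝[>] 0] powLog s d) : Tame fun x => ‖f x‖ₑ :=
  Or.inr (Or.inr ⟨s, d, hd, ECmp.of_isTheta h⟩)

theorem Tame.of_isTheta_rpow {f : ℝ → ℝ} {s : ℝ}
    (h : f =Θ[𝓝[>] 0] fun x => x ^ s) : Tame fun x => ‖f x‖ₑ :=
  Tame.of_isTheta_powLog (s := s) zero_le_one (IsTheta.congr_fun h (fun _ => rfl) (by simp [powLog]))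

theorem powLog_isBigO_or {s s' : ℝ} {d d' : ℕ} (hd' : d' ≤ 1) (hs : s < s' ∨ s = s' ∧ d' ≤ d) :
    powLog s' d' =O[𝓝[>] 0] powLog s d := by
  have hlog : ∀ᶠ x in 𝓝[>] (0 : ℝ), 1 ≤ |log x| := by
    filter_upwards [eventually_lt_nhdsGT (Real.exp_pos (-1)), eventually_pos_nhdsGT] with x h1 h0
    have := (Real.log_lt_iff_lt_exp h0).2 h1
    rw [le_abs]; right; linarith
  rcases hs with hs | ⟨rfl, hdd⟩
  · have hr : 0 < s' - s := sub_pos.2 hs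
    refine IsBigO.of_bound (1 + 1 / (s' - s)) ?_
    filter_upwards [hlog, eventually_pos_nhdsGT, eventually_lt_nhdsGT one_pos] with x h1 h0 hx1
    have e1 : x ^ s' = x ^ s * x ^ (s' - s) := by rw [← rpow_add h0]; ring_nf
    have e2 : |x ^ (s' - s) * |log x| ^ d'| ≤ 1 + 1 / (s' - s) := by
      interval_cases d'
      · rw [pow_zero, mul_one, abs_of_pos (rpow_pos_of_pos h0 _)]
        have := rpow_le_one h0.le hx1.le hr.le
        have : 0 < 1 / (s' - s) := by positivity
        linarith
      · have := abs_log_mul_self_rpow_lt x (s' - s) h0 hx1.le hr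
        rw [pow_one, abs_mul, abs_abs, mul_comm, ← abs_mul]
        linarith
    have e3 : powLog s' d' x = x ^ s * (x ^ (s' - s) * |log x| ^ d') := by
      rw [powLog, e1]; ring
    rw [e3, powLog, norm_mul (x ^ s), norm_mul (x ^ s), mul_comm]
    change |x ^ (s' - s) * |log x| ^ d'| * ‖x ^ s‖ ≤ _
    refine mul_le_mul e2 ?_ (norm_nonneg _) (by positivity)
    refine le_mul_of_one_le_right (norm_nonneg _) ?_
    rw [norm_pow, Real.norm_eq_abs, abs_abs]
    exact one_le_pow₀ h1
  · refine IsBigO.of_bound 1 ?_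
    filter_upwards [hlog] with x h1
    rw [powLog, powLog, norm_mul, norm_mul, one_mul, norm_pow, norm_pow, Real.norm_eq_abs |log x|,
      abs_abs]
    gcongr

theorem ECmp.add_of_isBigO {f g : ℝ → ℝ} (h : g =O[𝓝[>] 0] f) :
    ECmp (fun x => ‖f x‖ₑ + ‖g x‖ₑ) fun x => ‖f x‖ₑ := by
  obtain ⟨c, hc⟩ := h.bound
  refine ⟨1 + c.toNNReal, ?_⟩
  filter_upwards [hc] with x hx
  push_cast
  rw [add_mul, one_mul]
  refine ⟨add_le_add le_rfl (enorm_le_of_norm_le hx), ?_⟩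
  rw [add_mul, one_mul]
  exact le_add_right le_self_add

theorem Tame.add {J K : ℝ → ENNReal} (hJ : Tame J) (hK : Tame K) :
    Tame fun x => J x + K x := by
  rcases hJ with h | h | ⟨s, d, hd, h⟩
  · exact hK.congr (.of_eventuallyEq (h.mono fun x hx => by simp [hx]))
  · exact Or.inr (Or.inl (h.mono fun x hx => by simp [hx]))
  rcases hK with h' | h' | ⟨s', d', hd', h'⟩
  · exact Tame.congr (J := J) (Or.inr (Or.inr ⟨s, d, hd, h⟩))
      (.of_eventuallyEq (h'.mono fun x hx => by simp [hx]))
  · exact Or.inr (Or.inl (h'.mono fun x hx => by simp [hx]))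
  have hadd := h.add h'
  by_cases hcase : s < s' ∨ s = s' ∧ d' ≤ d
  · exact Or.inr (Or.inr ⟨s, d, hd, hadd.trans (.add_of_isBigO (powLog_isBigO_or hd' hcase))⟩)
  · have hcase' : s' < s ∨ s' = s ∧ d ≤ d' := by
      push Not at hcase
      rcases hcase.1.lt_or_eq with h | h
      · exact Or.inl h
      · exact Or.inr ⟨h, (hcase.2 h.symm).le⟩
    refine Or.inr (Or.inr ⟨s', d', hd', hadd.trans ?_⟩)
    have := ECmp.add_of_isBigO (powLog_isBigO_or hd hcase')
    refine ECmp.trans (.of_eventuallyEq (Eventually.of_forall fun x => ?_)) this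
    exact add_comm _ _

theorem Tame.mul_rpow {J : ℝ → ENNReal} (hJ : Tame J) {f : ℝ → ℝ} {r : ℝ}
    (hf : f =Θ[𝓝[>] 0] fun x => x ^ r) : Tame fun x => ‖f x‖ₑ * J x := by
  have hf' := ECmp.of_isTheta hf
  rcases hJ with h | h | ⟨s, d, hd, h⟩
  · exact Or.inl (h.mono fun x hx => by simp [hx])
  · right; left
    filter_upwards [h, hf.eq_zero_iff, eventually_pos_nhdsGT] with x h1 h2 h0
    rw [h1]
    have : f x ≠ 0 := fun h => (rpow_pos_of_pos h0 r).ne' (h2.1 h)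
    exact ENNReal.mul_top (by simpa using this)
  · refine Or.inr (Or.inr ⟨r + s, d, hd, (hf'.mul h).trans (.of_eventuallyEq ?_)⟩)
    filter_upwards [eventually_pos_nhdsGT] with x h0
    rw [← enorm_mul, powLog, powLog, rpow_add h0, mul_assoc]

/-- Integrals of `|W|` over the vertical slices of the region between two graphs. -/
noncomputable def fiberInt (W : ℝ × ℝ → ℝ) (β β' : ℝ → ℝ) (x : ℝ) : ENNReal :=
  ∫⁻ y in Ioo (β x) (β' x), ‖W (x, y)‖ₑ

/-- The filter of points with small positive abscissa between two graphs. -/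
def betweenFilter (β β' : ℝ → ℝ) : Filter (ℝ × ℝ) :=
  comap Prod.fst (𝓝[>] 0) ⊓ 𝓟 {p | β p.1 < p.2 ∧ p.2 < β' p.1}

theorem eventually_betweenFilter {β β' : ℝ → ℝ} {P : ℝ × ℝ → Prop} :
    (∀ᶠ p in betweenFilter β β', P p) ↔
      ∀ᶠ x in 𝓝[>] (0 : ℝ), ∀ y ∈ Ioo (β x) (β' x), P (x, y) := by
  rw [betweenFilter, eventually_inf_principal, eventually_comap]
  refine eventually_congr (Eventually.of_forall fun x => ?_)
  constructor
  · intro h y hy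
    exact h (x, y) rfl hy
  · rintro h ⟨a, y⟩ rfl hy
    exact h y hy

theorem tendsto_fst_betweenFilter {β β' : ℝ → ℝ} :
    Tendsto (Prod.fst : ℝ × ℝ → ℝ) (betweenFilter β β') (𝓝[>] 0) :=
  tendsto_comap.mono_left inf_le_left

theorem eventually_mem_betweenFilter {β β' : ℝ → ℝ} :
    ∀ᶠ p in betweenFilter β β', β p.1 < p.2 ∧ p.2 < β' p.1 :=
  eventually_betweenFilter.2 (Eventually.of_forall fun _ _ h => h)

theorem fiberInt_congr {W W' : ℝ × ℝ → ℝ} {β β' : ℝ → ℝ}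
    (h : W =Θ[betweenFilter β β'] W') : ECmp (fiberInt W β β') (fiberInt W' β β') := by
  obtain ⟨C, hC⟩ := exists_enorm_bounds h
  refine ⟨C, (eventually_betweenFilter.1 hC).mono fun x hx => ⟨?_, ?_⟩⟩
  · rw [fiberInt, fiberInt, ← lintegral_const_mul' _ _ ENNReal.coe_ne_top]
    exact setLIntegral_mono' measurableSet_Ioo fun y hy => (hx y hy).1
  · rw [fiberInt, fiberInt, ← lintegral_const_mul' _ _ ENNReal.coe_ne_top]
    exact setLIntegral_mono' measurableSet_Ioo fun y hy => (hx y hy).2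

theorem fiberInt_const_mul (c : ℝ → ℝ) (W : ℝ × ℝ → ℝ) (β β' : ℝ → ℝ) (x : ℝ) :
    fiberInt (fun p => c p.1 * W p) β β' x = ‖c x‖ₑ * fiberInt W β β' x := by
  rw [fiberInt, fiberInt, ← lintegral_const_mul' _ _ enorm_ne_top]
  simp only [enorm_mul]

theorem fiberInt_of_le {W : ℝ × ℝ → ℝ} {β β' : ℝ → ℝ} {x : ℝ} (h : β' x ≤ β x) :
    fiberInt W β β' x = 0 := by
  rw [fiberInt, Ioo_eq_empty (not_lt.2 h)]
  simp

theorem setLIntegral_Ioo_split {F : ℝ → ENNReal} {a b c : ℝ} (hab : a < b) (hbc : b < c) :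
    ∫⁻ y in Ioo a c, F y = (∫⁻ y in Ioo a b, F y) + ∫⁻ y in Ioo b c, F y := by
  have hdisj : Disjoint (Ioc a b) (Ioo b c) :=
    disjoint_left.2 fun y h1 h2 => absurd h1.2 (not_le.2 h2.1)
  rw [← Ioc_union_Ioo_eq_Ioo hab.le hbc, lintegral_union measurableSet_Ioo hdisj,
    ← setLIntegral_congr (Ioo_ae_eq_Ioc (a := a) (b := b))]

theorem Tame.fiberInt_split {W : ℝ × ℝ → ℝ} {β γ β' : ℝ → ℝ}
    (h1 : ∀ᶠ x in 𝓝[>] (0 : ℝ), β x < γ x) (h2 : ∀ᶠ x in 𝓝[>] (0 : ℝ), γ x < β' x)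
    (hl : Tame (fiberInt W β γ)) (hr : Tame (fiberInt W γ β')) : Tame (fiberInt W β β') := by
  refine (hl.add hr).congr (.of_eventuallyEq ?_)
  filter_upwards [h1, h2] with x h1 h2
  exact setLIntegral_Ioo_split h1 h2

theorem setLIntegral_rpow {a b e : ℝ} (ha : 0 < a) (hab : a ≤ b) (he : e ≠ -1) :
    ∫⁻ u in Ioo a b, ‖u ^ e‖ₑ = ‖(b ^ (e + 1) - a ^ (e + 1)) / (e + 1)‖ₑ := by
  have h0 : (0 : ℝ) ∉ uIcc a b := by
    rw [uIcc_of_le hab]; exact fun h => absurd h.1 (not_le.2 ha)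
  have hint : IntegrableOn (fun u : ℝ => u ^ e) (Ioo a b) :=
    ((intervalIntegrable_iff_integrableOn_Ioo_of_le hab).1
      (intervalIntegral.intervalIntegrable_rpow (Or.inr h0)))
  have hnn : ∀ u ∈ Ioo a b, 0 ≤ u ^ e := fun u hu => rpow_nonneg (ha.trans hu.1).le e
  rw [← integral_rpow (Or.inr ⟨he, h0⟩), intervalIntegral.integral_of_le hab,
    integral_Ioc_eq_integral_Ioo]
  have hpos : 0 ≤ ∫ u in Ioo a b, u ^ e := setIntegral_nonneg measurableSet_Ioo hnn
  rw [Real.enorm_of_nonneg hpos, ofReal_integral_eq_lintegral_ofReal hint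
    ((ae_restrict_iff' measurableSet_Ioo).2 (ae_of_all _ hnn))]
  exact setLIntegral_congr_fun measurableSet_Ioo fun u hu => Real.enorm_of_nonneg (hnn u hu)

theorem setLIntegral_rpow_neg_one {a b : ℝ} (ha : 0 < a) (hab : a ≤ b) :
    ∫⁻ u in Ioo a b, ‖u ^ (-1 : ℝ)‖ₑ = ‖log (b / a)‖ₑ := by
  have hb : 0 < b := ha.trans_le hab
  have h0 : (0 : ℝ) ∉ uIcc a b := by
    rw [uIcc_of_le hab]; exact fun h => absurd h.1 (not_le.2 ha)
  have hint : IntegrableOn (fun u : ℝ => u ^ (-1 : ℝ)) (Ioo a b) :=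
    ((intervalIntegrable_iff_integrableOn_Ioo_of_le hab).1
      (intervalIntegral.intervalIntegrable_rpow (Or.inr h0)))
  have hnn : ∀ u ∈ Ioo a b, 0 ≤ u ^ (-1 : ℝ) := fun u hu => rpow_nonneg (ha.trans hu.1).le _
  have hval : ∫ u in Ioo a b, u ^ (-1 : ℝ) = log (b / a) := by
    rw [← integral_inv_of_pos ha hb, intervalIntegral.integral_of_le hab,
      integral_Ioc_eq_integral_Ioo]
    exact setIntegral_congr_fun measurableSet_Ioo fun u hu => rpow_neg_one u
  have hpos : 0 ≤ ∫ u in Ioo a b, u ^ (-1 : ℝ) := setIntegral_nonneg measurableSet_Ioo hnn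
  rw [← hval, Real.enorm_of_nonneg hpos, ofReal_integral_eq_lintegral_ofReal hint
    ((ae_restrict_iff' measurableSet_Ioo).2 (ae_of_all _ hnn))]
  exact setLIntegral_congr_fun measurableSet_Ioo fun u hu => Real.enorm_of_nonneg (hnn u hu)

theorem setLIntegral_rpow_zero {b e : ℝ} (hb : 0 < b) (he : -1 < e) :
    ∫⁻ u in Ioo 0 b, ‖u ^ e‖ₑ = ‖b ^ (e + 1) / (e + 1)‖ₑ := by
  have hint : IntegrableOn (fun u : ℝ => u ^ e) (Ioo 0 b) :=
    (intervalIntegral.integrableOn_Ioo_rpow_iff hb).2 he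
  have hnn : ∀ u ∈ Ioo 0 b, 0 ≤ u ^ e := fun u hu => rpow_nonneg hu.1.le e
  have hval := integral_rpow (a := 0) (b := b) (Or.inl he)
  rw [zero_rpow (by linarith), sub_zero, intervalIntegral.integral_of_le hb.le,
    integral_Ioc_eq_integral_Ioo] at hval
  have hpos : 0 ≤ ∫ u in Ioo 0 b, u ^ e := setIntegral_nonneg measurableSet_Ioo hnn
  rw [← hval, Real.enorm_of_nonneg hpos, ofReal_integral_eq_lintegral_ofReal hint
    ((ae_restrict_iff' measurableSet_Ioo).2 (ae_of_all _ hnn))]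
  exact setLIntegral_congr_fun measurableSet_Ioo fun u hu => Real.enorm_of_nonneg (hnn u hu)

theorem setLIntegral_rpow_zero_eq_top {b e : ℝ} (hb : 0 < b) (he : e ≤ -1) :
    ∫⁻ u in Ioo 0 b, ‖u ^ e‖ₑ = ⊤ := by
  by_contra hne
  have hint : IntegrableOn (fun u : ℝ => u ^ e) (Ioo 0 b) :=
    ⟨(Measurable.aestronglyMeasurable (by fun_prop)), lt_top_iff_ne_top.2 hne⟩
  exact absurd ((intervalIntegral.integrableOn_Ioo_rpow_iff hb).1 hint) (not_lt.2 he)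

theorem IsTheta.rpow_rpow {f : ℝ → ℝ} {q : ℝ} (hf : ∀ᶠ x in 𝓝[>] (0 : ℝ), 0 ≤ f x)
    (h : f =Θ[𝓝[>] 0] fun x => x ^ q) (e : ℝ) :
    (fun x => f x ^ e) =Θ[𝓝[>] 0] fun x => x ^ (q * e) := by
  have h1 := IsTheta.rpow (r := e) hf
    (eventually_pos_nhdsGT.mono fun x hx => rpow_nonneg (le_of_lt hx) q) h
  refine h1.trans_eventuallyEq ?_
  filter_upwards [eventually_pos_nhdsGT] with x hx
  rw [rpow_mul (le_of_lt hx)]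

/-- The logarithm of a germ `≥ 2` comparable to a power is comparable to `1` or to `log x`. -/
theorem exists_isTheta_log {f : ℝ → ℝ} {r : ℝ} (h2 : ∀ᶠ x in 𝓝[>] (0 : ℝ), 2 ≤ f x)
    (h : f =Θ[𝓝[>] 0] fun x => x ^ r) :
    ∃ d : ℕ, d ≤ 1 ∧ (fun x => log (f x)) =Θ[𝓝[>] 0] powLog 0 d := by
  obtain ⟨C₀, hC₀⟩ := h.1.bound
  obtain ⟨c₀, hc₀⟩ := h.2.bound
  have hbd : ∀ᶠ x in 𝓝[>] (0 : ℝ), f x ≤ max C₀ 1 * x ^ r ∧ x ^ r ≤ max c₀ 1 * f x := by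
    filter_upwards [hC₀, hc₀, h2, eventually_pos_nhdsGT] with x h1 h3 h2 h0
    have hp := rpow_pos_of_pos h0 r
    rw [Real.norm_eq_abs, Real.norm_eq_abs, abs_of_pos hp, abs_of_pos (by linarith)] at h1 h3
    constructor
    · exact h1.trans (by gcongr; exact le_max_left _ _)
    · exact h3.trans (by gcongr; exact le_max_left _ _)
  have hlog2 : 0 < log 2 := log_pos one_lt_two
  set C := max C₀ 1
  set c := max c₀ 1
  have hC : 1 ≤ C := le_max_right _ _
  have hc : 1 ≤ c := le_max_right _ _
  have hlogs : ∀ᶠ x in 𝓝[>] (0 : ℝ), log 2 ≤ log (f x) ∧ log (f x) ≤ log C + r * log x ∧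
      r * log x ≤ log c + log (f x) := by
    filter_upwards [hbd, h2, eventually_pos_nhdsGT] with x h1 h2 h0
    have hp := rpow_pos_of_pos h0 r
    refine ⟨log_le_log two_pos h2, ?_, ?_⟩
    · rw [← log_rpow h0, ← log_mul (by positivity) hp.ne']
      exact log_le_log (by linarith) h1.1
    · rw [← log_rpow h0, ← log_mul (by positivity) (by positivity)]
      exact log_le_log hp h1.2
  have hloginf : Tendsto log (𝓝[>] 0) atBot := tendsto_log_nhdsGT_zero
  rcases lt_trichotomy r 0 with hr | rfl | hr
  · refine ⟨1, le_rfl, IsTheta.of_bounds (c := -r / 2) (C := 1 - r) (by linarith) ?_⟩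
    filter_upwards [hlogs, hloginf.eventually_le_atBot (-(log C)),
      hloginf.eventually_le_atBot (2 * log c / r), hloginf.eventually_le_atBot 0] with x h1 h3 h4 h5
    have e1 : |powLog 0 1 x| = -log x := by
      rw [powLog, rpow_zero, one_mul, pow_one, abs_abs, abs_of_nonpos h5]
    rw [e1, abs_of_nonneg (by linarith [h1.1])]
    have h4' : 2 * log c ≤ r * log x := by
      rw [le_div_iff_of_neg hr] at h4
      linarith
    constructor
    · linarith [h1.2.2]
    · linarith [h1.2.1]
  · refine ⟨0, zero_le_one, IsTheta.of_bounds (c := log 2) (C := log C) hlog2 ?_⟩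
    filter_upwards [hlogs] with x h1
    simp only [powLog, rpow_zero, pow_zero, mul_one, abs_one, zero_mul, add_zero] at h1 ⊢
    rw [abs_of_nonneg (by linarith [h1.1])]
    exact ⟨h1.1, h1.2.1⟩
  · exfalso
    obtain ⟨x, h1, h3⟩ := (hlogs.and (hloginf.eventually_le_atBot (-(log C) / r))).exists
    rw [le_div_iff₀ hr] at h3
    linarith [h1.1, h1.2.1]

/-- The base case: slice integrals of a pure power of the vertical variable. -/
theorem tame_fiberInt_rpow (e : ℝ) {A B : ℝ → ℝ} (hA : IsPuiseux A) (hB : IsPuiseux B)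
    (hA0 : ∀ᶠ x in 𝓝[>] (0 : ℝ), 0 ≤ A x) (hAB : ∀ᶠ x in 𝓝[>] (0 : ℝ), A x < B x) :
    Tame (fiberInt (fun p => p.2 ^ e) A B) := by
  have hBpos : ∀ᶠ x in 𝓝[>] (0 : ℝ), 0 < B x := by
    filter_upwards [hA0, hAB] with x h1 h2 using h1.trans_lt h2
  obtain ⟨qB, hqB⟩ := hB.isTheta_rpow hBpos
  have hBe := IsTheta.rpow_rpow (hBpos.mono fun _ h => h.le) hqB (e + 1)
  rcases hA.trichotomy with hAz | hApos | hAneg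
  · rcases lt_or_ge (-1) e with he | he
    · refine (Tame.of_isTheta_rpow (f := fun x => B x ^ (e + 1) / (e + 1))
        (s := qB * (e + 1)) ?_).congr (.of_eventuallyEq ?_)
      · have : (e + 1)⁻¹ ≠ 0 := inv_ne_zero (by linarith)
        simp only [div_eq_inv_mul]
        exact (isTheta_const_mul_left this).2 hBe
      · filter_upwards [hAz, hBpos] with x h1 h2
        rw [fiberInt, h1]
        exact setLIntegral_rpow_zero h2 he
    · right; left
      filter_upwards [hAz, hBpos] with x h1 h2
      rw [fiberInt, h1]
      exact setLIntegral_rpow_zero_eq_top h2 he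
  · obtain ⟨qA, hqA⟩ := hA.isTheta_rpow hApos
    have hAe := IsTheta.rpow_rpow hA0 hqA (e + 1)
    rcases hB.lt_or_le ((IsPuiseux.const 2).mul hA) with hsmall | hlarge
    · have hdiff : IsPuiseux fun x => B x - A x := hB.sub hA
      have hdpos : ∀ᶠ x in 𝓝[>] (0 : ℝ), 0 < B x - A x := hAB.mono fun x h => by linarith
      obtain ⟨qd, hqd⟩ := hdiff.isTheta_rpow hdpos
      have hAe' := IsTheta.rpow_rpow hA0 hqA e
      have hth : (fun p : ℝ × ℝ => p.2 ^ e) =Θ[betweenFilter A B] fun p => A p.1 ^ e * 1 := by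
        simp only [mul_one]
        have hpos2 : ∀ᶠ p in betweenFilter A B, 0 < A p.1 :=
          tendsto_fst_betweenFilter.eventually hApos
        refine IsTheta.rpow ?_ (hpos2.mono fun _ h => h.le) ?_
        · filter_upwards [hpos2, eventually_mem_betweenFilter] with p h1 h2
          exact (h1.trans h2.1).le
        · refine IsTheta.of_bounds (c := 1) (C := 2) one_pos ?_
          filter_upwards [hpos2, eventually_mem_betweenFilter,
            tendsto_fst_betweenFilter.eventually hsmall] with p h1 h2 h3
          rw [abs_of_pos h1, abs_of_pos (h1.trans h2.1)]
          constructor <;> linarith [h2.1, h2.2]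
      refine Tame.congr ?_ (fiberInt_congr hth)
      have hone : Tame (fiberInt (fun _ => 1) A B) := by
        refine (Tame.of_isTheta_rpow hqd).congr (.of_eventuallyEq ?_)
        filter_upwards [hdpos] with x hx
        simp [fiberInt, Real.enorm_of_nonneg hx.le]
      refine (hone.mul_rpow hAe').congr (.of_eventuallyEq (Eventually.of_forall fun x => ?_))
      exact fiberInt_const_mul (fun x => A x ^ e) (fun _ => 1) A B x
    · rcases eq_or_ne e (-1) with rfl | hne
      · obtain ⟨d, hd, hth⟩ := exists_isTheta_log (f := fun x => B x / A x) (r := qB - qA) (by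
            filter_upwards [hlarge, hApos] with x h1 h2
            rwa [le_div_iff₀ h2]) (by
            refine (hqB.div hqA).trans_eventuallyEq ?_
            filter_upwards [eventually_pos_nhdsGT] with x hx
            rw [rpow_sub hx])
        refine (Tame.of_isTheta_powLog hd hth).congr (.of_eventuallyEq ?_)
        filter_upwards [hApos, hAB] with x h1 h2
        exact setLIntegral_rpow_neg_one h1 h2.le
      · have hval : fiberInt (fun p => p.2 ^ e) A B =ᶠ[𝓝[>] 0]
            fun x => ‖(B x ^ (e + 1) - A x ^ (e + 1)) / (e + 1)‖ₑ := by
          filter_upwards [hApos, hAB] with x h1 h2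
          exact setLIntegral_rpow h1 h2.le hne
        refine Tame.congr ?_ (.of_eventuallyEq hval)
        have he1 : (e + 1)⁻¹ ≠ 0 := inv_ne_zero fun h => hne (by linarith)
        rcases lt_or_gt_of_ne hne with he | he
        · refine Tame.of_isTheta_rpow (s := qA * (e + 1)) (IsTheta.trans ?_ hAe)
          simp only [div_eq_inv_mul]
          refine (isTheta_const_mul_left he1).2 ?_
          have hk : (2 : ℝ) ^ (e + 1) < 1 := rpow_lt_one_of_one_lt_of_neg one_lt_two (by linarith)
          refine IsTheta.of_bounds (c := 1 - 2 ^ (e + 1)) (C := 1) (by linarith) ?_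
          filter_upwards [hlarge, hApos] with x h1 h2
          have e1 : B x ^ (e + 1) ≤ 2 ^ (e + 1) * A x ^ (e + 1) := by
            rw [← mul_rpow two_pos.le h2.le]
            exact rpow_le_rpow_of_nonpos (by linarith) h1 (by linarith)
          have e2 : 0 < A x ^ (e + 1) := rpow_pos_of_pos h2 _
          have e3 : 0 < B x ^ (e + 1) := rpow_pos_of_pos (by linarith) _
          rw [abs_of_pos e2, abs_sub_comm, abs_of_nonneg (by nlinarith)]
          constructor <;> nlinarith
        · refine Tame.of_isTheta_rpow (s := qB * (e + 1)) (IsTheta.trans ?_ hBe)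
          simp only [div_eq_inv_mul]
          refine (isTheta_const_mul_left he1).2 ?_
          have hk : (1 / 2 : ℝ) ^ (e + 1) < 1 :=
            rpow_lt_one (by norm_num) (by norm_num) (by linarith)
          refine IsTheta.of_bounds (c := 1 - (1 / 2) ^ (e + 1)) (C := 1) (by linarith) ?_
          filter_upwards [hlarge, hApos] with x h1 h2
          have hBx : 0 < B x := by linarith
          have e1 : A x ^ (e + 1) ≤ (1 / 2) ^ (e + 1) * B x ^ (e + 1) := by
            rw [← mul_rpow (by norm_num) hBx.le]
            exact rpow_le_rpow h2.le (by linarith) (by linarith)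
          have e2 : 0 < A x ^ (e + 1) := rpow_pos_of_pos h2 _
          have e3 : 0 < B x ^ (e + 1) := rpow_pos_of_pos hBx _
          rw [abs_of_pos e3, abs_of_nonneg (by nlinarith)]
          constructor <;> nlinarith
  · obtain ⟨x, h1, h2⟩ := (hA0.and hAneg).exists
    exact absurd h1 (not_le.2 h2)

/-- Slice integrals of `u ^ e ∏ (u + c(x)) ^ e'` with nonnegative Puiseux germs `c`. -/
theorem tame_fiberInt_shifted (S : Multiset ((ℝ → ℝ) × ℝ))
    (hS : ∀ ρ ∈ S, IsPuiseux ρ.1 ∧ ∀ᶠ x in 𝓝[>] (0 : ℝ), 0 ≤ ρ.1 x) :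
    ∀ (e : ℝ) {A B : ℝ → ℝ}, IsPuiseux A → IsPuiseux B → (∀ᶠ x in 𝓝[>] (0 : ℝ), 0 ≤ A x) →
      (∀ᶠ x in 𝓝[>] (0 : ℝ), A x < B x) →
      Tame (fiberInt (fun p => p.2 ^ e * (S.map fun ρ => (p.2 + ρ.1 p.1) ^ ρ.2).prod) A B) := by
  induction S using Multiset.induction_on with
  | empty =>
    intro e A B hA hB hA0 hAB
    simpa using tame_fiberInt_rpow e hA hB hA0 hAB
  | cons ρ S ih =>
    have ih' := ih fun ρ' h => hS ρ' (Multiset.mem_cons_of_mem h)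
    obtain ⟨hc, hc0⟩ := hS ρ (Multiset.mem_cons_self _ _)
    have hlarge : ∀ (e : ℝ) {A B : ℝ → ℝ}, IsPuiseux A → IsPuiseux B →
        (∀ᶠ x in 𝓝[>] (0 : ℝ), 0 ≤ A x) → (∀ᶠ x in 𝓝[>] (0 : ℝ), A x < B x) →
        (∀ᶠ x in 𝓝[>] (0 : ℝ), B x ≤ ρ.1 x) →
        Tame (fiberInt (fun p =>
          p.2 ^ e * ((ρ ::ₘ S).map fun ρ => (p.2 + ρ.1 p.1) ^ ρ.2).prod) A B) := by
      intro e A B hA hB hA0 hAB hBc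
      have hcpos : ∀ᶠ x in 𝓝[>] (0 : ℝ), 0 < ρ.1 x := by
        filter_upwards [hA0, hAB, hBc] with x h1 h2 h3 using (h1.trans_lt h2).trans_le h3
      obtain ⟨q, hq⟩ := hc.isTheta_rpow hcpos
      have hth : (fun p : ℝ × ℝ => (p.2 + ρ.1 p.1) ^ ρ.2) =Θ[betweenFilter A B]
          fun p => ρ.1 p.1 ^ ρ.2 := by
        have hev : ∀ᶠ p in betweenFilter A B, 0 < ρ.1 p.1 ∧ 0 < p.2 ∧ p.2 ≤ ρ.1 p.1 := by
          filter_upwards [tendsto_fst_betweenFilter.eventually hcpos, eventually_mem_betweenFilter,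
            tendsto_fst_betweenFilter.eventually hA0,
            tendsto_fst_betweenFilter.eventually hBc] with p h1 h2 h3 h4
          exact ⟨h1, h3.trans_lt h2.1, h2.2.le.trans h4⟩
        refine IsTheta.rpow (hev.mono fun p h => (add_pos h.2.1 h.1).le)
          (hev.mono fun p h => h.1.le) (IsTheta.of_bounds (c := 1) (C := 2) one_pos ?_)
        filter_upwards [hev] with p h
        rw [abs_of_pos h.1, abs_of_pos (add_pos h.2.1 h.1)]
        constructor <;> linarith [h.2.1, h.2.2]
      refine (((ih' e hA hB hA0 hAB).mul_rpow (IsTheta.rpow_rpow hc0 hq ρ.2)).congr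
        (.of_eventuallyEq (Eventually.of_forall fun x =>
          fiberInt_const_mul (fun x => ρ.1 x ^ ρ.2) _ A B x))).congr (fiberInt_congr ?_)
      refine IsTheta.congr_fun (hth.mul (isTheta_refl (fun p : ℝ × ℝ =>
        p.2 ^ e * (S.map fun ρ => (p.2 + ρ.1 p.1) ^ ρ.2).prod) _)) ?_ (fun _ => rfl)
      intro p
      rw [Multiset.map_cons, Multiset.prod_cons]
      ring
    have hsmall : ∀ (e : ℝ) {A B : ℝ → ℝ}, IsPuiseux A → IsPuiseux B →
        (∀ᶠ x in 𝓝[>] (0 : ℝ), 0 ≤ A x) → (∀ᶠ x in 𝓝[>] (0 : ℝ), A x < B x) →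
        (∀ᶠ x in 𝓝[>] (0 : ℝ), ρ.1 x ≤ A x) →
        Tame (fiberInt (fun p =>
          p.2 ^ e * ((ρ ::ₘ S).map fun ρ => (p.2 + ρ.1 p.1) ^ ρ.2).prod) A B) := by
      intro e A B hA hB hA0 hAB hcA
      have hev : ∀ᶠ p in betweenFilter A B, 0 ≤ ρ.1 p.1 ∧ 0 < p.2 ∧ ρ.1 p.1 ≤ p.2 := by
        filter_upwards [tendsto_fst_betweenFilter.eventually hc0, eventually_mem_betweenFilter,
          tendsto_fst_betweenFilter.eventually hA0,
          tendsto_fst_betweenFilter.eventually hcA] with p h1 h2 h3 h4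
        exact ⟨h1, h3.trans_lt h2.1, h4.trans h2.1.le⟩
      have hth : (fun p : ℝ × ℝ => (p.2 + ρ.1 p.1) ^ ρ.2) =Θ[betweenFilter A B]
          fun p => p.2 ^ ρ.2 := by
        refine IsTheta.rpow (hev.mono fun p h => (add_pos_of_pos_of_nonneg h.2.1 h.1).le)
          (hev.mono fun p h => h.2.1.le) (IsTheta.of_bounds (c := 1) (C := 2) one_pos ?_)
        filter_upwards [hev] with p h
        rw [abs_of_pos h.2.1, abs_of_pos (add_pos_of_pos_of_nonneg h.2.1 h.1)]
        constructor <;> linarith [h.1, h.2.2]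
      refine (ih' (e + ρ.2) hA hB hA0 hAB).congr (fiberInt_congr ?_)
      refine IsTheta.congr_fun (IsTheta.trans_eventuallyEq (hth.mul (isTheta_refl
        (fun p : ℝ × ℝ => p.2 ^ e * (S.map fun ρ => (p.2 + ρ.1 p.1) ^ ρ.2).prod) _)) ?_)
        ?_ (fun _ => rfl)
      · filter_upwards [hev] with p h
        rw [rpow_add h.2.1]
        ring
      · intro p
        rw [Multiset.map_cons, Multiset.prod_cons]
        ring
    intro e A B hA hB hA0 hAB
    rcases hc.lt_or_le hB with h1 | h1
    · rcases hA.lt_or_le hc with h2 | h2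
      · exact Tame.fiberInt_split h2 h1
          (hlarge e hA hc hA0 h2 (Eventually.of_forall fun _ => le_rfl))
          (hsmall e hc hB hc0 h1 (Eventually.of_forall fun _ => le_rfl))
      · exact hsmall e hA hB hA0 hAB h2
    · exact hlarge e hA hB hA0 hAB h1

/-- A product of real powers of elementary factors. -/
noncomputable def powProd (T : Multiset (((ℝ → ℝ) × (ℝ → ℝ)) × ℝ)) (p : ℝ × ℝ) : ℝ :=
  (T.map fun τ => rootFactor τ.1 p ^ τ.2).prod

theorem powProd_add (T T' : Multiset (((ℝ → ℝ) × (ℝ → ℝ)) × ℝ)) (p : ℝ × ℝ) :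
    powProd (T + T') p = powProd T p * powProd T' p := by
  simp [powProd]

theorem powProd_cons (τ : ((ℝ → ℝ) × (ℝ → ℝ)) × ℝ) (T : Multiset (((ℝ → ℝ) × (ℝ → ℝ)) × ℝ))
    (p : ℝ × ℝ) : powProd (τ ::ₘ T) p = rootFactor τ.1 p ^ τ.2 * powProd T p := by
  simp [powProd]

/-- The germ `α` stays outside the open region between the graphs of two germs. -/
def Outside (β β' α : ℝ → ℝ) : Prop :=
  (∀ᶠ x in 𝓝[>] (0 : ℝ), α x ≤ β x) ∨ ∀ᶠ x in 𝓝[>] (0 : ℝ), β' x ≤ α x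

theorem setLIntegral_Ioo_sub_left (F : ℝ → ENNReal) (a b : ℝ) :
    ∫⁻ y in Ioo a b, F (y - a) = ∫⁻ u in Ioo 0 (b - a), F u := by
  have h := (measurePreserving_sub_right volume a).setLIntegral_comp_preimage_emb
    (measurableEmbedding_subRight a) F (Ioo 0 (b - a))
  rw [← h]
  congr 2
  ext y
  simp

theorem setLIntegral_Ioo_neg (F : ℝ → ENNReal) (a b : ℝ) :
    ∫⁻ y in Ioo a b, F y = ∫⁻ y in Ioo (-b) (-a), F (-y) := by
  have h := (Measure.measurePreserving_neg (volume : Measure ℝ)).setLIntegral_comp_preimage_emb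
    (MeasurableEquiv.neg ℝ).measurableEmbedding F (Ioo a b)
  rw [← h]
  congr 2
  ext y
  simp [and_comm]

/-- On the lower half of a region avoided by all `α`s, a product of elementary factors is
comparable to a product of powers of `y - β(x) + c(x)`. -/
theorem exists_isTheta_lower_half {β β' : ℝ → ℝ} (hβ : IsPuiseux β)
    (hlt : ∀ᶠ x in 𝓝[>] (0 : ℝ), β x < β' x) (T : Multiset (((ℝ → ℝ) × (ℝ → ℝ)) × ℝ))
    (hT : ∀ τ ∈ T, IsRootDatum τ.1) (hout : ∀ τ ∈ T, Outside β β' τ.1.1) :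
    ∃ (s : ℝ) (S : Multiset ((ℝ → ℝ) × ℝ)),
      (∀ ρ ∈ S, IsPuiseux ρ.1 ∧ ∀ᶠ x in 𝓝[>] (0 : ℝ), 0 ≤ ρ.1 x) ∧
      powProd T =Θ[betweenFilter β fun x => (β x + β' x) / 2]
        fun p => p.1 ^ s * (S.map fun ρ => (p.2 - β p.1 + ρ.1 p.1) ^ ρ.2).prod := by
  induction T using Multiset.induction_on with
  | empty =>
    exact ⟨0, 0, by simp, IsTheta.congr_fun (isTheta_refl (fun _ => (1 : ℝ)) _)
      (by simp [powProd]) (by simp)⟩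
  | cons τ T ih =>
    obtain ⟨s, S, hS, hth⟩ := ih (fun τ' h => hT τ' (Multiset.mem_cons_of_mem h))
      (fun τ' h => hout τ' (Multiset.mem_cons_of_mem h))
    obtain ⟨hα, hb, hb0⟩ := hT τ (Multiset.mem_cons_self _ _)
    have hmem := eventually_mem_betweenFilter (β := β) (β' := fun x => (β x + β' x) / 2)
    have hfst := tendsto_fst_betweenFilter (β := β) (β' := fun x => (β x + β' x) / 2)
    rcases hout τ (Multiset.mem_cons_self _ _) with h | h
    · refine ⟨s, (fun x => β x - τ.1.1 x + τ.1.2 x, τ.2) ::ₘ S, ?_, ?_⟩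
      · intro ρ hρ
        rcases Multiset.mem_cons.1 hρ with rfl | hρ
        · refine ⟨(hβ.sub hα).add hb, ?_⟩
          filter_upwards [h, hb0] with x h1 h2
          linarith
        · exact hS ρ hρ
      · have hf : (fun p => rootFactor τ.1 p ^ τ.2) =ᶠ[betweenFilter β fun x => (β x + β' x) / 2]
            fun p => (p.2 - β p.1 + (β p.1 - τ.1.1 p.1 + τ.1.2 p.1)) ^ τ.2 := by
          filter_upwards [hmem, hfst.eventually h] with p h1 h2
          rw [rootFactor, abs_of_nonneg (by linarith [h1.1])]
          ring_nf
        refine IsTheta.congr_fun (hf.isTheta.mul hth) (powProd_cons τ T) ?_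
        intro p
        rw [Multiset.map_cons, Multiset.prod_cons]
        ring
    · have hcpos : ∀ᶠ x in 𝓝[>] (0 : ℝ), 0 < τ.1.1 x - β x + τ.1.2 x := by
        filter_upwards [h, hb0, hlt] with x h1 h2 h3
        linarith
      obtain ⟨q, hq⟩ := ((hα.sub hβ).add hb).isTheta_rpow hcpos
      refine ⟨q * τ.2 + s, S, hS, ?_⟩
      have hf : rootFactor τ.1 =Θ[betweenFilter β fun x => (β x + β' x) / 2]
          fun p => τ.1.1 p.1 - β p.1 + τ.1.2 p.1 := by
        refine IsTheta.of_bounds (c := 1 / 2) (C := 1) (by norm_num) ?_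
        filter_upwards [hmem, hfst.eventually h, hfst.eventually hb0, hfst.eventually hlt]
          with p h1 h2 h3 h4
        rw [rootFactor, abs_of_nonneg (a := τ.1.1 p.1 - β p.1 + τ.1.2 p.1) (by linarith),
          abs_of_nonpos (a := p.2 - τ.1.1 p.1) (by linarith [h1.2]),
          abs_of_nonneg (by linarith [h1.2])]
        constructor <;> linarith [h1.1, h1.2]
      have hf' : (fun p => rootFactor τ.1 p ^ τ.2)
          =Θ[betweenFilter β fun x => (β x + β' x) / 2] fun p => p.1 ^ (q * τ.2) := by
        refine IsTheta.trans (IsTheta.rpow ?_ ?_ hf) (IsTheta.comp_map (IsTheta.rpow_rpow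
          (hcpos.mono fun _ h => h.le) hq τ.2) hfst)
        · filter_upwards [hfst.eventually hb0] with p h1
          exact add_nonneg (abs_nonneg _) h1
        · exact (hfst.eventually hcpos).mono fun _ h => h.le
      refine IsTheta.congr_fun (IsTheta.trans_eventuallyEq (hf'.mul hth) ?_) (powProd_cons τ T)
        (fun _ => rfl)
      filter_upwards [hfst.eventually eventually_pos_nhdsGT] with p hp
      rw [rpow_add hp]
      ring

theorem tame_fiberInt_lower_half {β β' : ℝ → ℝ} (hβ : IsPuiseux β) (hβ' : IsPuiseux β')
    (hlt : ∀ᶠ x in 𝓝[>] (0 : ℝ), β x < β' x) (T : Multiset (((ℝ → ℝ) × (ℝ → ℝ)) × ℝ))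
    (hT : ∀ τ ∈ T, IsRootDatum τ.1) (hout : ∀ τ ∈ T, Outside β β' τ.1.1) :
    Tame (fiberInt (powProd T) β fun x => (β x + β' x) / 2) := by
  obtain ⟨s, S, hS, hth⟩ := exists_isTheta_lower_half hβ hlt T hT hout
  refine Tame.congr ?_ (fiberInt_congr hth)
  have hw : IsPuiseux fun x => (β' x - β x) * (1 / 2) := (hβ'.sub hβ).mul (IsPuiseux.const _)
  have h1 := tame_fiberInt_shifted S hS 0 (IsPuiseux.const 0) hw
    (Eventually.of_forall fun _ => le_rfl) (hlt.mono fun x h => by linarith)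
  refine (h1.mul_rpow (isTheta_refl (fun x : ℝ => x ^ s) _)).congr
    (.of_eventuallyEq (Eventually.of_forall fun x => ?_))
  rw [fiberInt_const_mul (fun x => x ^ s)]
  congr 1
  have h2 := setLIntegral_Ioo_sub_left
    (fun u => ‖(S.map fun ρ => (u + ρ.1 x) ^ ρ.2).prod‖ₑ) (β x) ((β x + β' x) / 2)
  have h3 : (β x + β' x) / 2 - β x = (β' x - β x) * (1 / 2) := by ring
  rw [h3] at h2
  simpa [fiberInt] using h2

theorem fiberInt_powProd_neg (T : Multiset (((ℝ → ℝ) × (ℝ → ℝ)) × ℝ)) (β β' : ℝ → ℝ) (x : ℝ) :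
    fiberInt (powProd T) β β' x =
      fiberInt (powProd (T.map fun τ => ((fun x => -τ.1.1 x, τ.1.2), τ.2)))
        (fun x => -β' x) (fun x => -β x) x := by
  rw [fiberInt, setLIntegral_Ioo_neg, fiberInt]
  congr 1
  ext y
  simp only [powProd, Multiset.map_map, Function.comp, rootFactor]
  congr 3
  funext τ
  rw [← abs_neg (-y - τ.1.1 x)]
  congr 3
  ring

/-- Slice integrals of products of real powers of elementary factors are tame. -/
theorem tame_fiberInt_powProd (T : Multiset (((ℝ → ℝ) × (ℝ → ℝ)) × ℝ))
    (hT : ∀ τ ∈ T, IsRootDatum τ.1) {β β' : ℝ → ℝ} (hβ : IsPuiseux β) (hβ' : IsPuiseux β') :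
    Tame (fiberInt (powProd T) β β') := by
  suffices h : ∀ (T' : Multiset (((ℝ → ℝ) × (ℝ → ℝ)) × ℝ)), (∀ τ ∈ T', IsRootDatum τ.1) →
      ∀ {β β' : ℝ → ℝ}, IsPuiseux β → IsPuiseux β' → (∀ τ ∈ T', Outside β β' τ.1.1) →
      Tame (fiberInt (powProd (T + T')) β β') by
    simpa using h 0 (by simp) hβ hβ' (by simp)
  clear hβ hβ'
  induction T using Multiset.induction_on with
  | empty =>
    intro T' hT' β β' hβ hβ' hout
    rw [zero_add]
    rcases hβ.lt_or_le hβ' with hlt | hle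
    · refine Tame.fiberInt_split (γ := fun x => (β x + β' x) / 2)
        (hlt.mono fun x h => by linarith) (hlt.mono fun x h => by linarith)
        (tame_fiberInt_lower_half hβ hβ' hlt T' hT' hout) ?_
      have h1 := tame_fiberInt_lower_half hβ'.neg hβ.neg (hlt.mono fun x h => by linarith)
        (T'.map fun τ => ((fun x => -τ.1.1 x, τ.1.2), τ.2)) ?_ ?_
      · refine h1.congr (.of_eventuallyEq (Eventually.of_forall fun x => ?_))
        have h2 : (fun x => (-β' x + -β x) / 2) = fun x => -((β x + β' x) / 2) := by
          funext x; ring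
        rw [h2]
        exact fiberInt_powProd_neg T' _ _ x
      · intro τ hτ
        obtain ⟨τ', hτ', rfl⟩ := Multiset.mem_map.1 hτ
        exact ⟨(hT' τ' hτ').1.neg, (hT' τ' hτ').2⟩
      · intro τ hτ
        obtain ⟨τ', hτ', rfl⟩ := Multiset.mem_map.1 hτ
        rcases hout τ' hτ' with h | h
        · exact Or.inr (h.mono fun x h => neg_le_neg h)
        · exact Or.inl (h.mono fun x h => neg_le_neg h)
    · exact Tame.of_eventually_zero (hle.mono fun x h => fiberInt_of_le h)
  | cons τ T ih =>
    intro T' hT' β β' hβ hβ' hout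
    have ih' := ih fun τ' h => hT τ' (Multiset.mem_cons_of_mem h)
    have hτ := hT τ (Multiset.mem_cons_self _ _)
    have hcons : ∀ τ' ∈ τ ::ₘ T', IsRootDatum τ'.1 := by
      intro τ' h
      rcases Multiset.mem_cons.1 h with rfl | h
      · exact hτ
      · exact hT' τ' h
    have hrw : τ ::ₘ T + T' = T + τ ::ₘ T' := by
      rw [Multiset.cons_add, Multiset.add_cons]
    rw [hrw]
    have hkey : ∀ {γ γ' : ℝ → ℝ}, IsPuiseux γ → IsPuiseux γ' →
        (∀ᶠ x in 𝓝[>] (0 : ℝ), β x ≤ γ x) → (∀ᶠ x in 𝓝[>] (0 : ℝ), γ' x ≤ β' x) →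
        Outside γ γ' τ.1.1 → Tame (fiberInt (powProd (T + τ ::ₘ T')) γ γ') := by
      intro γ γ' hγ hγ' h1 h2 h3
      refine ih' (τ ::ₘ T') hcons hγ hγ' fun τ' h => ?_
      rcases Multiset.mem_cons.1 h with rfl | h
      · exact h3
      · rcases hout τ' h with h | h
        · exact Or.inl (h.mp (h1.mono fun x h1 h => h.trans h1))
        · exact Or.inr (h.mp (h2.mono fun x h1 h => h1.trans h))
    have hrefl : ∀ (γ : ℝ → ℝ), ∀ᶠ x in 𝓝[>] (0 : ℝ), γ x ≤ γ x := fun γ =>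
      Eventually.of_forall fun _ => le_rfl
    rcases hβ.lt_or_le hτ.1 with h1 | h1
    · rcases hτ.1.lt_or_le hβ' with h2 | h2
      · exact Tame.fiberInt_split h1 h2
          (hkey hβ hτ.1 (hrefl _) (h2.mono fun _ h => h.le) (Or.inr (hrefl _)))
          (hkey hτ.1 hβ' (h1.mono fun _ h => h.le) (hrefl _) (Or.inl (hrefl _)))
      · exact hkey hβ hβ' (hrefl _) (hrefl _) (Or.inr h2)
    · exact hkey hβ hβ' (hrefl _) (hrefl _) (Or.inl h1)

theorem isPreconnected_between {β β' : ℝ → ℝ} {δ : ℝ}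
    (hβ : ∀ x ∈ Ioo 0 δ, ContinuousAt β x) (hβ' : ∀ x ∈ Ioo 0 δ, ContinuousAt β' x)
    (hlt : ∀ x ∈ Ioo 0 δ, β x < β' x) :
    IsPreconnected {p : ℝ × ℝ | p.1 ∈ Ioo 0 δ ∧ p.2 ∈ Ioo (β p.1) (β' p.1)} := by
  have himg : {p : ℝ × ℝ | p.1 ∈ Ioo 0 δ ∧ p.2 ∈ Ioo (β p.1) (β' p.1)} =
      (fun q : ℝ × ℝ => (q.1, β q.1 + q.2 * (β' q.1 - β q.1))) '' (Ioo 0 δ ×ˢ Ioo 0 1) := by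
    ext ⟨x, y⟩
    constructor
    · rintro ⟨hx, hy⟩
      have hd : 0 < β' x - β x := sub_pos.2 (hlt x hx)
      refine ⟨(x, (y - β x) / (β' x - β x)), ⟨hx, ?_, ?_⟩, ?_⟩
      · exact div_pos (sub_pos.2 hy.1) hd
      · exact (div_lt_one hd).2 (by linarith [hy.2])
      · simp only [Prod.mk.injEq, true_and]
        field_simp
        ring
    · rintro ⟨⟨x', s⟩, ⟨hx, hs⟩, heq⟩
      obtain ⟨rfl, rfl⟩ := Prod.mk.inj heq
      have hd : 0 < β' x' - β x' := sub_pos.2 (hlt x' hx)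
      simp only at hs
      refine ⟨hx, ?_, ?_⟩
      · simp only
        nlinarith [hs.1]
      · simp only
        nlinarith [hs.2]
  rw [himg]
  refine IsPreconnected.image (isPreconnected_Ioo.prod isPreconnected_Ioo) _ ?_
  rintro ⟨x, s⟩ ⟨hx, hs⟩
  refine ContinuousAt.continuousWithinAt ?_
  have h1 : ContinuousAt (fun q : ℝ × ℝ => β q.1) (x, s) :=
    ContinuousAt.comp (f := Prod.fst) (hβ x hx) continuousAt_fst
  have h2 : ContinuousAt (fun q : ℝ × ℝ => β' q.1) (x, s) :=
    ContinuousAt.comp (f := Prod.fst) (hβ' x hx) continuousAt_fst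
  exact continuousAt_fst.prodMk (h1.add (continuousAt_snd.mul (h2.sub h1)))

theorem IsPreconnected.subset_or_disjoint_of_frontier {X : Type*} [TopologicalSpace X]
    {R E : Set X} (hR : IsPreconnected R) (hdisj : ∀ p ∈ R, p ∉ frontier E) :
    R ⊆ E ∨ ∀ p ∈ R, p ∉ E := by
  have hcov : R ⊆ interior E ∪ (closure E)ᶜ := by
    intro p hp
    by_cases h : p ∈ closure E
    · left
      by_contra h'
      exact hdisj p hp ⟨h, h'⟩
    · exact Or.inr h
  have hdis : Disjoint (interior E) (closure E)ᶜ :=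
    disjoint_compl_right.mono_left (interior_subset.trans subset_closure)
  rcases hR.subset_or_subset isOpen_interior isClosed_closure.isOpen_compl hdis hcov with h | h
  · exact Or.inl (h.trans interior_subset)
  · exact Or.inr fun p hp hE => h hp (subset_closure hE)

/-- Restricting to a set whose boundary lies on finitely many Puiseux graphs preserves tameness of
slice integrals. -/
theorem tame_fiberInt_indicator {E : Set (ℝ × ℝ)} {W : ℝ × ℝ → ℝ}
    (hW : ∀ {β β' : ℝ → ℝ}, IsPuiseux β → IsPuiseux β' → Tame (fiberInt W β β'))
    (B : List (ℝ → ℝ)) (hB : ∀ b ∈ B, IsPuiseux b) :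
    ∀ {β β' : ℝ → ℝ}, IsPuiseux β → IsPuiseux β' →
      (∀ᶠ x in 𝓝[>] (0 : ℝ), ∀ y ∈ Ioo (β x) (β' x), (x, y) ∈ frontier E → ∃ b ∈ B, y = b x) →
      Tame (fiberInt (E.indicator W) β β') := by
  induction B with
  | nil =>
    intro β β' hβ hβ' hfr
    rcases hβ.lt_or_le hβ' with hlt | hle
    · obtain ⟨δ, hδ, hsub⟩ := mem_nhdsGT_iff_exists_Ioo_subset.1
        (hfr.and (hlt.and (hβ.eventually_continuousAt.and hβ'.eventually_continuousAt)))
      have hpre := isPreconnected_between (fun x hx => (hsub hx).2.2.1)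
        (fun x hx => (hsub hx).2.2.2) (fun x hx => (hsub hx).2.1)
      rcases hpre.subset_or_disjoint_of_frontier (E := E) (fun p hp hE => by
        simpa using (hsub hp.1).1 p.2 hp.2 hE) with h | h
      · refine (hW hβ hβ').congr (.of_eventuallyEq ?_)
        filter_upwards [Ioo_mem_nhdsGT hδ] with x hx
        refine setLIntegral_congr_fun measurableSet_Ioo fun y hy => ?_
        simp only [indicator_of_mem (h (show ((x, y) : ℝ × ℝ) ∈ _ from ⟨hx, hy⟩))]
      · refine Tame.of_eventually_zero ?_
        filter_upwards [Ioo_mem_nhdsGT hδ] with x hx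
        rw [fiberInt, setLIntegral_congr_fun (g := fun _ => 0) measurableSet_Ioo, lintegral_zero]
        intro y hy
        simp only [indicator_of_notMem (h (x, y) ⟨hx, hy⟩), enorm_zero]
    · exact Tame.of_eventually_zero (hle.mono fun x h => fiberInt_of_le h)
  | cons b B ih =>
    intro β β' hβ hβ' hfr
    have hb := hB b List.mem_cons_self
    have hkey : ∀ {γ γ' : ℝ → ℝ}, IsPuiseux γ → IsPuiseux γ' →
        (∀ᶠ x in 𝓝[>] (0 : ℝ), β x ≤ γ x) → (∀ᶠ x in 𝓝[>] (0 : ℝ), γ' x ≤ β' x) →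
        Outside γ γ' b → Tame (fiberInt (E.indicator W) γ γ') := by
      intro γ γ' hγ hγ' h1 h2 h3
      refine ih (fun b' h => hB b' (List.mem_cons_of_mem _ h)) hγ hγ' ?_
      have h3' : ∀ᶠ x in 𝓝[>] (0 : ℝ), b x ∉ Ioo (γ x) (γ' x) := by
        rcases h3 with h | h
        · exact h.mono fun x h hm => absurd hm.1 (not_lt.2 h)
        · exact h.mono fun x h hm => absurd hm.2 (not_lt.2 h)
      filter_upwards [hfr, h1, h2, h3'] with x h1 h2 h3 h4 y hy hE
      obtain ⟨b', hb', heq⟩ := h1 y ⟨h2.trans_lt hy.1, hy.2.trans_le h3⟩ hE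
      rcases List.mem_cons.1 hb' with rfl | hb'
      · exact absurd (heq ▸ hy) h4
      · exact ⟨b', hb', heq⟩
    have hrefl : ∀ (γ : ℝ → ℝ), ∀ᶠ x in 𝓝[>] (0 : ℝ), γ x ≤ γ x := fun γ =>
      Eventually.of_forall fun _ => le_rfl
    rcases hβ.lt_or_le hb with h1 | h1
    · rcases hb.lt_or_le hβ' with h2 | h2
      · exact Tame.fiberInt_split h1 h2
          (hkey hβ hb (hrefl _) (h2.mono fun _ h => h.le) (Or.inr (hrefl _)))
          (hkey hb hβ' (h1.mono fun _ h => h.le) (hrefl _) (Or.inl (hrefl _)))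
      · exact hkey hβ hβ' (hrefl _) (hrefl _) (Or.inr h2)
    · exact hkey hβ hβ' (hrefl _) (hrefl _) (Or.inl h1)

/-- Near the origin, `C` is contained in an arc parametrized by analytic functions of `t ≥ 0`
vanishing at `0`. -/
def IsAnalyticArc (C : Set (ℝ × ℝ)) : Prop :=
  ∃ a b : ℝ → ℝ, AnalyticAt ℝ a 0 ∧ AnalyticAt ℝ b 0 ∧ a 0 = 0 ∧ b 0 = 0 ∧
    ∀ η > 0, ∀ᶠ p in 𝓝 (0 : ℝ × ℝ), p ∈ C → ∃ t, 0 ≤ t ∧ t < η ∧ p = (a t, b t)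

/-- The part of an analytic arc in `x > 0` is contained in the graph of a Puiseux germ. -/
theorem IsAnalyticArc.exists_graph {C : Set (ℝ × ℝ)} (hC : IsAnalyticArc C) :
    ∃ β : ℝ → ℝ, IsPuiseux β ∧ ∀ᶠ p in 𝓝 (0 : ℝ × ℝ), 0 < p.1 → p ∈ C → p.2 = β p.1 := by
  obtain ⟨a, b, ha, hb, ha0, -, harc⟩ := hC
  have hvac : (∃ η > 0, ∀ t, 0 ≤ t → t < η → a t ≤ 0) →
      ∃ β : ℝ → ℝ, IsPuiseux β ∧ ∀ᶠ p in 𝓝 (0 : ℝ × ℝ), 0 < p.1 → p ∈ C → p.2 = β p.1 := by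
    rintro ⟨η, hη, h⟩
    refine ⟨fun _ => 0, IsPuiseux.const 0, ?_⟩
    filter_upwards [harc η hη] with p hp h0 hpC
    obtain ⟨t, ht0, htη, rfl⟩ := hp hpC
    exact absurd h0 (not_lt.2 (h t ht0 htη))
  by_cases htop : analyticOrderAt a 0 = ⊤
  · obtain ⟨η, hη, h⟩ := Metric.eventually_nhds_iff.1 (analyticOrderAt_eq_top.1 htop)
    refine hvac ⟨η, hη, fun t h0 ht => (h ?_).le⟩
    simpa [abs_of_nonneg h0] using ht
  obtain ⟨k, hk⟩ := ENat.ne_top_iff_exists.1 htop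
  obtain ⟨v, hv, hv0, hav⟩ := (ha.analyticOrderAt_eq_natCast).1 hk.symm
  simp only [sub_zero, smul_eq_mul] at hav
  have hkpos : 0 < k := by
    rcases Nat.eq_zero_or_pos k with rfl | h
    · have := hav.self_of_nhds
      rw [ha0, pow_zero, one_mul] at this
      exact absurd this.symm hv0
    · exact h
  rcases lt_or_gt_of_ne hv0 with hneg | hpos
  · obtain ⟨η, hη, h⟩ := Metric.eventually_nhds_iff.1
      (hav.and (hv.continuousAt.eventually_lt_const hneg))
    refine hvac ⟨η, hη, fun t h0 ht => ?_⟩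
    obtain ⟨h1, h2⟩ := h (show dist t 0 < η by simpa [abs_of_nonneg h0] using ht)
    rw [h1]
    exact mul_nonpos_of_nonneg_of_nonpos (pow_nonneg h0 k) h2.le
  · have hr : AnalyticAt ℝ (fun t => v t ^ ((k : ℝ)⁻¹)) 0 :=
      AnalyticAt.fun_comp (g := fun s : ℝ => s ^ ((k : ℝ)⁻¹))
        (Real.contDiffAt_rpow_const_of_ne (n := ⊤) hpos.ne').analyticAt hv
    have hw : AnalyticAt ℝ (fun t => t * v t ^ ((k : ℝ)⁻¹)) 0 := analyticAt_id.mul hr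
    have hderiv : deriv (fun t => t * v t ^ ((k : ℝ)⁻¹)) 0 ≠ 0 := by
      have h1 := (hasDerivAt_id (0 : ℝ)).mul hr.differentiableAt.hasDerivAt
      have h2 : deriv (fun t => t * v t ^ ((k : ℝ)⁻¹)) 0 = v 0 ^ ((k : ℝ)⁻¹) := by
        refine h1.deriv.trans ?_
        simp
      rw [h2]
      exact (rpow_pos_of_pos hpos _).ne'
    obtain ⟨φ, hφ, hleft⟩ : ∃ φ : ℝ → ℝ, AnalyticAt ℝ φ 0 ∧
        ∀ᶠ t in 𝓝 (0 : ℝ), φ (t * v t ^ ((k : ℝ)⁻¹)) = t := by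
      refine ⟨_, ?_, hw.hasStrictDerivAt.eventually_left_inverse hderiv⟩
      simpa using hw.analyticAt_localInverse hderiv
    have hφ0 : φ 0 = 0 := by simpa using hleft.self_of_nhds
    refine ⟨fun x => b (φ (x ^ ((k : ℝ)⁻¹))), IsPuiseux.of_root hkpos
      (A := fun s => b (φ s)) (AnalyticAt.fun_comp (by rwa [hφ0]) hφ)
      (Eventually.of_forall fun _ => rfl), ?_⟩
    obtain ⟨η, hη, h⟩ := Metric.eventually_nhds_iff.1
      (hav.and ((hv.continuousAt.eventually_const_lt hpos).and hleft))
    filter_upwards [harc η hη] with p hp h0 hpC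
    obtain ⟨t, ht0, htη, rfl⟩ := hp hpC
    obtain ⟨h1, h2, h3⟩ := h (show dist t 0 < η by simpa [abs_of_nonneg ht0] using htη)
    have h4 : a t ^ ((k : ℝ)⁻¹) = t * v t ^ ((k : ℝ)⁻¹) := by
      rw [h1, mul_rpow (pow_nonneg ht0 k) h2.le, pow_rpow_inv_natCast ht0 hkpos.ne']
    simp only [h4, h3]

theorem enorm_powLog {s : ℝ} {d : ℕ} {x : ℝ} :
    ‖powLog s d x‖ₑ = ‖x ^ s‖ₑ * ‖log x‖ₑ ^ d := by
  rw [powLog, enorm_mul, enorm_pow, ← Real.norm_eq_abs, enorm_norm]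

theorem eventually_one_le_abs_log : ∀ᶠ x in 𝓝[>] (0 : ℝ), 1 ≤ |log x| := by
  filter_upwards [eventually_lt_nhdsGT (Real.exp_pos (-1)), eventually_pos_nhdsGT] with x h1 h0
  have := (Real.log_lt_iff_lt_exp h0).2 h1
  rw [le_abs]; right; linarith

theorem abs_log_le_abs_log {x r : ℝ} (hx : 0 < x) (hxr : x ≤ r) (hr : r < 1) :
    |log r| ≤ |log x| := by
  have h1 := log_le_log hx hxr
  have h2 := log_neg (hx.trans_le hxr) hr
  rw [abs_of_neg h2, abs_of_neg (h1.trans_lt h2)]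
  linarith

theorem rpow_mul_abs_log_le {κ x r : ℝ} (hκ : 0 < κ) (hx : 0 < x) (hxr : x ≤ r)
    (hr : r ≤ exp (-κ⁻¹)) : x ^ κ * |log x| ≤ r ^ κ * |log r| := by
  have hr0 : 0 < r := hx.trans_le hxr
  have hr1 : r < 1 := hr.trans_lt (by rw [exp_lt_one_iff]; simpa using hκ)
  have hri : exp κ⁻¹ ≤ r⁻¹ := by
    rw [exp_neg] at hr
    rwa [le_inv_comm₀ (exp_pos _) hr0]
  have hxi : r⁻¹ ≤ x⁻¹ := inv_anti₀ hx hxr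
  have h := log_div_self_rpow_antitoneOn hκ (show r⁻¹ ∈ Ici (exp κ⁻¹) from hri)
    (show x⁻¹ ∈ Ici (exp κ⁻¹) from hri.trans hxi) hxi
  simp only [log_inv, inv_rpow hx.le, inv_rpow hr0.le, div_inv_eq_mul] at h
  rw [abs_of_neg (log_neg hx (hxr.trans_lt hr1)), abs_of_neg (log_neg hr0 hr1)]
  linarith

/-- Integrating a tame function over `(0, r)` gives a tame function of `r`. -/
theorem Tame.setLIntegral_Ioo {J : ℝ → ENNReal} (hJ : Tame J) :
    Tame fun r => ∫⁻ x in Ioo 0 r, J x := by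
  have hext : ∀ {P : ℝ → Prop}, (∀ᶠ x in 𝓝[>] (0 : ℝ), P x) →
      ∀ᶠ r in 𝓝[>] (0 : ℝ), ∀ x ∈ Ioo 0 r, P x := by
    intro P hP
    obtain ⟨δ, hδ, hsub⟩ := mem_nhdsGT_iff_exists_Ioo_subset.1 hP
    filter_upwards [eventually_lt_nhdsGT hδ] with r hr x hx
    exact hsub ⟨hx.1, hx.2.trans hr⟩
  rcases hJ with h | h | ⟨s, d, hd, C, hC⟩
  · refine Tame.of_eventually_zero ((hext h).mono fun r hr => ?_)
    rw [setLIntegral_congr_fun (g := fun _ => 0) measurableSet_Ioo hr, lintegral_zero]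
  · right; left
    filter_upwards [hext h, eventually_pos_nhdsGT] with r hr h0
    rw [setLIntegral_congr_fun (g := fun _ => ⊤) measurableSet_Ioo hr, setLIntegral_const,
      Real.volume_Ioo, sub_zero]
    exact ENNReal.top_mul (by simpa using h0)
  have hcmp : ECmp (fun r => ∫⁻ x in Ioo 0 r, J x) fun r => ∫⁻ x in Ioo 0 r, ‖powLog s d x‖ₑ := by
    refine ⟨C, (hext hC).mono fun r hr => ⟨?_, ?_⟩⟩
    · rw [← lintegral_const_mul' _ _ ENNReal.coe_ne_top]
      exact setLIntegral_mono' measurableSet_Ioo fun x hx => (hr x hx).1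
    · rw [← lintegral_const_mul' _ _ ENNReal.coe_ne_top]
      exact setLIntegral_mono' measurableSet_Ioo fun x hx => (hr x hx).2
  refine Tame.congr ?_ hcmp
  rcases le_or_gt s (-1) with hs | hs
  · right; left
    filter_upwards [hext eventually_one_le_abs_log, eventually_pos_nhdsGT] with r h1 h0
    rw [← top_le_iff, ← setLIntegral_rpow_zero_eq_top h0 hs]
    refine setLIntegral_mono' measurableSet_Ioo fun x hx => ?_
    rw [enorm_powLog]
    refine le_mul_of_one_le_right' (one_le_pow₀ ?_)
    rw [← enorm_norm, Real.enorm_of_nonneg (norm_nonneg _)]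
    exact ENNReal.one_le_ofReal.2 (h1 x hx)
  · refine Or.inr (Or.inr ⟨s + 1, d, hd, ?_⟩)
    have hs1 : 0 < s + 1 := by linarith
    have hpow : ∀ {s : ℝ}, -1 < s → ECmp (fun r => ∫⁻ x in Ioo 0 r, ‖x ^ s‖ₑ)
        fun r => ‖r ^ (s + 1)‖ₑ := by
      intro s hs
      have hs1 : (s + 1)⁻¹ ≠ 0 := inv_ne_zero (by linarith)
      refine ECmp.trans (.of_eventuallyEq (J' := fun r => ‖(s + 1)⁻¹ * r ^ (s + 1)‖ₑ) ?_)
        (.of_isTheta ((isTheta_const_mul_left hs1).2 (isTheta_refl _ _)))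
      filter_upwards [eventually_pos_nhdsGT] with r hr
      rw [setLIntegral_rpow_zero hr hs, div_eq_inv_mul]
    interval_cases d
    · simpa [powLog] using hpow hs
    · obtain ⟨κ, hκdef⟩ : ∃ κ, κ = (s + 1) / 2 := ⟨_, rfl⟩
      have hκ : 0 < κ := by linarith
      obtain ⟨C₁, hC₁⟩ := hpow hs
      obtain ⟨C₂, hC₂⟩ := hpow (s := s - κ) (by linarith)
      refine ⟨C₁ + C₂, ?_⟩
      filter_upwards [hC₁, hC₂, eventually_pos_nhdsGT, eventually_lt_nhdsGT one_pos,
        eventually_lt_nhdsGT (exp_pos (-κ⁻¹))] with r h1 h2 h0 hr1 hrκ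
      rw [enorm_powLog, pow_one]
      constructor
      · calc ∫⁻ x in Ioo 0 r, ‖powLog s 1 x‖ₑ
            ≤ ∫⁻ x in Ioo 0 r, ‖r ^ κ * |log r|‖ₑ * ‖x ^ (s - κ)‖ₑ := by
              refine setLIntegral_mono' measurableSet_Ioo fun x hx => ?_
              rw [← enorm_mul]
              have hxp := rpow_pos_of_pos hx.1 (s - κ)
              have e1 : x ^ s = x ^ κ * x ^ (s - κ) := by
                rw [← rpow_add hx.1]; ring_nf
              have e2 := rpow_mul_abs_log_le hκ hx.1 hx.2.le hrκ.le
              have e3 : 0 ≤ x ^ κ * |log x| := mul_nonneg (rpow_pos_of_pos hx.1 κ).le (abs_nonneg _)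
              rw [powLog, pow_one, e1, enorm_le_iff_norm_le, Real.norm_eq_abs, Real.norm_eq_abs,
                show x ^ κ * x ^ (s - κ) * |log x| = x ^ κ * |log x| * x ^ (s - κ) by ring,
                abs_of_nonneg (mul_nonneg e3 hxp.le),
                abs_of_nonneg (mul_nonneg (e3.trans e2) hxp.le)]
              exact mul_le_mul_of_nonneg_right e2 hxp.le
          _ = ‖r ^ κ * |log r|‖ₑ * ∫⁻ x in Ioo 0 r, ‖x ^ (s - κ)‖ₑ :=
              lintegral_const_mul' _ _ enorm_ne_top
          _ ≤ ‖r ^ κ * |log r|‖ₑ * (C₂ * ‖r ^ (s - κ + 1)‖ₑ) := by gcongr; exact h2.1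
          _ = C₂ * (‖r ^ (s + 1)‖ₑ * ‖log r‖ₑ) := by
              have e1 : r ^ (s + 1) = r ^ κ * r ^ (s - κ + 1) := by
                rw [← rpow_add h0]; ring_nf
              rw [e1, enorm_mul, enorm_mul, ← Real.norm_eq_abs, enorm_norm]
              generalize r ^ (s - κ + 1) = u
              ring
          _ ≤ _ := by gcongr; simp
      · calc ‖r ^ (s + 1)‖ₑ * ‖log r‖ₑ
            ≤ C₁ * (∫⁻ x in Ioo 0 r, ‖x ^ s‖ₑ) * ‖log r‖ₑ := by gcongr; exact h1.2
          _ = C₁ * ∫⁻ x in Ioo 0 r, ‖log r‖ₑ * ‖x ^ s‖ₑ := by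
              rw [lintegral_const_mul' _ _ enorm_ne_top]; ring
          _ ≤ C₁ * ∫⁻ x in Ioo 0 r, ‖powLog s 1 x‖ₑ := by
              refine mul_le_mul' le_rfl (setLIntegral_mono' measurableSet_Ioo fun x hx => ?_)
              rw [enorm_powLog, pow_one, mul_comm]
              gcongr
              rw [enorm_le_iff_norm_le]
              exact abs_log_le_abs_log hx.1 hx.2.le hr1
          _ ≤ _ := by gcongr; simp

/-- A function squeezed between a tame function at scales `r / 2` and `r` is tame. -/
theorem Tame.of_sandwich {U V : ℝ → ENNReal} (hU : Tame U)
    (h : ∀ᶠ r in 𝓝[>] (0 : ℝ), U (r / 2) ≤ V r ∧ V r ≤ U r) : Tame V := by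
  have hhalf : Tendsto (fun r : ℝ => r / 2) (𝓝[>] 0) (𝓝[>] 0) := by
    refine tendsto_nhdsWithin_iff.2 ⟨?_, ?_⟩
    · exact (Continuous.tendsto' (by fun_prop) _ _ (by simp)).mono_left nhdsWithin_le_nhds
    · filter_upwards [eventually_pos_nhdsGT] with r hr
      exact half_pos hr
  rcases hU with h' | h' | ⟨s, d, hd, C, hC⟩
  · refine Tame.of_eventually_zero ?_
    filter_upwards [h, h'] with r h1 h2
    exact le_zero_iff.1 (h1.2.trans h2.le)
  · right; left
    filter_upwards [h, hhalf.eventually h'] with r h1 h2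
    exact top_le_iff.1 (h2 ▸ h1.1)
  · refine Or.inr (Or.inr ⟨s, d, hd, C + (2 ^ s : ℝ).toNNReal * C, ?_⟩)
    filter_upwards [h, hC, hhalf.eventually hC, eventually_pos_nhdsGT,
      eventually_lt_nhdsGT one_pos] with r h1 h2 h3 h0 hr1
    push_cast
    constructor
    · exact h1.2.trans (h2.1.trans (by gcongr; simp))
    · have hr2 : 0 < r / 2 := half_pos h0
      have h4 : ‖powLog s d r‖ₑ ≤ (2 ^ s : ℝ).toNNReal * ‖powLog s d (r / 2)‖ₑ := by
        refine enorm_le_of_norm_le ?_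
        have e1 : r ^ s = 2 ^ s * (r / 2) ^ s := by
          rw [← Real.mul_rpow two_pos.le hr2.le]; ring_nf
        rw [powLog, powLog, e1, norm_mul, norm_mul, norm_mul, Real.norm_of_nonneg
          (rpow_nonneg two_pos.le s), mul_assoc]
        rw [norm_pow, norm_pow, Real.norm_eq_abs |log r|, Real.norm_eq_abs |log (r / 2)|, abs_abs,
          abs_abs]
        have e2 := abs_log_le_abs_log hr2 (by linarith) hr1
        exact mul_le_mul_of_nonneg_left (mul_le_mul_of_nonneg_left
          (pow_le_pow_left₀ (abs_nonneg _) e2 d) (norm_nonneg _)) (rpow_nonneg two_pos.le s)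
      refine h4.trans ?_
      rw [add_mul]
      refine le_add_left ?_
      rw [mul_assoc]
      gcongr
      exact h3.2.trans (by gcongr; exact h1.1)

theorem IsAnalyticArc.preimage {C : Set (ℝ × ℝ)} (hC : IsAnalyticArc C)
    (Φ : (ℝ × ℝ) ≃L[ℝ] (ℝ × ℝ)) : IsAnalyticArc (Φ ⁻¹' C) := by
  obtain ⟨a, b, ha, hb, ha0, hb0, h⟩ := hC
  have hab : AnalyticAt ℝ (fun t => Φ.symm (a t, b t)) 0 :=
    (Φ.symm : (ℝ × ℝ) →L[ℝ] ℝ × ℝ).analyticAt _ |>.comp (ha.prod hb)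
  have h0 : Φ.symm (a 0, b 0) = 0 := by
    rw [ha0, hb0]; exact map_zero Φ.symm
  have hΦ : Tendsto Φ (𝓝 0) (𝓝 0) := by
    simpa using (Φ.continuous.tendsto 0)
  refine ⟨fun t => (Φ.symm (a t, b t)).1, fun t => (Φ.symm (a t, b t)).2,
    AnalyticAt.fun_comp (g := Prod.fst) analyticAt_fst hab,
    AnalyticAt.fun_comp (g := Prod.snd) analyticAt_snd hab, by simp [h0], by simp [h0],
    fun η hη => ?_⟩
  filter_upwards [hΦ.eventually (h η hη)] with p hp hpC
  obtain ⟨t, ht0, htη, hpt⟩ := hp hpC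
  exact ⟨t, ht0, htη, by rw [Prod.mk.eta, ← hpt, Φ.symm_apply_apply]⟩

theorem IsPuiseuxBdryCurve.isAnalyticArc {r₀ : ℝ} {C : Set (ℝ × ℝ)}
    (hC : IsPuiseuxBdryCurve r₀ C) : IsAnalyticArc C := by
  obtain ⟨N, h, σ, a, c, hN, hσ, ha, hh, h0, hc, -, -, rfl⟩ := hC
  have hh0 : AnalyticAt ℝ h 0 := hh 0 ⟨le_rfl, rpow_nonneg ha.le _⟩
  have hσN : AnalyticAt ℝ (fun s : ℝ => σ * s ^ N) 0 := by fun_prop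
  have hσ0 : σ * 0 ^ N = 0 := by simp [hN.ne']
  have hroot : ∀ {η t : ℝ}, 0 < η → 0 ≤ t → |σ * t| < η ^ N →
      0 ≤ t ^ ((N : ℝ)⁻¹) ∧ t ^ ((N : ℝ)⁻¹) < η ∧ (t ^ ((N : ℝ)⁻¹)) ^ N = t := by
    intro η t hη ht hlt
    have habs : |σ * t| = t := by
      rcases hσ with rfl | rfl <;> simp [abs_of_nonneg ht]
    have hpow := rpow_inv_natCast_pow ht hN.ne'
    refine ⟨rpow_nonneg ht _, ?_, hpow⟩
    rw [habs, ← hpow] at hlt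
    exact lt_of_pow_lt_pow_left₀ N hη.le hlt
  rcases hc with hc | hc
  · refine ⟨fun s => σ * s ^ N, h, hσN, hh0, hσ0, h0, fun η hη => ?_⟩
    have hev : ∀ᶠ p in 𝓝 (0 : ℝ × ℝ), |p.1| < η ^ N :=
      (continuous_fst.abs.tendsto' 0 0 (by simp)).eventually_lt_const (pow_pos hη N)
    filter_upwards [hev] with p hp hpC
    obtain ⟨t, ht, rfl⟩ := hpC
    rw [hc] at hp ⊢
    obtain ⟨h1, h2, h3⟩ := hroot hη ht.1 hp
    exact ⟨_, h1, h2, by rw [h3]⟩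
  · refine ⟨h, fun s => σ * s ^ N, hh0, hσN, h0, hσ0, fun η hη => ?_⟩
    have hev : ∀ᶠ p in 𝓝 (0 : ℝ × ℝ), |p.2| < η ^ N :=
      (continuous_snd.abs.tendsto' 0 0 (by simp)).eventually_lt_const (pow_pos hη N)
    filter_upwards [hev] with p hp hpC
    obtain ⟨t, ht, rfl⟩ := hpC
    rw [hc] at hp ⊢
    obtain ⟨h1, h2, h3⟩ := hroot hη ht.1 hp
    exact ⟨_, h1, h2, by rw [h3]⟩

theorem isOpen_disk2 (r : ℝ) : IsOpen (disk2 r) :=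
  isOpen_lt (by fun_prop) continuous_const

theorem disk2_subset_prod {r : ℝ} (hr : 0 < r) : disk2 r ⊆ Ioo (-r) r ×ˢ Ioo (-r) r := by
  rintro ⟨x, y⟩ hp
  have hp' : x ^ 2 + y ^ 2 < r ^ 2 := hp
  exact ⟨abs_lt.1 (abs_lt_of_sq_lt_sq (by nlinarith) hr.le),
    abs_lt.1 (abs_lt_of_sq_lt_sq (by nlinarith) hr.le)⟩

theorem eventually_prod_subset {U : Set (ℝ × ℝ)} (hU : U ∈ 𝓝 (0 : ℝ × ℝ)) :
    ∀ᶠ r in 𝓝[>] (0 : ℝ), Ioo (-r) r ×ˢ Ioo (-(2 * r)) (2 * r) ⊆ U := by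
  obtain ⟨δ, hδ, hsub⟩ := Metric.mem_nhds_iff.1 hU
  filter_upwards [eventually_lt_nhdsGT (half_pos hδ), eventually_pos_nhdsGT] with r hr h0 p hp
  refine hsub ?_
  rw [Metric.mem_ball, dist_zero_right, Prod.norm_def, sup_lt_iff]
  exact ⟨(abs_lt.2 hp.1).trans (by linarith), (abs_lt.2 hp.2).trans (by linarith)⟩

theorem eventually_disk2_subset {U : Set (ℝ × ℝ)} (hU : U ∈ 𝓝 (0 : ℝ × ℝ)) :
    ∀ᶠ r in 𝓝[>] (0 : ℝ), disk2 r ⊆ U := by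
  filter_upwards [eventually_prod_subset hU, eventually_pos_nhdsGT] with r hr h0
  refine (disk2_subset_prod h0).trans (Subset.trans ?_ hr)
  exact prod_mono le_rfl (Ioo_subset_Ioo (by linarith) (by linarith))

/-- The hypotheses on `g = χ_E ∏ |fᵢ|^(γᵢ)` that are local at the origin. -/
structure LocalForm (n : ℕ) (f : Fin n → ℝ × ℝ → ℝ) (γ : Fin n → ℝ) (E : Set (ℝ × ℝ)) : Prop where
  analytic : ∀ i, AnalyticAt ℝ (f i) 0
  nontriv : ∀ i, ¬ ∀ᶠ p in 𝓝 (0 : ℝ × ℝ), f i p = 0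
  aemeas : ∃ U ∈ 𝓝 (0 : ℝ × ℝ), AEMeasurable (stdFun n f γ E) (volume.restrict U)
  arcs : ∃ 𝒞 : List (Set (ℝ × ℝ)), (∀ C ∈ 𝒞, IsAnalyticArc C) ∧
    ∀ᶠ p in 𝓝 (0 : ℝ × ℝ), p ∈ frontier E → ∃ C ∈ 𝒞, p ∈ C

theorem stdFun_comp {n : ℕ} (f : Fin n → ℝ × ℝ → ℝ) (γ : Fin n → ℝ) (E : Set (ℝ × ℝ))
    (Φ : ℝ × ℝ → ℝ × ℝ) (p : ℝ × ℝ) :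
    stdFun n (fun i => f i ∘ Φ) γ (Φ ⁻¹' E) p = stdFun n f γ E (Φ p) := by
  by_cases h : Φ p ∈ E <;> simp [stdFun, indicator, h]

theorem LocalForm.comp {n : ℕ} {f : Fin n → ℝ × ℝ → ℝ} {γ : Fin n → ℝ} {E : Set (ℝ × ℝ)}
    (h : LocalForm n f γ E) (Φ : (ℝ × ℝ) ≃L[ℝ] (ℝ × ℝ)) (hΦ : MeasurePreserving Φ) :
    LocalForm n (fun i => f i ∘ Φ) γ (Φ ⁻¹' E) := by
  have hcont : Tendsto Φ (𝓝 0) (𝓝 0) := by simpa using Φ.continuous.tendsto 0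
  have hcont' : Tendsto Φ.symm (𝓝 0) (𝓝 0) := by simpa using Φ.symm.continuous.tendsto 0
  refine ⟨fun i => ?_, fun i hi => h.nontriv i ?_, ?_, ?_⟩
  · exact AnalyticAt.comp (by simpa using h.analytic i)
      ((Φ : (ℝ × ℝ) →L[ℝ] ℝ × ℝ).analyticAt 0)
  · filter_upwards [hcont'.eventually hi] with p hp
    simpa using hp
  · obtain ⟨U, hU, hm⟩ := h.aemeas
    refine ⟨Φ ⁻¹' U, hcont hU, ?_⟩
    rw [funext (stdFun_comp f γ E Φ)]
    exact hm.comp_quasiMeasurePreserving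
      (hΦ.restrict_preimage_emb Φ.toHomeomorph.measurableEmbedding U).quasiMeasurePreserving
  · obtain ⟨𝒞, hC, hev⟩ := h.arcs
    refine ⟨𝒞.map (Φ ⁻¹' ·), ?_, ?_⟩
    · intro C' hC'
      obtain ⟨C, hmem, rfl⟩ := List.mem_map.1 hC'
      exact (hC C hmem).preimage Φ
    · filter_upwards [hcont.eventually hev] with p hp hpE
      have hpE' : Φ p ∈ frontier E :=
        (Φ.toHomeomorph.preimage_frontier E).symm.subset hpE
      obtain ⟨C, hmem, hpC⟩ := hp hpE'
      exact ⟨_, List.mem_map.2 ⟨C, hmem, rfl⟩, hpC⟩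

/-- The open sector `|y| < 3x/2`. -/
def sector : Set (ℝ × ℝ) := {p | -(3 / 2) * p.1 < p.2 ∧ p.2 < 3 / 2 * p.1}

theorem isOpen_sector : IsOpen sector :=
  IsOpen.and (isOpen_lt (by fun_prop) (by fun_prop)) (isOpen_lt (by fun_prop) (by fun_prop))

theorem fst_pos_of_mem_sector {p : ℝ × ℝ} (hp : p ∈ sector) : 0 < p.1 := by
  have h1 := hp.1.trans hp.2
  linarith

theorem betweenFilter_sector_le :
    betweenFilter (fun x => -(3 / 2) * x) (fun x => 3 / 2 * x) ≤ 𝓝[>] (0 : ℝ) ×ˢ 𝓝 (0 : ℝ) := by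
  have hfst : Tendsto (Prod.fst : ℝ × ℝ → ℝ)
      (betweenFilter (fun x => -(3 / 2) * x) (fun x => 3 / 2 * x)) (𝓝 0) :=
    tendsto_fst_betweenFilter.mono_right nhdsWithin_le_nhds
  refine le_prod.2 ⟨tendsto_fst_betweenFilter, ?_⟩
  have hl := hfst.const_mul (-(3 / 2))
  have hu := hfst.const_mul (3 / 2)
  rw [mul_zero] at hl hu
  exact tendsto_of_tendsto_of_tendsto_of_le_of_le' hl hu
    (eventually_mem_betweenFilter.mono fun _ h => h.1.le)
    (eventually_mem_betweenFilter.mono fun _ h => h.2.le)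

theorem IsTheta.indicator {α : Type*} {l : Filter α} {f g : α → ℝ} (h : f =Θ[l] g) (E : Set α) :
    E.indicator f =Θ[l] E.indicator g := by
  have key : ∀ {f g : α → ℝ}, f =O[l] g → E.indicator f =O[l] E.indicator g := by
    intro f g h
    obtain ⟨c, hc⟩ := h.bound
    refine IsBigO.of_bound c (hc.mono fun p hp => ?_)
    by_cases hpE : p ∈ E <;> simp [hpE]
    exact hp
  exact ⟨key h.1, key h.2⟩

/-- An absolute power of an analytic function is comparable to a product of real powers of
elementary factors. -/
theorem AnalyticAt.exists_isTheta_powProd {f : ℝ × ℝ → ℝ} (hf : AnalyticAt ℝ f 0)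
    (h0 : ¬ ∀ᶠ p in 𝓝 0, f p = 0) (γ : ℝ) :
    ∃ (s : ℝ) (T : Multiset (((ℝ → ℝ) × (ℝ → ℝ)) × ℝ)), (∀ τ ∈ T, IsRootDatum τ.1) ∧
      (fun p => |f p| ^ γ) =Θ[𝓝[>] 0 ×ˢ 𝓝 0] fun p => p.1 ^ s * powProd T p := by
  obtain ⟨k, M, hM, hth⟩ := hf.exists_isTheta_rootProd h0
  have hpos : ∀ᶠ p : ℝ × ℝ in 𝓝[>] 0 ×ˢ 𝓝 0, 0 < p.1 :=
    tendsto_fst.eventually eventually_pos_nhdsGT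
  have hfac : ∀ᶠ p : ℝ × ℝ in 𝓝[>] 0 ×ˢ 𝓝 0, ∀ ρ ∈ M, 0 ≤ rootFactor ρ p := by
    classical
    have : ∀ᶠ p : ℝ × ℝ in 𝓝[>] 0 ×ˢ 𝓝 0, ∀ ρ ∈ M.toFinset, 0 ≤ rootFactor ρ p := by
      refine (Finset.eventually_all _).2 fun ρ hρ => ?_
      filter_upwards [tendsto_fst.eventually (hM ρ (Multiset.mem_toFinset.1 hρ)).2.2] with p hp
      exact add_nonneg (abs_nonneg _) hp
    exact this.mono fun p hp ρ hρ => hp ρ (Multiset.mem_toFinset.2 hρ)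
  have hprod : ∀ᶠ p : ℝ × ℝ in 𝓝[>] 0 ×ˢ 𝓝 0, 0 ≤ rootProd M p :=
    hfac.mono fun p hp => Multiset.prod_map_nonneg hp
  refine ⟨k * γ, M.map fun ρ => (ρ, γ), ?_, ?_⟩
  · intro τ hτ
    obtain ⟨ρ, hρ, rfl⟩ := Multiset.mem_map.1 hτ
    exact hM ρ hρ
  · have h1 : (fun p => |f p|) =Θ[𝓝[>] 0 ×ˢ 𝓝 0] fun p => p.1 ^ k * rootProd M p := hth.norm_left
    refine (IsTheta.rpow (r := γ) (Eventually.of_forall fun p => abs_nonneg _) ?_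
      h1).trans_eventuallyEq ?_
    · filter_upwards [hpos, hprod] with p h2 h3
      exact mul_nonneg (pow_nonneg h2.le k) h3
    · filter_upwards [hpos, hfac, hprod] with p h2 h3 h4
      rw [mul_rpow (pow_nonneg h2.le k) h4, rpow_mul h2.le, rpow_natCast, powProd,
        Multiset.map_map, rootProd, ← multiset_prod_map_rpow M _ h3]
      rfl

theorem powProd_sum {ι : Type*} (s : Finset ι) (T : ι → Multiset (((ℝ → ℝ) × (ℝ → ℝ)) × ℝ))
    (p : ℝ × ℝ) : powProd (∑ i ∈ s, T i) p = ∏ i ∈ s, powProd (T i) p := by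
  classical
  induction s using Finset.induction_on with
  | empty => simp [powProd]
  | insert i s hi ih => rw [Finset.sum_insert hi, powProd_add, ih, Finset.prod_insert hi]

theorem LocalForm.tame_fiberInt {n : ℕ} {f : Fin n → ℝ × ℝ → ℝ} {γ : Fin n → ℝ} {E : Set (ℝ × ℝ)}
    (h : LocalForm n f γ E) :
    Tame (fiberInt (stdFun n f γ E) (fun x => -(3 / 2) * x) fun x => 3 / 2 * x) := by
  choose s T hT hth using fun i => (h.analytic i).exists_isTheta_powProd (h.nontriv i) (γ i)
  have hprod : (fun p => ∏ i, |f i p| ^ γ i) =Θ[𝓝[>] 0 ×ˢ 𝓝 0]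
      fun p => p.1 ^ (∑ i, s i) * powProd (∑ i, T i) p := by
    refine (IsTheta.finsetProd fun i _ => hth i).trans_eventuallyEq ?_
    filter_upwards [tendsto_fst.eventually eventually_pos_nhdsGT] with p hp
    rw [Finset.prod_mul_distrib, powProd_sum, rpow_sum_of_pos hp]
  have hind : stdFun n f γ E =Θ[betweenFilter (fun x => -(3 / 2) * x) (fun x => 3 / 2 * x)]
      fun p => p.1 ^ (∑ i, s i) * E.indicator (powProd (∑ i, T i)) p := by
    refine IsTheta.congr_fun (IsTheta.indicator (hprod.mono betweenFilter_sector_le) E) (fun _ => rfl) ?_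
    intro p
    by_cases hp : p ∈ E <;> simp [hp]
  refine Tame.congr ?_ (fiberInt_congr hind)
  obtain ⟨𝒞, hC, hev⟩ := h.arcs
  choose! b hb hbC using fun C hC' => (hC C hC').exists_graph
  have htame : Tame (fiberInt (E.indicator (powProd (∑ i, T i)))
      (fun x => -(3 / 2) * x) fun x => 3 / 2 * x) := by
    refine tame_fiberInt_indicator (fun hβ hβ' => tame_fiberInt_powProd _ ?_ hβ hβ') (𝒞.map b) ?_
      ((IsPuiseux.const _).mul IsPuiseux.id) ((IsPuiseux.const _).mul IsPuiseux.id) ?_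
    · intro τ hτ
      obtain ⟨i, -, hi⟩ := Multiset.mem_sum.1 hτ
      exact hT i τ hi
    · intro β hβ
      obtain ⟨C, hmem, rfl⟩ := List.mem_map.1 hβ
      exact hb C hmem
    · refine (eventually_betweenFilter
        (P := fun p => p ∈ frontier E → ∃ β ∈ 𝒞.map b, p.2 = β p.1)).1 ?_
      have hle : betweenFilter (fun x => -(3 / 2) * x) (fun x => 3 / 2 * x) ≤ 𝓝 (0 : ℝ × ℝ) := by
        refine betweenFilter_sector_le.trans ?_
        rw [← Prod.mk_zero_zero, nhds_prod_eq]
        exact Filter.prod_mono nhdsWithin_le_nhds le_rfl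
      have hall : ∀ᶠ p in 𝓝 (0 : ℝ × ℝ), ∀ C ∈ {C | C ∈ 𝒞}, 0 < p.1 → p ∈ C → p.2 = b C p.1 :=
        (eventually_all_finite 𝒞.finite_toSet).2 hbC
      filter_upwards [hle hev, hle hall, tendsto_fst_betweenFilter.eventually
        eventually_pos_nhdsGT] with p h1 h2 h3 hp
      obtain ⟨C, hmem, hpC⟩ := h1 hp
      exact ⟨b C, List.mem_map.2 ⟨C, hmem, rfl⟩, h2 C hmem h3 hpC⟩
  refine (htame.mul_rpow (f := fun x => x ^ (∑ i, s i)) (isTheta_refl _ _)).congr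
    (.of_eventuallyEq (Eventually.of_forall fun x => ?_))
  exact fiberInt_const_mul (fun x => x ^ (∑ i, s i)) _ _ _ x

theorem LocalForm.tame_sector {n : ℕ} {f : Fin n → ℝ × ℝ → ℝ} {γ : Fin n → ℝ} {E : Set (ℝ × ℝ)}
    (h : LocalForm n f γ E) : Tame fun r => ∫⁻ p in disk2 r ∩ sector, ‖stdFun n f γ E p‖ₑ := by
  have hmeas : ∀ r : ℝ, MeasurableSet (sector ∩ {p : ℝ × ℝ | p.1 < r}) := fun r =>
    (isOpen_sector.inter (isOpen_lt continuous_fst continuous_const)).measurableSet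
  have htri : Tame fun r => ∫⁻ p in sector ∩ {p | p.1 < r}, ‖stdFun n f γ E p‖ₑ := by
    refine h.tame_fiberInt.setLIntegral_Ioo.congr (.of_eventuallyEq ?_)
    obtain ⟨U, hU, hm⟩ := h.aemeas
    filter_upwards [eventually_prod_subset hU] with r hr
    have hsub : sector ∩ {p | p.1 < r} ⊆ U := by
      rintro p ⟨hp, hpr⟩
      have h0 := fst_pos_of_mem_sector hp
      have hpr' : p.1 < r := hpr
      exact hr ⟨⟨by linarith, hpr'⟩, ⟨by linarith [hp.1], by linarith [hp.2]⟩⟩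
    have hm' : AEMeasurable ((sector ∩ {p | p.1 < r}).indicator fun p => ‖stdFun n f γ E p‖ₑ)
        ((volume : Measure ℝ).prod (volume : Measure ℝ)) :=
      (aemeasurable_indicator_iff (hmeas r)).2
        (hm.enorm.mono_measure (Measure.restrict_mono hsub le_rfl))
    rw [← lintegral_indicator (hmeas r), Measure.volume_eq_prod, lintegral_prod _ hm',
      ← lintegral_indicator measurableSet_Ioo]
    refine lintegral_congr fun x => ?_
    by_cases hx : x ∈ Ioo 0 r
    · rw [indicator_of_mem hx, fiberInt, ← lintegral_indicator measurableSet_Ioo]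
      refine lintegral_congr fun y => ?_
      have hiff : (x, y) ∈ sector ∩ {p : ℝ × ℝ | p.1 < r} ↔
          y ∈ Ioo (-(3 / 2) * x) (3 / 2 * x) := ⟨fun hp => hp.1, fun hy => ⟨hy, hx.2⟩⟩
      by_cases hy : y ∈ Ioo (-(3 / 2) * x) (3 / 2 * x)
      · rw [indicator_of_mem hy, indicator_of_mem (hiff.2 hy)]
      · rw [indicator_of_notMem hy, indicator_of_notMem (mt hiff.1 hy)]
    · rw [indicator_of_notMem hx]
      refine (lintegral_congr fun y => indicator_of_notMem (fun hp => hx ?_) _).trans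
        lintegral_zero
      exact ⟨fst_pos_of_mem_sector hp.1, hp.2⟩
  refine htri.of_sandwich ?_
  filter_upwards [eventually_pos_nhdsGT] with r hr
  constructor
  · refine lintegral_mono_set ?_
    rintro p ⟨hp, hpr⟩
    refine ⟨?_, hp⟩
    have h0 := fst_pos_of_mem_sector hp
    have hpr' : p.1 < r / 2 := hpr
    have h2 : p.2 ^ 2 ≤ (3 / 2 * p.1) ^ 2 :=
      sq_le_sq' (by linarith [hp.1]) hp.2.le
    have h1 : p.1 ^ 2 < (r / 2) ^ 2 := pow_lt_pow_left₀ hpr' h0.le two_ne_zero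
    show p.1 ^ 2 + p.2 ^ 2 < r ^ 2
    nlinarith
  · refine lintegral_mono_set ?_
    rintro p ⟨hpr, hp⟩
    exact ⟨hp, (disk2_subset_prod hr hpr).1.2⟩

theorem LocalForm.tame_sector_comp {n : ℕ} {f : Fin n → ℝ × ℝ → ℝ} {γ : Fin n → ℝ}
    {E : Set (ℝ × ℝ)} (h : LocalForm n f γ E) (Φ : (ℝ × ℝ) ≃L[ℝ] (ℝ × ℝ))
    (hΦ : MeasurePreserving Φ) (hdisk : ∀ p, (Φ p).1 ^ 2 + (Φ p).2 ^ 2 = p.1 ^ 2 + p.2 ^ 2) :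
    Tame fun r => ∫⁻ p in disk2 r ∩ Φ.symm ⁻¹' sector, ‖stdFun n f γ E p‖ₑ := by
  refine (h.comp Φ hΦ).tame_sector.congr (.of_eventuallyEq (Eventually.of_forall fun r => ?_))
  have hpre : Φ ⁻¹' (disk2 r ∩ Φ.symm ⁻¹' sector) = disk2 r ∩ sector := by
    ext p
    simp [disk2, hdisk]
  have := hΦ.setLIntegral_comp_preimage_emb Φ.toHomeomorph.measurableEmbedding
    (fun p => ‖stdFun n f γ E p‖ₑ) (disk2 r ∩ Φ.symm ⁻¹' sector)
  simp only [← this, hpre, stdFun_comp]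

/-- The mass of `g` in the disk of radius `r` is a tame function of `r`. -/
theorem LocalForm.tame_disk {n : ℕ} {f : Fin n → ℝ × ℝ → ℝ} {γ : Fin n → ℝ} {E : Set (ℝ × ℝ)}
    (h : LocalForm n f γ E) : Tame fun r => ∫⁻ p in disk2 r, ‖stdFun n f γ E p‖ₑ := by
  obtain ⟨N, hN⟩ : ∃ N : (ℝ × ℝ) ≃L[ℝ] (ℝ × ℝ), ∀ p, N p = (-p.1, p.2) :=
    ⟨(ContinuousLinearEquiv.neg ℝ).prodCongr (.refl ℝ ℝ), fun p => rfl⟩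
  obtain ⟨S, hS⟩ : ∃ S : (ℝ × ℝ) ≃L[ℝ] (ℝ × ℝ), ∀ p, S p = (p.2, p.1) :=
    ⟨.prodComm ℝ ℝ ℝ, fun p => rfl⟩
  have hNs : ∀ p, N.symm p = (-p.1, p.2) := fun p => by
    rw [ContinuousLinearEquiv.symm_apply_eq, hN]; simp
  have hSs : ∀ p, S.symm p = (p.2, p.1) := fun p => by
    rw [ContinuousLinearEquiv.symm_apply_eq, hS]
  have hNm : MeasurePreserving N := by
    rw [show (N : ℝ × ℝ → ℝ × ℝ) = Prod.map Neg.neg id from funext hN]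
    exact (Measure.measurePreserving_neg volume).prod (MeasurePreserving.id volume)
  have hSm : MeasurePreserving S := by
    rw [show (S : ℝ × ℝ → ℝ × ℝ) = Prod.swap from funext hS]
    exact Measure.measurePreserving_swap
  have h1 := h.tame_sector
  have h2 := h.tame_sector_comp N hNm (by simp [hN])
  have h3 := h.tame_sector_comp S hSm (by simp [hS, add_comm])
  have h4 := h.tame_sector_comp (N.trans S) (hSm.comp hNm) (by simp [hN, hS, add_comm])
  refine ((h1.add h2).add (h3.add h4)).congr ⟨4, ?_⟩
  refine Eventually.of_forall fun r => ⟨?_, ?_⟩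
  · have hcov : disk2 r ⊆ {0} ∪ ((disk2 r ∩ sector ∪ disk2 r ∩ N.symm ⁻¹' sector) ∪
        (disk2 r ∩ S.symm ⁻¹' sector ∪ disk2 r ∩ (N.trans S).symm ⁻¹' sector)) := by
      rintro ⟨x, y⟩ hp
      simp only [← inter_union_distrib_left, mem_union, mem_inter_iff, hp, true_and, mem_preimage,
        ContinuousLinearEquiv.symm_trans_apply, hNs, hSs, sector, mem_ofPred_eq, mem_singleton_iff,
        Prod.mk_eq_zero]
      by_contra hcon
      simp only [not_or, not_and, not_lt] at hcon
      obtain ⟨hne, ⟨c1, c2⟩, c3, c4⟩ := hcon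
      grind
    calc ∫⁻ p in disk2 r, ‖stdFun n f γ E p‖ₑ
        ≤ _ := lintegral_mono_set hcov
      _ ≤ _ := lintegral_union_le _ _ _
      _ ≤ 0 + ((∫⁻ p in disk2 r ∩ sector, ‖stdFun n f γ E p‖ₑ) +
            (∫⁻ p in disk2 r ∩ N.symm ⁻¹' sector, ‖stdFun n f γ E p‖ₑ) +
          ((∫⁻ p in disk2 r ∩ S.symm ⁻¹' sector, ‖stdFun n f γ E p‖ₑ) +
            ∫⁻ p in disk2 r ∩ (N.trans S).symm ⁻¹' sector, ‖stdFun n f γ E p‖ₑ)) := by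
          refine add_le_add (setLIntegral_measure_zero _ _ (measure_singleton 0)).le
            ((lintegral_union_le _ _ _).trans
              (add_le_add (lintegral_union_le _ _ _) (lintegral_union_le _ _ _)))
      _ ≤ _ := by
          rw [zero_add]
          refine le_mul_of_one_le_left' ?_
          norm_num
  · have hle : ∀ s : Set (ℝ × ℝ), ∫⁻ p in disk2 r ∩ s, ‖stdFun n f γ E p‖ₑ ≤
        ∫⁻ p in disk2 r, ‖stdFun n f γ E p‖ₑ := fun s => lintegral_mono_set inter_subset_left
    refine (add_le_add (add_le_add (hle _) (hle _)) (add_le_add (hle _) (hle _))).trans_eq ?_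
    push_cast
    ring

theorem frontier_iUnion_subset_of_finite {X ι : Type*} [TopologicalSpace X] [Finite ι]
    (s : ι → Set X) : frontier (⋃ i, s i) ⊆ ⋃ i, frontier (s i) := by
  rintro p ⟨hcl, hint⟩
  rw [closure_iUnion_of_finite] at hcl
  obtain ⟨i, hi⟩ := mem_iUnion.1 hcl
  exact mem_iUnion.2 ⟨i, hi, fun h => hint (interior_mono (subset_iUnion s i) h)⟩

theorem zero_mem_disk2 {r : ℝ} (hr : 0 < r) : (0 : ℝ × ℝ) ∈ disk2 r := by
  simpa [disk2] using pow_pos hr 2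

theorem eventually_notMem_circle2 {r₀ : ℝ} (hr₀ : 0 < r₀) :
    ∀ᶠ p in 𝓝 (0 : ℝ × ℝ), p ∉ circle2 r₀ := by
  have h : ∀ᶠ p in 𝓝 (0 : ℝ × ℝ), p.1 ^ 2 + p.2 ^ 2 < r₀ ^ 2 :=
    (Continuous.tendsto' (by fun_prop) (0 : ℝ × ℝ) 0 (by simp)).eventually_lt_const (pow_pos hr₀ 2)
  exact h.mono fun p hp hc => hp.ne hc

theorem IsPuiseuxBdryCurve.zero_mem {r₀ : ℝ} {C : Set (ℝ × ℝ)} (hC : IsPuiseuxBdryCurve r₀ C) :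
    (0 : ℝ × ℝ) ∈ C := by
  obtain ⟨N, h, σ, a, c, hN, -, ha, -, h0, hc, -, -, rfl⟩ := hC
  refine ⟨0, ⟨le_rfl, ha.le⟩, ?_⟩
  have hz : (0 : ℝ) ^ ((N : ℝ)⁻¹) = 0 := zero_rpow (by positivity)
  rcases hc with hc | hc <;> simp [hc, hz, h0]

theorem IsStdDomain.exists_arcs {E : Set (ℝ × ℝ)} (hE : IsStdDomain E) :
    ∃ 𝒞 : List (Set (ℝ × ℝ)), (∀ C ∈ 𝒞, IsAnalyticArc C) ∧
      ∀ᶠ p in 𝓝 (0 : ℝ × ℝ), p ∈ frontier E → ∃ C ∈ 𝒞, p ∈ C := by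
  obtain ⟨r₀, hr₀, rfl | ⟨m, Es, Cs, -, rfl, -, hC, hreg, -⟩⟩ := hE
  · refine ⟨[], by simp, ?_⟩
    filter_upwards [(isOpen_disk2 r₀).mem_nhds (zero_mem_disk2 hr₀)] with p hp hfr
    exact absurd ((isOpen_disk2 r₀).interior_eq.symm ▸ hp) hfr.2
  · refine ⟨List.ofFn fun q : Fin (m * 2) => Cs q.divNat q.modNat, ?_, ?_⟩
    · intro C hmem
      obtain ⟨q, rfl⟩ := (List.mem_ofFn' _ _).1 hmem
      exact (hC _ _).isAnalyticArc
    · filter_upwards [eventually_notMem_circle2 hr₀] with p hp hfr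
      obtain ⟨i, hi⟩ := mem_iUnion.1 (frontier_iUnion_subset_of_finite _ hfr)
      obtain ⟨-, -, -, A, hA, -, hfrA⟩ := hreg i
      have hmem : ∀ j, Cs i j ∈ List.ofFn fun q : Fin (m * 2) => Cs q.divNat q.modNat := by
        intro j
        refine (List.mem_ofFn' _ _).2 ⟨finProdFinEquiv (i, j), ?_⟩
        have := finProdFinEquiv.symm_apply_apply (i, j)
        rw [Prod.ext_iff] at this
        exact congrArg₂ Cs this.1 this.2
      rw [hfrA] at hi
      rcases hi with (h | h) | h
      · exact ⟨_, hmem 0, h⟩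
      · exact ⟨_, hmem 1, h⟩
      · exact absurd (hA h) hp

theorem IsStdDomain.isOpen {E : Set (ℝ × ℝ)} (hE : IsStdDomain E) : IsOpen E := by
  obtain ⟨r₀, -, rfl | ⟨m, Es, Cs, -, rfl, -, -, hreg, -⟩⟩ := hE
  · exact isOpen_disk2 r₀
  · exact isOpen_iUnion fun i => (hreg i).1

theorem IsStdDomain.zero_mem_closure {E : Set (ℝ × ℝ)} (hE : IsStdDomain E) :
    (0 : ℝ × ℝ) ∈ closure E := by
  obtain ⟨r₀, hr₀, rfl | ⟨m, Es, Cs, hm, rfl, -, hC, hreg, -⟩⟩ := hE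
  · exact subset_closure (zero_mem_disk2 hr₀)
  · obtain ⟨-, -, -, A, -, -, hfrA⟩ := hreg ⟨0, hm⟩
    have h0 : (0 : ℝ × ℝ) ∈ frontier (Es ⟨0, hm⟩) := by
      rw [hfrA]
      exact Or.inl (Or.inl (hC _ _).zero_mem)
    exact closure_mono (subset_iUnion Es _) (frontier_subset_closure h0)

theorem StandardForm.localForm {n : ℕ} {f : Fin n → ℝ × ℝ → ℝ} {γ : Fin n → ℝ}
    {E : Set (ℝ × ℝ)} (h : StandardForm n f γ E) : LocalForm n f γ E where
  analytic i := by
    obtain ⟨U, hU, hf⟩ := h.analytic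
    exact hf i 0 (mem_of_mem_nhds hU)
  nontriv := h.nontriv
  aemeas := by
    obtain ⟨U, hU, hg⟩ := h.integ
    exact ⟨U, hU, hg.aemeasurable⟩
  arcs := h.domain.exists_arcs

/-- Finitely many nonzero analytic functions on a connected open set `V` are simultaneously nonzero
on some nonempty open subset of any given nonempty open subset of `V`. -/
theorem exists_isOpen_forall_ne_zero {n : ℕ} {f : Fin n → ℝ × ℝ → ℝ} {V : Set (ℝ × ℝ)}
    (hV : IsOpen V) (hVc : IsPreconnected V) (h0 : (0 : ℝ × ℝ) ∈ V)
    (hf : ∀ i, AnalyticOnNhd ℝ (f i) V)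
    (hnz : ∀ i, ¬ ∀ᶠ p in 𝓝 (0 : ℝ × ℝ), f i p = 0) (s : Finset (Fin n)) {O : Set (ℝ × ℝ)}
    (hO : IsOpen O) (hne : O.Nonempty) (hOV : O ⊆ V) :
    ∃ O' ⊆ O, IsOpen O' ∧ O'.Nonempty ∧ ∀ i ∈ s, ∀ p ∈ O', f i p ≠ 0 := by
  classical
  induction s using Finset.induction_on with
  | empty => exact ⟨O, Subset.rfl, hO, hne, by simp⟩
  | insert i s _ ih =>
    obtain ⟨O', hsub, hopen, ⟨q, hq⟩, hs⟩ := ih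
    have hex : ∃ p ∈ O', f i p ≠ 0 := by
      by_contra! hcon
      have hev : f i =ᶠ[𝓝 q] 0 := by
        filter_upwards [hopen.mem_nhds hq] with p hp using hcon p hp
      have hz := (hf i).eqOn_zero_of_preconnected_of_eventuallyEq_zero hVc (hOV (hsub hq)) hev
      exact hnz i (by filter_upwards [hV.mem_nhds h0] with p hp using hz hp)
    refine ⟨O' ∩ f i ⁻¹' {0}ᶜ, inter_subset_left.trans hsub,
      ((hf i).continuousOn.mono (hsub.trans hOV)).isOpen_inter_preimage hopen
        isOpen_compl_singleton, hex, ?_⟩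
    intro j hj p hp
    rcases Finset.mem_insert.1 hj with rfl | hj
    · exact hp.2
    · exact hs j hj p hp.1

theorem StandardForm.lintegral_disk2_ne_zero {n : ℕ} {f : Fin n → ℝ × ℝ → ℝ} {γ : Fin n → ℝ}
    {E : Set (ℝ × ℝ)} (h : StandardForm n f γ E) {r : ℝ} (hr : 0 < r)
    (hm : AEMeasurable (stdFun n f γ E) (volume.restrict (disk2 r))) :
    ∫⁻ p in disk2 r, ‖stdFun n f γ E p‖ₑ ≠ 0 := by
  obtain ⟨U, hU, hf⟩ := h.analytic
  obtain ⟨δ, hδ, hsub⟩ := Metric.mem_nhds_iff.1 hU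
  have hnhds : disk2 r ∩ Metric.ball 0 δ ∈ 𝓝 (0 : ℝ × ℝ) :=
    inter_mem ((isOpen_disk2 r).mem_nhds (zero_mem_disk2 hr)) (Metric.ball_mem_nhds 0 hδ)
  have hne : (disk2 r ∩ Metric.ball 0 δ ∩ E).Nonempty :=
    mem_closure_iff_nhds.1 h.domain.zero_mem_closure _ hnhds
  obtain ⟨O, hOsub, hO, hOne, hnz⟩ := exists_isOpen_forall_ne_zero Metric.isOpen_ball
    (convex_ball (0 : ℝ × ℝ) δ).isPreconnected (Metric.mem_ball_self hδ)
    (fun i => (hf i).mono hsub) h.nontriv Finset.univ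
    (((isOpen_disk2 r).inter Metric.isOpen_ball).inter h.domain.isOpen) hne
    (fun p hp => hp.1.2)
  intro hzero
  have hOd : O ⊆ disk2 r := fun p hp => (hOsub hp).1.1
  have hz : ∫⁻ p in O, ‖stdFun n f γ E p‖ₑ = 0 :=
    le_zero_iff.1 ((lintegral_mono_set hOd).trans hzero.le)
  rw [lintegral_eq_zero_iff' (hm.enorm.mono_measure (Measure.restrict_mono hOd le_rfl))] at hz
  have hfalse : ∀ᵐ p ∂(volume : Measure (ℝ × ℝ)), p ∉ O := by
    filter_upwards [(ae_restrict_iff' hO.measurableSet).1 hz] with p hp hpO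
    have h1 : stdFun n f γ E p = 0 := by simpa using hp hpO
    rw [stdFun, indicator_of_mem (hOsub hpO).2] at h1
    refine (Finset.prod_pos fun i hi => rpow_pos_of_pos ?_ (γ i)).ne' h1
    exact abs_pos.2 (hnz i hi p hpO)
  refine (hO.measure_pos volume hOne).ne' ?_
  simpa [ae_iff] using hfalse

theorem tendsto_volume_disk2 : Tendsto (fun r => volume (disk2 r)) (𝓝[>] 0) (𝓝 0) := by
  have hlim : Tendsto (fun r : ℝ => ENNReal.ofReal (2 * r) * ENNReal.ofReal (2 * r)) (𝓝[>] 0)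
      (𝓝 0) := by
    have h1 : Tendsto (fun r : ℝ => ENNReal.ofReal (2 * r * (2 * r))) (𝓝[>] 0) (𝓝 0) := by
      refine Tendsto.mono_left ?_ nhdsWithin_le_nhds
      exact (ENNReal.continuous_ofReal.comp (by fun_prop)).tendsto' _ _ (by simp)
    refine h1.congr' ?_
    filter_upwards [eventually_pos_nhdsGT] with r hr
    rw [ENNReal.ofReal_mul (by linarith)]
  refine tendsto_of_tendsto_of_tendsto_of_le_of_le' tendsto_const_nhds hlim
    (Eventually.of_forall fun _ => zero_le) ?_
  filter_upwards [eventually_pos_nhdsGT] with r hr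
  refine (measure_mono (disk2_subset_prod hr)).trans_eq ?_
  rw [Measure.volume_eq_prod, Measure.prod_prod, Real.volume_Ioo]
  ring_nf

theorem StandardForm.exists_ecmp {n : ℕ} {f : Fin n → ℝ × ℝ → ℝ} {γ : Fin n → ℝ}
    {E : Set (ℝ × ℝ)} (h : StandardForm n f γ E) :
    ∃ (ε : ℝ) (d : ℕ), 0 < ε ∧ d ≤ 1 ∧
      ECmp (fun r => ∫⁻ p in disk2 r, ‖stdFun n f γ E p‖ₑ) fun r => ‖powLog ε d r‖ₑ := by
  obtain ⟨U, hU, hint⟩ := h.integ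
  have hfin : ∫⁻ p in U, ‖stdFun n f γ E p‖ₑ ≠ ⊤ := hint.2.ne
  rcases h.localForm.tame_disk with hz | htop | ⟨s, d, hd, C, hC⟩
  · obtain ⟨r, hr, h0, hsub⟩ :=
      (hz.and (eventually_pos_nhdsGT.and (eventually_disk2_subset hU))).exists
    exact absurd hr (h.lintegral_disk2_ne_zero h0 (hint.mono_set hsub).aemeasurable)
  · obtain ⟨r, hr, hsub⟩ := (htop.and (eventually_disk2_subset hU)).exists
    exact absurd (top_le_iff.1 (hr ▸ lintegral_mono_set hsub)) hfin
  · refine ⟨s, d, ?_, hd, C, hC⟩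
    by_contra! hs
    have hlim : Tendsto (fun r => ∫⁻ p in disk2 r, ‖stdFun n f γ E p‖ₑ) (𝓝[>] 0) (𝓝 0) := by
      have h1 : Tendsto (fun r => ∫⁻ p in disk2 r, ‖stdFun n f γ E p‖ₑ ∂(volume.restrict U))
          (𝓝[>] 0) (𝓝 0) := by
        refine tendsto_setLIntegral_zero hfin ?_
        exact tendsto_of_tendsto_of_tendsto_of_le_of_le tendsto_const_nhds tendsto_volume_disk2
          (fun _ => zero_le) fun r => Measure.restrict_apply_le U _
      refine h1.congr' ?_
      filter_upwards [eventually_disk2_subset hU] with r hr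
      rw [Measure.restrict_restrict (isOpen_disk2 r).measurableSet, inter_eq_left.2 hr]
    have hlim' : Tendsto (fun r => (C : ENNReal) * ∫⁻ p in disk2 r, ‖stdFun n f γ E p‖ₑ)
        (𝓝[>] 0) (𝓝 0) := by
      simpa using ENNReal.Tendsto.const_mul hlim (Or.inr ENNReal.coe_ne_top)
    obtain ⟨r, h1, h2, h3, h4, h5⟩ := ((hlim'.eventually_lt_const one_pos).and
      (hC.and (eventually_one_le_abs_log.and
        (eventually_pos_nhdsGT.and (eventually_lt_nhdsGT one_pos))))).exists
    refine absurd (h2.2.trans_lt h1) (not_lt.2 ?_)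
    have h6 : 1 ≤ powLog s d r :=
      one_le_mul_of_one_le_of_one_le (one_le_rpow_of_pos_of_le_one_of_nonpos h4 h5.le hs)
        (one_le_pow₀ h3)
    simp only [Real.enorm_of_nonneg (zero_le_one.trans h6)]
    exact ENNReal.one_le_ofReal.2 h6

theorem stdFun_nonneg {n : ℕ} (f : Fin n → ℝ × ℝ → ℝ) (γ : Fin n → ℝ) (E : Set (ℝ × ℝ))
    (p : ℝ × ℝ) : 0 ≤ stdFun n f γ E p :=
  indicator_nonneg (fun _ _ => Finset.prod_nonneg fun _ _ => rpow_nonneg (abs_nonneg _) _) p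

theorem ball_integral_bound {n : ℕ} (f : Fin n → ℝ × ℝ → ℝ) (γ : Fin n → ℝ)
    (E : Set (ℝ × ℝ)) (hsf : StandardForm n f γ E) :
    ∃ (c₁ c₂ c₃ ε : ℝ) (d : ℕ), 0 < c₁ ∧ 0 < c₂ ∧ 0 < c₃ ∧ 0 < ε ∧ (d = 0 ∨ d = 1) ∧
      ∀ r : ℝ, 0 < r → r < c₃ →
        c₁ * r ^ ε * |Real.log r| ^ d ≤ (∫ p in disk2 r, stdFun n f γ E p) ∧
        (∫ p in disk2 r, stdFun n f γ E p) ≤ c₂ * r ^ ε * |Real.log r| ^ d := by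
  obtain ⟨ε, d, hε, hd, C, hC⟩ := hsf.exists_ecmp
  obtain ⟨U, hU, hint⟩ := hsf.integ
  obtain ⟨c₃, hc₃, hsub⟩ := mem_nhdsGT_iff_exists_Ioo_subset.1
    (hC.and (eventually_disk2_subset hU))
  have hC1 : (0 : ℝ) < C + 1 := by positivity
  refine ⟨(C + 1 : ℝ)⁻¹, C + 1, c₃, ε, d, inv_pos.2 hC1, hC1, hc₃, hε, by omega,
    fun r hr hrc => ?_⟩
  obtain ⟨⟨h1, h2⟩, h3⟩ := hsub ⟨hr, hrc⟩
  have hg : IntegrableOn (stdFun n f γ E) (disk2 r) := hint.mono_set h3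
  have hI0 : 0 ≤ ∫ p in disk2 r, stdFun n f γ E p :=
    integral_nonneg fun p => stdFun_nonneg f γ E p
  have hT : ∫⁻ p in disk2 r, ‖stdFun n f γ E p‖ₑ =
      ENNReal.ofReal (∫ p in disk2 r, stdFun n f γ E p) := by
    rw [ofReal_integral_eq_lintegral_ofReal hg
      (Eventually.of_forall fun p => stdFun_nonneg f γ E p)]
    exact lintegral_congr fun p => Real.enorm_of_nonneg (stdFun_nonneg f γ E p)
  have hP0 : 0 ≤ r ^ ε * |Real.log r| ^ d := by positivity
  have hP : ‖powLog ε d r‖ₑ = ENNReal.ofReal (r ^ ε * |Real.log r| ^ d) :=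
    Real.enorm_of_nonneg hP0
  simp only [hT, hP] at h1 h2
  rw [← ENNReal.ofReal_coe_nnreal, ← ENNReal.ofReal_mul C.coe_nonneg,
    ENNReal.ofReal_le_ofReal_iff (mul_nonneg C.coe_nonneg hP0)] at h1
  rw [← ENNReal.ofReal_coe_nnreal, ← ENNReal.ofReal_mul C.coe_nonneg,
    ENNReal.ofReal_le_ofReal_iff (mul_nonneg C.coe_nonneg hI0)] at h2
  rw [mul_assoc, mul_assoc]
  constructor
  · rw [inv_mul_le_iff₀ hC1]
    linarith
  · linarith
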